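/- Let k be a field of characteristic not equal to 2, let n > 1 be an integer, and let f be a non-degenerate quadratic form in k[x₁,…,xₙ]. Set R = k[x₁,…,xₙ]/(f). If C₀(f), the even part of the Clifford algebra of f, is a simple algebra, then the Grothendieck group G(R) of finitely generated R-modules is isomorphic to ℤ ⊕ ℤ/2ℤ. (Swan's theorem; Corollary 2.1.) -/

import Mathlib

/-!
Swan's theorem (Corollary 2.1): if `k` is a field of characteristic `≠ 2`, `n > 1`, `f` a
non-degenerate quadratic form in `k[x₁,…,xₙ]`, and the even Clifford algebra `C₀(f)` is simple,
then `G(k[x₁,…,xₙ]/(f)) ≅ ℤ ⊕ ℤ/2ℤ`.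
-/

universe u

/-- A bundled finitely generated module over `R`. -/
structure FGModuleRep (R : Type u) [CommRing R] : Type (u + 1) where
  carrier : Type u
  [isAddCommGroup : AddCommGroup carrier]
  [isModule : Module R carrier]
  [isFinite : Module.Finite R carrier]

attribute [instance] FGModuleRep.isAddCommGroup FGModuleRep.isModule FGModuleRep.isFinite

variable (R : Type u) [CommRing R]

/-- The subgroup of relations coming from short exact sequences of f.g. modules. -/
def sesRelations : AddSubgroup (FreeAbelianGroup (FGModuleRep R)) :=
  AddSubgroup.closure
    { z | ∃ (M₁ M₂ M₃ : FGModuleRep R) (f : M₁.carrier →ₗ[R] M₂.carrier)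
        (g : M₂.carrier →ₗ[R] M₃.carrier),
        Function.Injective f ∧ Function.Surjective g ∧
        LinearMap.range f = LinearMap.ker g ∧
        z = FreeAbelianGroup.of M₂ - FreeAbelianGroup.of M₁ - FreeAbelianGroup.of M₃ }

/-- The Grothendieck group of finitely generated `R`-modules. -/
def GGroup : Type (u + 1) :=
  FreeAbelianGroup (FGModuleRep R) ⧸ sesRelations R

noncomputable instance : AddCommGroup (GGroup R) :=
  QuotientAddGroup.Quotient.addCommGroup _

open MvPolynomial

/-!
After diagonalising, `f = w₀ (x₀² - g)` with `g` a diagonal form in the remaining variables, so an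
`R`-module is a module `V` over the polynomial ring `S` in those variables together with an
endomorphism `η` such that `η² = g`. Homogenising with one extra variable and resolving by
Hilbert's syzygy theorem, every class comes from free modules with a weighted basis on which `η`
raises degree by at most one. A nonzero constant entry of `η` from one weight to the next splits
off a copy of the class `r` of `R`; without such an entry the lowest weight splits off. What
remains are operators `η = A₀ + ∑ xᵢ Aᵢ` with constant coefficients, where `A₀² = 0`; the kernel
of `A₀` and its quotient give modules `S ⊗ W` on which `η` is the linear operator attached to a
representation `W` of the Clifford algebra of `g`. That algebra is the even Clifford algebra of
`f`; as it is simple, all these classes are multiples of the class `t` of one representation `T`,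
and `2 t = (dim T) r` with `dim T` even, so the group is generated by `r` and the element
`t - (dim T / 2) r` of order dividing two. The rank over `S` shows that `r` has infinite order.
The element of order two survives because the dimension of the homology of a Koszul operator built
from `η`, divided by `dim T`, is additive modulo two: it vanishes on `r` and is odd on `t`.
-/

namespace GGroup

variable {R}

/-- The class `[M]` of a finitely generated module in the Grothendieck group. -/
noncomputable def of (M : FGModuleRep R) : GGroup R :=
  QuotientAddGroup.mk (s := sesRelations R) (FreeAbelianGroup.of M)

theorem of_exact {M₁ M₂ M₃ : FGModuleRep R} (f : M₁.carrier →ₗ[R] M₂.carrier)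
    (g : M₂.carrier →ₗ[R] M₃.carrier) (hf : Function.Injective f) (hg : Function.Surjective g)
    (h : Function.Exact f g) : of M₂ = of M₁ + of M₃ := by
  have hmem : FreeAbelianGroup.of M₂ - FreeAbelianGroup.of M₁ - FreeAbelianGroup.of M₃ ∈
      sesRelations R :=
    AddSubgroup.subset_closure ⟨M₁, M₂, M₃, f, g, hf, hg, (LinearMap.exact_iff.1 h).symm, rfl⟩
  have hzero : of M₂ - of M₁ - of M₃ = 0 := (QuotientAddGroup.eq_zero_iff _).2 hmem
  rwa [sub_sub, sub_eq_zero] at hzero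

section lift

variable {A : Type*} [AddCommGroup A]

/-- The universal property of the Grothendieck group: a function on finitely generated modules
which is additive on short exact sequences extends to a homomorphism. -/
noncomputable def lift (φ : FGModuleRep R → A)
    (h : ∀ (M₁ M₂ M₃ : FGModuleRep R) (f : M₁.carrier →ₗ[R] M₂.carrier)
      (g : M₂.carrier →ₗ[R] M₃.carrier), Function.Injective f → Function.Surjective g →
      Function.Exact f g → φ M₂ = φ M₁ + φ M₃) : GGroup R →+ A :=
  QuotientAddGroup.lift (sesRelations R) (FreeAbelianGroup.lift φ) (by
    unfold sesRelations
    rw [AddSubgroup.closure_le]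
    rintro z ⟨M₁, M₂, M₃, f, g, hf, hg, hfg, rfl⟩
    simp [h M₁ M₂ M₃ f g hf hg (LinearMap.exact_iff.2 hfg.symm)])

@[simp]
theorem lift_of (φ : FGModuleRep R → A) (h) (M : FGModuleRep R) : lift φ h (of M) = φ M :=
  FreeAbelianGroup.lift_apply_of φ M

end lift

theorem mem_of_forall_of_mem (H : AddSubgroup (GGroup R)) (h : ∀ M, of M ∈ H) (x : GGroup R) :
    x ∈ H := by
  obtain ⟨y, rfl⟩ := QuotientAddGroup.mk_surjective x
  induction y using FreeAbelianGroup.induction_on with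
  | zero => exact H.zero_mem
  | of M => exact h M
  | neg M hM => exact H.neg_mem hM
  | add x y hx hy => exact H.add_mem hx hy

theorem of_eq_zero (M : FGModuleRep R) [Subsingleton M.carrier] : of M = 0 := by
  have h : of M = of M + of M :=
    of_exact 0 0 (Function.injective_of_subsingleton _) (Function.surjective_to_subsingleton _)
      fun x => ⟨fun _ => ⟨x, Subsingleton.elim _ _⟩, fun _ => rfl⟩
  simpa using h

theorem of_eq_of_equiv {M₁ M₂ : FGModuleRep R} (e : M₁.carrier ≃ₗ[R] M₂.carrier) :
    of M₁ = of M₂ := by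
  have h : of M₂ = of M₁ + of ⟨PUnit⟩ :=
    of_exact e.toLinearMap 0 e.injective (Function.surjective_to_subsingleton _)
      fun x => ⟨fun _ => e.surjective x, fun _ => rfl⟩
  rw [h, of_eq_zero ⟨PUnit⟩, add_zero]

end GGroup

section ringEquiv

variable {R₁ R₂ : Type u} [CommRing R₁] [CommRing R₂]

/-- Restriction of scalars of a finitely generated module along a ring isomorphism. -/
def FGModuleRep.restrictScalars (e : R₁ ≃+* R₂) (M : FGModuleRep R₂) : FGModuleRep R₁ :=
  letI : Module R₁ M.carrier := Module.compHom M.carrier (e : R₁ →+* R₂)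
  { carrier := M.carrier
    isFinite := by
      let f : M.carrier →ₛₗ[(e.symm : R₂ →+* R₁)] M.carrier :=
        { toFun := id
          map_add' := fun _ _ => rfl
          map_smul' := fun r x => by
            change r • x = e (e.symm r) • x
            rw [e.apply_symm_apply] }
      exact Module.Finite.of_surjective f Function.surjective_id }

namespace GGroup

/-- The homomorphism induced on Grothendieck groups by restriction of scalars along a ring
isomorphism. -/
noncomputable def restrictScalars (e : R₁ ≃+* R₂) : GGroup R₂ →+ GGroup R₁ :=
  lift (fun M => of (M.restrictScalars e)) fun M₁ M₂ M₃ f g hf hg h =>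
    of_exact (M₁ := M₁.restrictScalars e) (M₂ := M₂.restrictScalars e)
      (M₃ := M₃.restrictScalars e)
      { toFun := f, map_add' := f.map_add, map_smul' := fun r x => f.map_smul (e r) x }
      { toFun := g, map_add' := g.map_add, map_smul' := fun r x => g.map_smul (e r) x } hf hg h

theorem restrictScalars_symm_comp (e : R₁ ≃+* R₂) (x : GGroup R₂) :
    restrictScalars e.symm (restrictScalars e x) = x := by
  refine mem_of_forall_of_mem
    (((restrictScalars e.symm).comp (restrictScalars e)).eqLocus (AddMonoidHom.id _))
    (fun M => ?_) x
  change restrictScalars e.symm (restrictScalars e (of M)) = of M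
  simp only [restrictScalars, lift_of]
  refine of_eq_of_equiv
    { toFun := id
      invFun := id
      map_add' := fun _ _ => rfl
      map_smul' := fun r (x : M.carrier) => ?_
      left_inv := fun _ => rfl
      right_inv := fun _ => rfl }
  change e (e.symm r) • x = r • x
  rw [e.apply_symm_apply]

/-- Isomorphic rings have isomorphic Grothendieck groups. -/
noncomputable def congr (e : R₁ ≃+* R₂) : GGroup R₁ ≃+ GGroup R₂ :=
  { restrictScalars e.symm with
    invFun := restrictScalars e
    left_inv := restrictScalars_symm_comp e.symm
    right_inv := restrictScalars_symm_comp e }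

end GGroup

end ringEquiv

namespace SwanQuadric

section SqrtModule

variable {S : Type u} [CommRing S] {g : S}

/-- The ring `S[y]/(y² - g)`. -/
abbrev AdjoinSqrt (g : S) : Type u := QuadraticAlgebra S g 0

/-- `η` is a square root of multiplication by `g`; an `S`-module with such an endomorphism is the
same thing as a module over `AdjoinSqrt g`. -/
def IsSqrt (g : S) {V : Type*} [AddCommGroup V] [Module S V] (η : V →ₗ[S] V) : Prop :=
  ∀ v, η (η v) = g • v

/-- A type synonym of `V` on which `AdjoinSqrt g` acts, the square root of `g` acting by `η`. -/
@[nolint unusedArguments]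
def SqrtModule {V : Type u} [AddCommGroup V] [Module S V] (η : V →ₗ[S] V) (_ : IsSqrt g η) :
    Type u := V

section

variable {V : Type u} [AddCommGroup V] [Module S V] (η : V →ₗ[S] V) (h : IsSqrt g η)

instance : AddCommGroup (SqrtModule η h) := inferInstanceAs (AddCommGroup V)
instance : Module S (SqrtModule η h) := inferInstanceAs (Module S V)

noncomputable instance : Module (AdjoinSqrt g) (SqrtModule η h) :=
  Module.compHom V (QuadraticAlgebra.lift (R := S) (a := g) (b := 0) (A := Module.End S V)
    ⟨η, LinearMap.ext fun v => by simpa using h v⟩ : AdjoinSqrt g →+* Module.End S V)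

/-- The identity map from a module to its `SqrtModule` synonym. -/
def SqrtModule.mk : V ≃ₗ[S] SqrtModule η h := LinearEquiv.refl S V

theorem SqrtModule.smul_mk (r : AdjoinSqrt g) (v : V) :
    r • mk η h v = mk η h (r.re • v + r.im • η v) := by
  change QuadraticAlgebra.lift (R := S) (a := g) (b := 0) (A := Module.End S V) ⟨η, _⟩ r v = _
  rw [QuadraticAlgebra.lift_apply_apply]
  rfl

instance : IsScalarTower S (AdjoinSqrt g) (SqrtModule η h) where
  smul_assoc s r v := by
    obtain ⟨v, rfl⟩ := (SqrtModule.mk η h).surjective v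
    rw [SqrtModule.smul_mk, SqrtModule.smul_mk, ← LinearEquiv.map_smul, smul_add, smul_smul,
      smul_smul]
    rfl

instance [Module.Finite S V] : Module.Finite (AdjoinSqrt g) (SqrtModule η h) :=
  haveI : Module.Finite S (SqrtModule η h) := inferInstanceAs (Module.Finite S V)
  Module.Finite.of_restrictScalars_finite S _ _

/-- The class in the Grothendieck group of the `AdjoinSqrt g`-module given by the operator `η`. -/
noncomputable def opClass [Module.Finite S V] : GGroup (AdjoinSqrt g) := GGroup.of ⟨SqrtModule η h⟩

end

variable {V₁ V₂ V₃ : Type u} [AddCommGroup V₁] [Module S V₁] [AddCommGroup V₂] [Module S V₂]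
  [AddCommGroup V₃] [Module S V₃]

/-- An `S`-linear map intertwining two operators, as an `AdjoinSqrt g`-linear map. -/
noncomputable def SqrtModule.map {η₁ : V₁ →ₗ[S] V₁} {h₁ : IsSqrt g η₁} {η₂ : V₂ →ₗ[S] V₂}
    {h₂ : IsSqrt g η₂} (f : V₁ →ₗ[S] V₂) (hf : ∀ v, f (η₁ v) = η₂ (f v)) :
    SqrtModule η₁ h₁ →ₗ[AdjoinSqrt g] SqrtModule η₂ h₂ where
  toFun := f
  map_add' := f.map_add
  map_smul' r v := by
    obtain ⟨v, rfl⟩ := (mk η₁ h₁).surjective v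
    rw [smul_mk]
    change mk η₂ h₂ (f (r.re • v + r.im • η₁ v)) = r • mk η₂ h₂ (f v)
    rw [smul_mk, map_add, map_smul, map_smul, hf]

section

variable [Module.Finite S V₁] [Module.Finite S V₂] [Module.Finite S V₃]

theorem opClass_exact {η₁ : V₁ →ₗ[S] V₁} (h₁ : IsSqrt g η₁) {η₂ : V₂ →ₗ[S] V₂} (h₂ : IsSqrt g η₂)
    {η₃ : V₃ →ₗ[S] V₃} (h₃ : IsSqrt g η₃) (a : V₁ →ₗ[S] V₂) (b : V₂ →ₗ[S] V₃)
    (ha : ∀ v, a (η₁ v) = η₂ (a v)) (hb : ∀ v, b (η₂ v) = η₃ (b v))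
    (hinj : Function.Injective a) (hsurj : Function.Surjective b) (hex : Function.Exact a b) :
    opClass η₂ h₂ = opClass η₁ h₁ + opClass η₃ h₃ :=
  GGroup.of_exact (M₁ := ⟨SqrtModule η₁ h₁⟩) (M₂ := ⟨SqrtModule η₂ h₂⟩) (M₃ := ⟨SqrtModule η₃ h₃⟩)
    (SqrtModule.map (h₁ := h₁) (h₂ := h₂) a ha) (SqrtModule.map (h₁ := h₂) (h₂ := h₃) b hb)
    hinj hsurj hex

theorem opClass_congr {η₁ : V₁ →ₗ[S] V₁} (h₁ : IsSqrt g η₁) {η₂ : V₂ →ₗ[S] V₂} (h₂ : IsSqrt g η₂)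
    (e : V₁ ≃ₗ[S] V₂) (he : ∀ v, e (η₁ v) = η₂ (e v)) : opClass η₁ h₁ = opClass η₂ h₂ :=
  GGroup.of_eq_of_equiv (M₁ := ⟨SqrtModule η₁ h₁⟩) (M₂ := ⟨SqrtModule η₂ h₂⟩)
    (LinearEquiv.ofBijective (SqrtModule.map (h₁ := h₁) (h₂ := h₂) e.toLinearMap he) e.bijective)

theorem opClass_of_subsingleton [Subsingleton V₁] {η₁ : V₁ →ₗ[S] V₁} (h₁ : IsSqrt g η₁) :
    opClass η₁ h₁ = 0 :=
  haveI : Subsingleton (SqrtModule η₁ h₁) := inferInstanceAs (Subsingleton V₁)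
  GGroup.of_eq_zero ⟨SqrtModule η₁ h₁⟩

end

section sqrtAction

variable (g) (M : Type u) [AddCommGroup M] [Module (AdjoinSqrt g) M] [Module S M]
  [IsScalarTower S (AdjoinSqrt g) M]

/-- The action of the adjoined square root of `g` on an `AdjoinSqrt g`-module. -/
noncomputable def sqrtAction : M →ₗ[S] M :=
  (LinearMap.lsmul (AdjoinSqrt g) M QuadraticAlgebra.omega).restrictScalars S

theorem sqrtAction_isSqrt : IsSqrt g (sqrtAction g M) := by
  intro v
  change (QuadraticAlgebra.omega : AdjoinSqrt g) • (QuadraticAlgebra.omega : AdjoinSqrt g) • v = _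
  rw [smul_smul, QuadraticAlgebra.omega_mul_omega_eq_add]
  simp

variable {M} in
theorem smul_eq_add_sqrtAction (r : AdjoinSqrt g) (v : M) :
    r • v = r.re • v + r.im • sqrtAction g M v := by
  change r • v = r.re • v + r.im • ((QuadraticAlgebra.omega : AdjoinSqrt g) • v)
  rw [← smul_assoc, ← algebraMap_smul (AdjoinSqrt g) r.re v, ← add_smul]
  congr 1
  ext <;> simp [QuadraticAlgebra.algebraMap_eq]

end sqrtAction

section Underlying

variable (k : Type*)

/-- The carrier of a finitely generated `AdjoinSqrt g`-module, viewed as a module over `S` and over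
a ring `k` below it. -/
@[nolint unusedArguments]
def Underlying (_ : Type*) (M : FGModuleRep (AdjoinSqrt g)) : Type u := M.carrier

variable (M : FGModuleRep (AdjoinSqrt g))

instance : AddCommGroup (Underlying k M) := inferInstanceAs (AddCommGroup M.carrier)
instance : Module (AdjoinSqrt g) (Underlying k M) :=
  inferInstanceAs (Module (AdjoinSqrt g) M.carrier)
instance : Module.Finite (AdjoinSqrt g) (Underlying k M) :=
  inferInstanceAs (Module.Finite (AdjoinSqrt g) M.carrier)
noncomputable instance : Module S (Underlying k M) :=
  Module.compHom (Underlying k M) (algebraMap S (AdjoinSqrt g))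
instance : IsScalarTower S (AdjoinSqrt g) (Underlying k M) :=
  IsScalarTower.of_algebraMap_smul fun _ _ => rfl
instance : Module.Finite S (Underlying k M) :=
  Module.Finite.trans (AdjoinSqrt g) (Underlying k M)

theorem of_eq_opClass :
    GGroup.of M = opClass (sqrtAction g (Underlying k M)) (sqrtAction_isSqrt g _) := by
  refine GGroup.of_eq_of_equiv (M₂ := ⟨SqrtModule (sqrtAction g (Underlying k M)) _⟩)
    { SqrtModule.mk (sqrtAction g (Underlying k M)) (sqrtAction_isSqrt g _) with
      map_smul' := fun r v => ?_ }
  exact (congrArg _ (smul_eq_add_sqrtAction g (M := Underlying k M) r v)).trans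
    (SqrtModule.smul_mk _ (sqrtAction_isSqrt g (Underlying k M)) r v).symm

variable [CommRing k] [Algebra k S]

noncomputable instance : Module k (Underlying k M) :=
  Module.compHom (Underlying k M) (algebraMap k S)
instance : IsScalarTower k S (Underlying k M) :=
  IsScalarTower.of_algebraMap_smul fun _ _ => rfl

variable {A : Type*} [AddCommGroup A]
  (φ : ∀ (V : Type u) [AddCommGroup V] [Module k V] [Module S V] [IsScalarTower k S V]
    [Module.Finite S V] (η : V →ₗ[S] V), IsSqrt g η → A)
  (hφ : ∀ (V₁ V₂ V₃ : Type u) [AddCommGroup V₁] [Module k V₁] [Module S V₁]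
    [IsScalarTower k S V₁] [Module.Finite S V₁] [AddCommGroup V₂] [Module k V₂] [Module S V₂]
    [IsScalarTower k S V₂] [Module.Finite S V₂] [AddCommGroup V₃] [Module k V₃] [Module S V₃]
    [IsScalarTower k S V₃] [Module.Finite S V₃] (η₁ : V₁ →ₗ[S] V₁) (h₁ : IsSqrt g η₁)
    (η₂ : V₂ →ₗ[S] V₂) (h₂ : IsSqrt g η₂) (η₃ : V₃ →ₗ[S] V₃) (h₃ : IsSqrt g η₃)
    (a : V₁ →ₗ[S] V₂) (b : V₂ →ₗ[S] V₃), (∀ v, a (η₁ v) = η₂ (a v)) →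
    (∀ v, b (η₂ v) = η₃ (b v)) → Function.Injective a → Function.Surjective b →
    Function.Exact a b → φ V₂ η₂ h₂ = φ V₁ η₁ h₁ + φ V₃ η₃ h₃)

include hφ in
theorem additive_eq_of_equiv {V W : Type u} [AddCommGroup V] [Module k V] [Module S V]
    [IsScalarTower k S V] [Module.Finite S V] [AddCommGroup W] [Module k W] [Module S W]
    [IsScalarTower k S W] [Module.Finite S W] {η : V →ₗ[S] V} (hη : IsSqrt g η)
    {θ : W →ₗ[S] W} (hθ : IsSqrt g θ) (e : V ≃ₗ[S] W) (he : ∀ v, e (η v) = θ (e v)) :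
    φ V η hη = φ W θ hθ := by
  have h₀ : IsSqrt g (0 : PUnit.{u + 1} →ₗ[S] PUnit.{u + 1}) := fun _ => rfl
  have hzero : φ PUnit 0 h₀ = φ PUnit 0 h₀ + φ PUnit 0 h₀ :=
    hφ _ _ _ 0 h₀ 0 h₀ 0 h₀ 0 0 (fun _ => rfl) (fun _ => rfl) (fun _ _ _ => rfl)
      (fun _ => ⟨0, rfl⟩) fun _ => ⟨fun _ => ⟨0, rfl⟩, fun _ => rfl⟩
  have hW := hφ V W PUnit η hη θ hθ 0 h₀ e.toLinearMap 0 he (fun _ => rfl) e.injective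
    (fun _ => ⟨0, rfl⟩) fun w => ⟨fun _ => e.surjective w, fun _ => rfl⟩
  rw [hW, left_eq_add.1 hzero, add_zero]

include hφ in
theorem exists_hom_of_additive :
    ∃ Φ : GGroup (AdjoinSqrt g) →+ A, ∀ (V : Type u) [AddCommGroup V] [Module k V] [Module S V]
      [IsScalarTower k S V] [Module.Finite S V] (η : V →ₗ[S] V) (h : IsSqrt g η),
      Φ (opClass η h) = φ V η h := by
  refine ⟨GGroup.lift
    (fun M => φ (Underlying k M) (sqrtAction g _) (sqrtAction_isSqrt g _)) ?_, ?_⟩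
  · intro M₁ M₂ M₃ a b ha hb hab
    let a' : Underlying k M₁ →ₗ[AdjoinSqrt g] Underlying k M₂ := a
    let b' : Underlying k M₂ →ₗ[AdjoinSqrt g] Underlying k M₃ := b
    exact hφ _ _ _ _ _ _ _ _ _ (a'.restrictScalars S) (b'.restrictScalars S)
      (fun v => a'.map_smul _ v) (fun v => b'.map_smul _ v) ha hb hab
  · intro V _ _ _ _ _ η h
    rw [opClass, GGroup.lift_of]
    let e : V ≃ₗ[S] Underlying (g := g) k ⟨SqrtModule η h⟩ :=
      { toFun := SqrtModule.mk η h
        invFun := (SqrtModule.mk η h).symm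
        map_add' := fun _ _ => rfl
        left_inv := fun _ => rfl
        right_inv := fun _ => rfl
        map_smul' := fun s v => by
          refine Eq.symm ((SqrtModule.smul_mk η h (algebraMap S (AdjoinSqrt g) s) v).trans ?_)
          change SqrtModule.mk η h _ = SqrtModule.mk η h (s • v)
          simp [QuadraticAlgebra.algebraMap_eq] }
    refine (additive_eq_of_equiv k φ hφ h (sqrtAction_isSqrt g _) e fun v => ?_).symm
    refine Eq.symm ((SqrtModule.smul_mk η h QuadraticAlgebra.omega v).trans ?_)
    change SqrtModule.mk η h _ = SqrtModule.mk η h (η v)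
    simp

end Underlying

end SqrtModule

/-! ### Regular sequences on the kernel of a surjection -/

section Regular

variable {P : Type*} [CommRing P] {n : ℕ} (x : Fin n → P)

/-- The ideal `(x₀, …, x_{i-1})`. -/
def partialIdeal (i : ℕ) : Ideal P := Ideal.span (x '' {l | (l : ℕ) < i})

/-- `x₀, …, x_{j-1}` is a weakly regular sequence on `N`. -/
def IsRegularUpTo (j : ℕ) (N : Type*) [AddCommGroup N] [Module P N] : Prop :=
  ∀ i : Fin n, (i : ℕ) < j → ∀ z : N, x i • z ∈ partialIdeal x i • (⊤ : Submodule P N) →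
    z ∈ partialIdeal x i • (⊤ : Submodule P N)

theorem partialIdeal_zero : partialIdeal x 0 = ⊥ := by
  simp [partialIdeal]

theorem partialIdeal_succ (i : Fin n) :
    partialIdeal x (i + 1) = partialIdeal x i ⊔ Ideal.span {x i} := by
  have hset : {l : Fin n | (l : ℕ) < i + 1} = {l : Fin n | (l : ℕ) < i} ∪ {i} := by
    ext l
    simp only [Set.mem_ofPred_eq, Set.mem_union, Set.mem_singleton_iff, Fin.ext_iff]
    lia
  rw [partialIdeal, partialIdeal, ← Ideal.span_union, hset, Set.image_union, Set.image_singleton]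

variable {x} {F N : Type*} [AddCommGroup F] [Module P F] [AddCommGroup N] [Module P N]

theorem exists_eq_add_smul_of_mem_partialIdeal_succ (i : Fin n) {v : F}
    (hv : v ∈ partialIdeal x (i + 1) • (⊤ : Submodule P F)) :
    ∃ u ∈ partialIdeal x i • (⊤ : Submodule P F), ∃ f : F, v = u + x i • f := by
  rw [partialIdeal_succ, Submodule.sup_smul, Submodule.mem_sup] at hv
  obtain ⟨u, hu, y, hy, rfl⟩ := hv
  rw [Submodule.ideal_span_singleton_smul] at hy
  obtain ⟨f, -, rfl⟩ := hy
  exact ⟨u, hu, f, rfl⟩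

-- This is the vanishing of `Tor₁(P/(x₀, …, x_{i-1}), N)`.
theorem mem_partialIdeal_smul_ker {j : ℕ} (φ : F →ₗ[P] N) (hφ : Function.Surjective φ)
    (hN : IsRegularUpTo x j N) {i : ℕ} (hij : i ≤ j) (hin : i ≤ n) {v : F}
    (hker : v ∈ LinearMap.ker φ) (hv : v ∈ partialIdeal x i • (⊤ : Submodule P F)) :
    v ∈ partialIdeal x i • LinearMap.ker φ := by
  induction i generalizing v with
  | zero => simpa [partialIdeal_zero] using hv
  | succ i ih =>
    let l : Fin n := ⟨i, hin⟩
    obtain ⟨u, hu, f, rfl⟩ := exists_eq_add_smul_of_mem_partialIdeal_succ l hv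
    have hmap : (partialIdeal x i • (⊤ : Submodule P F)).map φ = partialIdeal x i • ⊤ := by
      rw [Submodule.map_smul'', Submodule.map_top, LinearMap.range_eq_top.2 hφ]
    have hφf : φ f ∈ partialIdeal x i • (⊤ : Submodule P N) := by
      refine hN l hij (φ f) ?_
      have hrel : φ u + x l • φ f = 0 := by simpa using hker
      rw [eq_neg_of_add_eq_zero_right hrel, ← hmap]
      exact Submodule.neg_mem _ (Submodule.mem_map_of_mem hu)
    rw [← hmap] at hφf
    obtain ⟨f', hf', hff'⟩ := hφf
    have hdiff : f - f' ∈ LinearMap.ker φ := by simp [LinearMap.mem_ker, hff']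
    have hsplit : u + x l • f = (u + x l • f') + x l • (f - f') := by rw [smul_sub]; abel
    have hfirst : u + x l • f' ∈ partialIdeal x i • LinearMap.ker φ := by
      refine ih (by lia) (by lia) ?_ (Submodule.add_mem _ hu (Submodule.smul_mem _ _ hf'))
      rw [eq_sub_of_add_eq hsplit.symm]
      exact Submodule.sub_mem _ hker (Submodule.smul_mem _ _ hdiff)
    have hsucc : partialIdeal x (i + 1) = _ := partialIdeal_succ x l
    rw [hsplit, hsucc]
    refine Submodule.add_mem _ (Submodule.smul_mono_left le_sup_left hfirst) ?_
    exact Submodule.smul_mem_smul (Ideal.mem_sup_right (Ideal.mem_span_singleton_self _)) hdiff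

theorem IsRegularUpTo.ker {j : ℕ} (φ : F →ₗ[P] N) (hφ : Function.Surjective φ)
    (hN : IsRegularUpTo x j N) (hF : IsRegularUpTo x (j + 1) F) :
    IsRegularUpTo x (j + 1) (LinearMap.ker φ) := by
  intro i hi z hz
  rw [Submodule.mem_smul_top_iff] at hz ⊢
  refine mem_partialIdeal_smul_ker φ hφ hN (by lia) i.is_lt.le z.2 (hF i hi _ ?_)
  exact Submodule.smul_mono le_rfl le_top hz

theorem mem_ideal_smul_top_pi {ι : Type*} [Finite ι] (I : Ideal P) (v : ι → P) :
    v ∈ I • (⊤ : Submodule P (ι → P)) ↔ ∀ a, v a ∈ I := by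
  classical
  cases nonempty_fintype ι
  refine ⟨fun hv a => ?_, fun h => ?_⟩
  · simpa using Submodule.smul_top_le_comap_smul_top I (LinearMap.proj (φ := fun _ : ι => P) a) hv
  · rw [pi_eq_sum_univ v]
    exact Submodule.sum_mem _ fun a _ => Submodule.smul_mem_smul (h a) trivial

end Regular

section RegularVariables

variable {k : Type*} [CommRing k] {n : ℕ}

theorem isRegularUpTo_X_pi {ι : Type*} [Finite ι] (j : ℕ) :
    IsRegularUpTo (X : Fin n → MvPolynomial (Fin n) k) j (ι → MvPolynomial (Fin n) k) := by
  intro i _ z hz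
  rw [mem_ideal_smul_top_pi] at hz ⊢
  intro a
  have hXa : X i * z a ∈ partialIdeal X i := hz a
  rw [partialIdeal, mem_ideal_span_X_image] at hXa ⊢
  intro d hd
  have hd' : Finsupp.single i 1 + d ∈ (X i * z a).support := by
    rw [support_X_mul]
    simpa using hd
  obtain ⟨l, hl, hld⟩ := hXa _ hd'
  have hne : l ≠ i := by
    rintro rfl
    simp at hl
  exact ⟨l, hl, by simpa [Finsupp.single_apply, hne.symm] using hld⟩

theorem mem_partialIdeal_X_top (p : MvPolynomial (Fin n) k) :
    p ∈ partialIdeal X n ↔ coeff 0 p = 0 := by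
  rw [partialIdeal, mem_ideal_span_X_image]
  refine ⟨fun h => ?_, fun h d hd => ?_⟩
  · by_contra h0
    obtain ⟨i, -, hi⟩ := h 0 (mem_support_iff.2 h0)
    exact hi rfl
  · have hne : d ≠ 0 := by
      rintro rfl
      exact mem_support_iff.1 hd h
    obtain ⟨i, hi⟩ := Finsupp.ne_iff.1 hne
    exact ⟨i, i.2, hi⟩

end RegularVariables

/-! ### Graded modules over a polynomial ring -/

section HomogeneousComponent

variable {k σ : Type*} [CommRing k]

theorem sum_range_homogeneousComponent (p : MvPolynomial σ k) {D : ℕ} (h : p.totalDegree < D) :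
    ∑ d ∈ Finset.range D, homogeneousComponent d p = p := by
  conv_rhs => rw [← sum_homogeneousComponent p]
  refine (Finset.sum_subset (Finset.range_mono h) fun d _ hd => ?_).symm
  exact homogeneousComponent_eq_zero _ _ (by simpa using hd)

theorem homogeneousComponent_homogeneous_mul {a : MvPolynomial σ k} {e : ℕ}
    (ha : a.IsHomogeneous e) (b : MvPolynomial σ k) (d : ℕ) :
    homogeneousComponent d (a * b) = if e ≤ d then a * homogeneousComponent (d - e) b else 0 := by
  conv_lhs => rw [← sum_range_homogeneousComponent b (D := b.totalDegree + 1 + d) (by lia)]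
  have hterm (j : ℕ) : homogeneousComponent d (a * homogeneousComponent j b) =
      if d = e + j then a * homogeneousComponent j b else 0 :=
    homogeneousComponent_of_mem ((mem_homogeneousSubmodule _ _).2
      (ha.mul (homogeneousComponent_isHomogeneous _ _)))
  simp_rw [Finset.mul_sum, map_sum, hterm]
  split_ifs with h
  · rw [Finset.sum_eq_single (d - e) (fun j _ hj => if_neg (by lia))
      (fun hd => absurd (Finset.mem_range.2 (by lia)) hd), if_pos (by lia)]
  · exact Finset.sum_eq_zero fun j _ => if_neg (by lia)

end HomogeneousComponent

/-- An `ℕ`-grading of a module over a polynomial ring (standard grading), given by the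
projections onto the homogeneous components. -/
structure ModuleGrading (k σ N : Type*) [CommRing k] [AddCommGroup N]
    [Module (MvPolynomial σ k) N] where
  proj : ℕ → N →+ N
  proj_smul : ∀ {a : MvPolynomial σ k} {e : ℕ}, a.IsHomogeneous e → ∀ d z,
    proj d (a • z) = if e ≤ d then a • proj (d - e) z else 0
  proj_proj : ∀ d e z, proj d (proj e z) = if d = e then proj e z else 0
  exists_eq_sum : ∀ z, ∃ D, z = ∑ d ∈ Finset.range D, proj d z

/-- A graded module with an endomorphism of degree one whose square is multiplication by `g`. -/
structure GradedSqrt {k σ : Type*} [CommRing k] (g : MvPolynomial σ k) (N : Type*)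
    [AddCommGroup N] [Module (MvPolynomial σ k) N] extends ModuleGrading k σ N where
  op : N →ₗ[MvPolynomial σ k] N
  isSqrt : IsSqrt g op
  proj_op : ∀ d z, proj (d + 1) (op z) = op (proj d z)
  proj_zero_op : ∀ z, proj 0 (op z) = 0

section FreeGrading

variable {k σ ι : Type*} [CommRing k]

/-- The projection onto degree `d` of the free module whose `i`-th basis vector has degree
`w i`. -/
noncomputable def freeProj (w : ι → ℕ) (d : ℕ) :
    (ι → MvPolynomial σ k) →+ (ι → MvPolynomial σ k) where
  toFun v := fun i => if w i ≤ d then homogeneousComponent (d - w i) (v i) else 0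
  map_zero' := by
    ext i : 1
    simp
  map_add' v v' := by
    ext i : 1
    simp only [Pi.add_apply, map_add]
    split_ifs <;> simp

theorem freeProj_apply (w : ι → ℕ) (d : ℕ) (v : ι → MvPolynomial σ k) (i : ι) :
    freeProj w d v i = if w i ≤ d then homogeneousComponent (d - w i) (v i) else 0 := rfl

theorem freeProj_homogeneous_smul (w : ι → ℕ) {a : MvPolynomial σ k} {e : ℕ}
    (ha : a.IsHomogeneous e) (d : ℕ) (v : ι → MvPolynomial σ k) :
    freeProj w d (a • v) = if e ≤ d then a • freeProj w (d - e) v else 0 := by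
  ext i : 1
  have hcond : (w i ≤ d ∧ e ≤ d - w i) ↔ (e ≤ d ∧ w i ≤ d - e) := by lia
  rw [freeProj_apply, Pi.smul_apply, smul_eq_mul, homogeneousComponent_homogeneous_mul ha,
    Nat.sub_right_comm, ← ite_and, if_congr hcond rfl rfl, ite_and]
  split_ifs with h₁ h₂
  · rw [Pi.smul_apply, freeProj_apply, if_pos h₂, smul_eq_mul]
  · rw [Pi.smul_apply, freeProj_apply, if_neg h₂, smul_zero]
  · rfl

theorem freeProj_freeProj (w : ι → ℕ) (d e : ℕ) (v : ι → MvPolynomial σ k) :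
    freeProj w d (freeProj w e v) = if d = e then freeProj w e v else 0 := by
  ext i : 1
  rw [ite_apply, freeProj_apply, freeProj_apply, Pi.zero_apply]
  by_cases he : w i ≤ e
  · rw [if_pos he, homogeneousComponent_of_mem (homogeneousComponent_mem _ _), ← ite_and]
    exact if_congr (by lia) rfl rfl
  · simp [he]

theorem exists_eq_sum_freeProj [Finite ι] (w : ι → ℕ) (v : ι → MvPolynomial σ k) :
    ∃ D, v = ∑ d ∈ Finset.range D, freeProj w d v := by
  cases nonempty_fintype ι
  refine ⟨∑ i, (w i + (v i).totalDegree + 1), ?_⟩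
  ext i : 1
  rw [Finset.sum_apply]
  have hle : w i + (v i).totalDegree + 1 ≤ ∑ i, (w i + (v i).totalDegree + 1) :=
    Finset.single_le_sum (f := fun i => w i + (v i).totalDegree + 1) (by simp) (Finset.mem_univ i)
  obtain ⟨D, hD⟩ := Nat.exists_eq_add_of_le ((Nat.le_add_right _ _).trans
    ((Nat.le_succ _).trans hle))
  have hlow : ∑ d ∈ Finset.range (w i), freeProj w d v i = 0 :=
    Finset.sum_eq_zero fun d hd => if_neg (by simpa using hd)
  rw [hD, Finset.sum_range_add, hlow, zero_add]
  conv_lhs => rw [← sum_range_homogeneousComponent (v i) (D := D) (by lia)]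
  refine Finset.sum_congr rfl fun d _ => ?_
  rw [freeProj_apply, if_pos (by lia), Nat.add_sub_cancel_left]

/-- The grading of a free module in which the `i`-th basis vector has degree `w i`. -/
noncomputable def ModuleGrading.free [Finite ι] (w : ι → ℕ) :
    ModuleGrading k σ (ι → MvPolynomial σ k) where
  proj := freeProj w
  proj_smul := freeProj_homogeneous_smul w
  proj_proj := freeProj_freeProj w
  exists_eq_sum := exists_eq_sum_freeProj w

end FreeGrading

namespace ModuleGrading

section General

variable {k σ N : Type*} [CommRing k] [AddCommGroup N] [Module (MvPolynomial σ k) N]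
  (G : ModuleGrading k σ N)

theorem proj_smul_homogeneous (a : MvPolynomial σ k) {z : N} {w : ℕ} (hz : G.proj w z = z)
    (d : ℕ) :
    G.proj d (a • z) = if w ≤ d then homogeneousComponent (d - w) a • z else 0 := by
  conv_lhs => rw [← sum_range_homogeneousComponent a (D := a.totalDegree + 1 + d) (by lia)]
  have hproj (e : ℕ) : G.proj e z = if e = w then z else 0 := by
    conv_lhs => rw [← hz, G.proj_proj, hz]
  have hterm (e : ℕ) : G.proj d (homogeneousComponent e a • z) =
      if e + w = d then homogeneousComponent e a • z else 0 := by
    rw [G.proj_smul (homogeneousComponent_isHomogeneous _ _), hproj, smul_ite, smul_zero,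
      ← ite_and]
    exact if_congr (by lia) rfl rfl
  simp_rw [Finset.sum_smul, map_sum, hterm]
  split_ifs with h
  · rw [Finset.sum_eq_single (d - w) (fun e _ he => if_neg (by lia))
      (fun hd => absurd (Finset.mem_range.2 (by lia)) hd), if_pos (by lia)]
  · exact Finset.sum_eq_zero fun e _ => if_neg (by lia)

theorem eq_zero_of_proj_eq_zero {z : N} (h : ∀ d, G.proj d z = 0) : z = 0 := by
  obtain ⟨D, hD⟩ := G.exists_eq_sum z
  rw [hD]
  exact Finset.sum_eq_zero fun d _ => h d

include G in
theorem eq_zero_of_X_sub_one_smul_eq_zero (i : σ) {z : N}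
    (h : (X i - 1 : MvPolynomial σ k) • z = 0) : z = 0 := by
  have hXz : (X i : MvPolynomial σ k) • z = z := by rwa [sub_smul, one_smul, sub_eq_zero] at h
  refine G.eq_zero_of_proj_eq_zero fun d => ?_
  induction d with
  | zero => rw [← hXz, G.proj_smul (isHomogeneous_X k i), if_neg (by lia)]
  | succ d ih =>
    rw [← hXz, G.proj_smul (isHomogeneous_X k i), if_pos (by lia), Nat.add_sub_cancel, ih,
      smul_zero]

theorem linearCombination_freeProj {ι : Type*} [Fintype ι] {w : ι → ℕ} {z : ι → N}
    (hz : ∀ a, G.proj (w a) (z a) = z a) (d : ℕ) (v : ι → MvPolynomial σ k) :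
    Fintype.linearCombination (MvPolynomial σ k) z (freeProj w d v) =
      G.proj d (Fintype.linearCombination (MvPolynomial σ k) z v) := by
  rw [Fintype.linearCombination_apply, Fintype.linearCombination_apply, map_sum]
  refine Finset.sum_congr rfl fun a _ => ?_
  rw [G.proj_smul_homogeneous _ (hz a), freeProj_apply, ite_smul, zero_smul]

theorem exists_homogeneous_generators [Module.Finite (MvPolynomial σ k) N] :
    ∃ (r : ℕ) (w : Fin r → ℕ) (z : Fin r → N), (∀ a, G.proj (w a) (z a) = z a) ∧
      Submodule.span (MvPolynomial σ k) (Set.range z) = ⊤ := by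
  obtain ⟨s, hs⟩ := (inferInstance : Module.Finite (MvPolynomial σ k) N).fg_top
  choose D hD using G.exists_eq_sum
  let T := Σ x : s, Fin (D x)
  let e : Fin (Fintype.card T) ≃ T := (Fintype.equivFin T).symm
  refine ⟨Fintype.card T, fun a => (e a).2, fun a => G.proj (e a).2 (e a).1,
    fun a => by simp [G.proj_proj], ?_⟩
  rw [eq_top_iff, ← hs, Submodule.span_le]
  intro x hx
  rw [SetLike.mem_coe, hD x]
  refine Submodule.sum_mem _ fun d hd => Submodule.subset_span ?_
  let t : T := ⟨⟨x, hx⟩, ⟨d, by simpa using hd⟩⟩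
  exact ⟨e.symm t, congrArg (fun t : T => G.proj t.2 t.1) (e.apply_symm_apply t)⟩

theorem exists_irredundant_homogeneous_generators [Module.Finite (MvPolynomial σ k) N] :
    ∃ (r : ℕ) (w : Fin r → ℕ) (z : Fin r → N), (∀ a, G.proj (w a) (z a) = z a) ∧
      Submodule.span (MvPolynomial σ k) (Set.range z) = ⊤ ∧
      ∀ a, z a ∉ Submodule.span (MvPolynomial σ k) (z '' {a}ᶜ) := by
  classical
  have hex := G.exists_homogeneous_generators
  obtain ⟨w, z, hz, hspan⟩ := Nat.find_spec hex
  refine ⟨Nat.find hex, w, z, hz, hspan, fun a ha => ?_⟩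
  obtain ⟨r, hr⟩ : ∃ r, Nat.find hex = r + 1 := ⟨Nat.find hex - 1, by have := a.2; lia⟩
  let e : Fin r ≃ {b : Fin (Nat.find hex) // b ≠ a} :=
    (Fintype.equivFinOfCardEq (by simp [Fintype.card_subtype_compl, hr])).symm
  refine Nat.find_min hex (show r < _ by lia)
    ⟨fun b => w (e b), fun b => z (e b), fun b => hz _, ?_⟩
  have hsub : z '' {a}ᶜ ⊆ Set.range fun b => z (e b) := by
    rintro _ ⟨b, hb, rfl⟩
    exact ⟨e.symm ⟨b, hb⟩, by simp⟩
  refine eq_top_iff.2 (hspan.ge.trans (Submodule.span_le.2 ?_))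
  rintro _ ⟨b, rfl⟩
  rcases eq_or_ne b a with rfl | hb
  · exact Submodule.span_mono hsub ha
  · exact Submodule.subset_span (hsub ⟨b, hb, rfl⟩)

end General

section Field

variable {k N : Type*} [Field k] [AddCommGroup N]

theorem mem_span_of_relation {σ ι : Type*} [Module (MvPolynomial σ k) N]
    (G : ModuleGrading k σ N) [Fintype ι] {w : ι → ℕ} {z : ι → N}
    (hz : ∀ a, G.proj (w a) (z a) = z a) {v : ι → MvPolynomial σ k}
    (hv : Fintype.linearCombination (MvPolynomial σ k) z v = 0) {a : ι}
    (ha : coeff 0 (v a) ≠ 0) : z a ∈ Submodule.span (MvPolynomial σ k) (z '' {a}ᶜ) := by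
  classical
  have hrel : Fintype.linearCombination (MvPolynomial σ k) z (freeProj w (w a) v) = 0 := by
    rw [G.linearCombination_freeProj hz, hv, map_zero]
  rw [Fintype.linearCombination_apply, ← Finset.add_sum_erase _ _ (Finset.mem_univ a),
    freeProj_apply, if_pos le_rfl, Nat.sub_self, homogeneousComponent_zero] at hrel
  have hmem : (C (coeff 0 (v a)) : MvPolynomial σ k) • z a ∈
      Submodule.span (MvPolynomial σ k) (z '' {a}ᶜ) := by
    rw [add_eq_zero_iff_eq_neg.1 hrel]
    refine Submodule.neg_mem _ (Submodule.sum_mem _ fun b hb => Submodule.smul_mem _ _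
      (Submodule.subset_span ⟨b, by simpa using Finset.ne_of_mem_erase hb, rfl⟩))
  have hinv := Submodule.smul_mem _ (C (coeff 0 (v a))⁻¹ : MvPolynomial σ k) hmem
  rwa [smul_smul, ← C_mul, inv_mul_cancel₀ ha, C_1, one_smul] at hinv

theorem exists_homogeneous_basis {n : ℕ} [Module (MvPolynomial (Fin n) k) N]
    (G : ModuleGrading k (Fin n) N) [Module.Finite (MvPolynomial (Fin n) k) N]
    (hN : IsRegularUpTo (X : Fin n → MvPolynomial (Fin n) k) n N) :
    ∃ (r : ℕ) (w : Fin r → ℕ) (z : Fin r → N), (∀ a, G.proj (w a) (z a) = z a) ∧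
      Function.Bijective (Fintype.linearCombination (MvPolynomial (Fin n) k) z) := by
  obtain ⟨r, w, z, hz, hspan, hmin⟩ := G.exists_irredundant_homogeneous_generators
  set φ := Fintype.linearCombination (MvPolynomial (Fin n) k) z
  have hsurj : Function.Surjective φ := by
    rw [← LinearMap.range_eq_top, Fintype.range_linearCombination, hspan]
  have hle : LinearMap.ker φ ≤ partialIdeal X n • LinearMap.ker φ := fun v hv => by
    refine mem_partialIdeal_smul_ker φ hsurj hN le_rfl le_rfl hv ?_
    refine (mem_ideal_smul_top_pi _ v).2 fun a => (mem_partialIdeal_X_top _).2 ?_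
    by_contra ha
    exact hmin a (G.mem_span_of_relation hz hv ha)
  obtain ⟨s, hs, hs0⟩ := Submodule.exists_sub_one_mem_and_smul_eq_zero_of_fg_of_le_smul _ _
    (IsNoetherian.noetherian _) hle
  have hs' : s ≠ 0 := by
    rintro rfl
    simp [mem_partialIdeal_X_top] at hs
  refine ⟨r, w, z, hz, ?_, hsurj⟩
  rw [← LinearMap.ker_eq_bot, eq_bot_iff]
  exact fun v hv => (smul_eq_zero.1 (hs0 v hv)).resolve_left hs'

end Field

end ModuleGrading

/-! ### Dehomogenization -/

section Dehom

variable {k : Type*} [CommRing k] {n : ℕ}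

variable (k n) in
/-- Dehomogenization of polynomials: the substitution `x₀ = 1`, with the remaining variables
renumbered. -/
noncomputable def dehom : MvPolynomial (Fin (n + 1)) k →+* MvPolynomial (Fin n) k :=
  (aeval (Fin.cons 1 X : Fin (n + 1) → MvPolynomial (Fin n) k)).toRingHom

theorem dehom_apply (p : MvPolynomial (Fin (n + 1)) k) :
    dehom k n p = aeval (Fin.cons 1 X : Fin (n + 1) → MvPolynomial (Fin n) k) p := rfl

@[simp]
theorem dehom_X_zero : dehom k n (X 0) = 1 := by simp [dehom_apply]

@[simp]
theorem dehom_rename_succ (s : MvPolynomial (Fin n) k) : dehom k n (rename Fin.succ s) = s := by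
  have hcomp : (Fin.cons 1 X : Fin (n + 1) → MvPolynomial (Fin n) k) ∘ Fin.succ = X := by
    ext i : 1
    simp
  rw [dehom_apply, aeval_rename, hcomp, aeval_X_left_apply]

theorem exists_eq_X_sub_one_mul_of_dehom_eq_zero {p : MvPolynomial (Fin (n + 1)) k}
    (h : dehom k n p = 0) : ∃ q, p = (X 0 - 1) * q := by
  let I : Ideal (MvPolynomial (Fin (n + 1)) k) := Ideal.span {X 0 - 1}
  have hfactor : Ideal.Quotient.mkₐ k I = ((Ideal.Quotient.mkₐ k I).comp (rename Fin.succ)).comp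
      (aeval (Fin.cons 1 X : Fin (n + 1) → MvPolynomial (Fin n) k)) := by
    refine MvPolynomial.algHom_ext fun i => ?_
    cases i using Fin.cases with
    | zero =>
      simp only [AlgHom.comp_apply, aeval_X, Fin.cons_zero, map_one]
      rw [← map_one (Ideal.Quotient.mkₐ k I)]
      exact Ideal.Quotient.eq.2 (Ideal.subset_span rfl)
    | succ i => simp [AlgHom.comp_apply]
  have hmem : p ∈ I := Ideal.Quotient.eq_zero_iff_mem.1 (by
    change Ideal.Quotient.mkₐ k I p = 0
    rw [hfactor, AlgHom.comp_apply, ← dehom_apply, h, map_zero])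
  obtain ⟨q, hq⟩ := Ideal.mem_span_singleton'.1 hmem
  exact ⟨q, by rw [← hq, mul_comm]⟩

theorem totalDegree_dehom_le {p : MvPolynomial (Fin (n + 1)) k} {e : ℕ} (hp : p.IsHomogeneous e) :
    (dehom k n p).totalDegree ≤ e := by
  have hvar (i : Fin (n + 1)) :
      ((Fin.cons 1 X : Fin (n + 1) → MvPolynomial (Fin n) k) i).totalDegree ≤ 1 := by
    cases i using Fin.cases with
    | zero => simp
    | succ i => exact (isHomogeneous_X k i).totalDegree_le
  rw [dehom_apply, p.as_sum, map_sum]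
  refine totalDegree_finsetSum_le fun d hd => ?_
  have hde : d.degree = e := by
    by_contra hne
    exact mem_support_iff.1 hd (hp.coeff_eq_zero hne)
  rw [aeval_monomial, algebraMap_eq]
  refine (totalDegree_mul _ _).trans ?_
  rw [totalDegree_C, zero_add, Finsupp.prod, ← hde, Finsupp.degree]
  refine (totalDegree_finsetProd _ _).trans (Finset.sum_le_sum fun i _ => ?_)
  exact (totalDegree_pow _ _).trans (mul_le_of_le_one_right' (hvar i))

theorem exists_homogeneous_dehom_eq {s : MvPolynomial (Fin n) k} {D : ℕ} (h : s.totalDegree ≤ D) :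
    ∃ p : MvPolynomial (Fin (n + 1)) k, p.IsHomogeneous D ∧ dehom k n p = s := by
  refine ⟨∑ d ∈ Finset.range (D + 1),
    X 0 ^ (D - d) * rename Fin.succ (homogeneousComponent d s), ?_, ?_⟩
  · refine IsHomogeneous.sum _ _ _ fun d hd => ?_
    have hdeg := (isHomogeneous_X_pow (R := k) (0 : Fin (n + 1)) (D - d)).mul
      ((homogeneousComponent_isHomogeneous d s).rename_isHomogeneous (f := Fin.succ))
    rwa [Nat.sub_add_cancel (Finset.mem_range_succ_iff.1 hd)] at hdeg
  · simp only [map_sum, map_mul, map_pow, dehom_X_zero, one_pow, one_mul, dehom_rename_succ]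
    exact sum_range_homogeneousComponent s (by lia)

/-- Coordinatewise dehomogenization. -/
noncomputable def dehomPi (ι : Type*) :
    (ι → MvPolynomial (Fin (n + 1)) k) →ₛₗ[dehom k n] (ι → MvPolynomial (Fin n) k) where
  toFun v := fun a => dehom k n (v a)
  map_add' v v' := by
    ext a : 1
    simp
  map_smul' c v := by
    ext a : 1
    simp

variable {ι : Type*}

@[simp]
theorem dehomPi_apply (v : ι → MvPolynomial (Fin (n + 1)) k) (a : ι) :
    dehomPi ι v a = dehom k n (v a) := rfl

theorem dehomPi_surjective :
    Function.Surjective (dehomPi ι : (ι → MvPolynomial (Fin (n + 1)) k) →ₛₗ[dehom k n] _) :=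
  fun v => ⟨fun a => rename Fin.succ (v a), by
    ext a : 1
    simp⟩

theorem exists_eq_X_sub_one_smul_of_dehomPi_eq_zero {v : ι → MvPolynomial (Fin (n + 1)) k}
    (h : dehomPi ι v = 0) : ∃ u : ι → MvPolynomial (Fin (n + 1)) k,
      v = (X 0 - 1 : MvPolynomial (Fin (n + 1)) k) • u := by
  choose u hu using fun a => exists_eq_X_sub_one_mul_of_dehom_eq_zero (congrFun h a)
  exact ⟨u, funext hu⟩

theorem map_linearCombination_dehom {N V : Type*} [AddCommGroup N]
    [Module (MvPolynomial (Fin (n + 1)) k) N] [AddCommGroup V] [Module (MvPolynomial (Fin n) k) V]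
    [Fintype ι] (ρ : N →ₛₗ[dehom k n] V) (z : ι → N) (u : ι → MvPolynomial (Fin (n + 1)) k) :
    ρ (Fintype.linearCombination _ z u) = Fintype.linearCombination _ (ρ ∘ z) (dehomPi ι u) := by
  simp only [Fintype.linearCombination_apply, map_sum, LinearMap.map_smulₛₗ, dehomPi_apply,
    Function.comp_apply]

end Dehom

/-! ### Presentations of modules with a square root of `g` -/

theorem restrict_isSqrt {S V : Type*} [CommRing S] {g : S} [AddCommGroup V] [Module S V]
    {ζ : V →ₗ[S] V} (hζ : IsSqrt g ζ) {K : Submodule S V} (hK : ∀ v ∈ K, ζ v ∈ K) :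
    IsSqrt g (ζ.restrict hK) :=
  fun v => Subtype.ext (hζ v)

section FreeOp

variable {S : Type*} [CommRing S] (g : S) (ι : Type*)

/-- The square root of `g` on the free `AdjoinSqrt g`-module with basis `ι`, whose `S`-basis
`ι ⊕ ι` consists of the basis vectors and their images. -/
def freeOp : (ι ⊕ ι → S) →ₗ[S] (ι ⊕ ι → S) where
  toFun v := Sum.elim (fun j => g * v (Sum.inr j)) fun j => v (Sum.inl j)
  map_add' v v' := by ext (j | j) <;> simp [mul_add]
  map_smul' a v := by ext (j | j) <;> simp [mul_left_comm]

variable {ι}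

@[simp]
theorem freeOp_inl (v : ι ⊕ ι → S) (j : ι) : freeOp g ι v (Sum.inl j) = g * v (Sum.inr j) := rfl

@[simp]
theorem freeOp_inr (v : ι ⊕ ι → S) (j : ι) : freeOp g ι v (Sum.inr j) = v (Sum.inl j) := rfl

theorem freeOp_isSqrt : IsSqrt g (freeOp g ι) := by
  intro v
  ext (j | j) <;> simp

variable {g} {V : Type*} [AddCommGroup V] [Module S V] {ζ : V →ₗ[S] V} [Fintype ι]

theorem linearCombination_freeOp (hζ : IsSqrt g ζ) (z : ι → V) (v : ι ⊕ ι → S) :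
    Fintype.linearCombination S (Sum.elim z (ζ ∘ z)) (freeOp g ι v) =
      ζ (Fintype.linearCombination S (Sum.elim z (ζ ∘ z)) v) := by
  simp only [Fintype.linearCombination_apply, Fintype.sum_sum_type, map_add, map_sum, map_smul,
    Sum.elim_inl, Sum.elim_inr, freeOp_inl, freeOp_inr, Function.comp_apply, hζ _]
  rw [add_comm]
  simp_rw [smul_smul, mul_comm]

theorem linearCombination_elim_surjective {z : ι → V}
    (hz : Submodule.span S (Set.range z) = ⊤) (z' : ι → V) :
    Function.Surjective (Fintype.linearCombination S (Sum.elim z z')) := by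
  rw [← LinearMap.range_eq_top, Fintype.range_linearCombination, eq_top_iff, ← hz,
    Set.Sum.elim_range]
  exact Submodule.span_mono Set.subset_union_left

/-- The `S`-linear relations among the vectors `z` and `ζ z`, that is, the syzygies of `z` over
`AdjoinSqrt g`. -/
def syzygies (ζ : V →ₗ[S] V) (z : ι → V) : Submodule S (ι ⊕ ι → S) :=
  LinearMap.ker (Fintype.linearCombination S (Sum.elim z (ζ ∘ z)))

theorem freeOp_mem_syzygies (hζ : IsSqrt g ζ) {z : ι → V} {v : ι ⊕ ι → S}
    (hv : v ∈ syzygies ζ z) : freeOp g ι v ∈ syzygies ζ z := by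
  rw [syzygies, LinearMap.mem_ker] at hv ⊢
  rw [linearCombination_freeOp hζ, hv, map_zero]

end FreeOp

section SyzygyOp

variable {S : Type u} [CommRing S] [IsNoetherianRing S] {g : S} {V : Type u} [AddCommGroup V]
  [Module S V] [Module.Finite S V] {ζ : V →ₗ[S] V}

theorem opClass_freeOp_eq_syzygies_add (hζ : IsSqrt g ζ) {r : ℕ} {z : Fin r → V}
    (hz : Submodule.span S (Set.range z) = ⊤) :
    opClass (freeOp g (Fin r)) (freeOp_isSqrt g) =
      opClass _ (restrict_isSqrt (freeOp_isSqrt g) fun _ => freeOp_mem_syzygies hζ (z := z)) +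
        opClass ζ hζ :=
  opClass_exact _ _ _ (syzygies ζ z).subtype _ (fun _ => rfl) (linearCombination_freeOp hζ z)
    Subtype.val_injective (linearCombination_elim_surjective hz _)
    (LinearMap.exact_subtype_ker_map _)

end SyzygyOp

section GradedSqrt

variable {k σ : Type*} [CommRing k] {g : MvPolynomial σ k}

theorem freeProj_freeOp {ι : Type*} (hg : g.IsHomogeneous 2) (w : ι → ℕ) (d : ℕ)
    (v : ι ⊕ ι → MvPolynomial σ k) :
    freeProj (Sum.elim w (w + 1)) (d + 1) (freeOp g ι v) =
      freeOp g ι (freeProj (Sum.elim w (w + 1)) d v) := by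
  ext (j | j) : 1
  · have hdeg : d + 1 - Sum.elim w (w + 1) (Sum.inl j) - 2 =
        d - Sum.elim w (w + 1) (Sum.inr j) := by
      simp only [Sum.elim_inl, Sum.elim_inr, Pi.add_apply, Pi.one_apply]
      lia
    rw [freeOp_inl, freeProj_apply, freeProj_apply, freeOp_inl,
      homogeneousComponent_homogeneous_mul hg, ← ite_and, mul_ite, mul_zero, hdeg]
    refine if_congr ?_ rfl rfl
    simp only [Sum.elim_inl, Sum.elim_inr, Pi.add_apply, Pi.one_apply]
    lia
  · simp only [freeProj_apply, freeOp_inr, Sum.elim_inl, Sum.elim_inr, Pi.add_apply, Pi.one_apply,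
      Nat.add_sub_add_right]
    exact if_congr (by lia) rfl rfl

theorem freeProj_zero_freeOp {ι : Type*} (hg : g.IsHomogeneous 2) (w : ι → ℕ)
    (v : ι ⊕ ι → MvPolynomial σ k) :
    freeProj (Sum.elim w (w + 1)) 0 (freeOp g ι v) = 0 := by
  ext (j | j) : 1 <;>
    simp [freeProj_apply, homogeneousComponent_homogeneous_mul hg]

namespace GradedSqrt

/-- The graded module underlying the free `AdjoinSqrt g`-module with basis `ι`, the `i`-th basis
vector having degree `w i`. -/
noncomputable def free {ι : Type*} [Finite ι] (hg : g.IsHomogeneous 2) (w : ι → ℕ) :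
    GradedSqrt g (ι ⊕ ι → MvPolynomial σ k) where
  toModuleGrading := ModuleGrading.free (Sum.elim w (w + 1))
  op := freeOp g ι
  isSqrt := freeOp_isSqrt g
  proj_op := freeProj_freeOp hg w
  proj_zero_op := freeProj_zero_freeOp hg w

/-- A graded submodule stable under the operator, with the induced structure. -/
noncomputable def sub {F : Type*} [AddCommGroup F] [Module (MvPolynomial σ k) F]
    (G : GradedSqrt g F) (K : Submodule (MvPolynomial σ k) F)
    (hproj : ∀ d, ∀ v ∈ K, G.proj d v ∈ K) (hop : ∀ v ∈ K, G.op v ∈ K) : GradedSqrt g K where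
  proj d := ((G.proj d).comp K.subtype.toAddMonoidHom).codRestrict K fun v => hproj d v v.2
  proj_smul {a e} ha d v := by
    refine Subtype.ext ((G.proj_smul ha d v.1).trans ?_)
    split_ifs <;> rfl
  proj_proj d e v := by
    refine Subtype.ext ((G.proj_proj d e v.1).trans ?_)
    split_ifs <;> rfl
  exists_eq_sum v := by
    obtain ⟨D, hD⟩ := G.exists_eq_sum v.1
    exact ⟨D, Subtype.ext (by rwa [AddSubmonoidClass.coe_finsetSum])⟩
  op := G.op.restrict hop
  isSqrt := restrict_isSqrt G.isSqrt hop
  proj_op d v := Subtype.ext (G.proj_op d v.1)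
  proj_zero_op v := Subtype.ext (G.proj_zero_op v.1)

/-- `ρ` identifies the module `V` with operator `ζ` with the dehomogenization `N/(x₀ - 1)N`. -/
structure IsDehomogenization {n : ℕ} {g : MvPolynomial (Fin (n + 1)) k} {N V : Type*}
    [AddCommGroup N] [Module (MvPolynomial (Fin (n + 1)) k) N] [AddCommGroup V]
    [Module (MvPolynomial (Fin n) k) V] (G : GradedSqrt g N)
    (ζ : V →ₗ[MvPolynomial (Fin n) k] V) (ρ : N →ₛₗ[dehom k n] V) : Prop where
  surjective : Function.Surjective ρ
  exists_of_map_eq_zero : ∀ {z}, ρ z = 0 →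
    ∃ z', z = (X 0 - 1 : MvPolynomial (Fin (n + 1)) k) • z'
  map_op : ∀ z, ρ (G.op z) = ζ (ρ z)

end GradedSqrt

theorem dehomPi_freeOp {n : ℕ} {ι : Type*} (g : MvPolynomial (Fin (n + 1)) k)
    (v : ι ⊕ ι → MvPolynomial (Fin (n + 1)) k) :
    dehomPi (ι ⊕ ι) (freeOp g ι v) = freeOp (dehom k n g) ι (dehomPi (ι ⊕ ι) v) := by
  ext (j | j) : 1 <;> simp

end GradedSqrt

/-! ### Reduction to filtered operators on free modules -/

section Filtered

variable {k : Type u} {n : ℕ}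

/-- The operator `ζ` on a free module raises degrees by at most one, where the `i`-th basis vector
is given the degree `w i`. -/
def IsFilteredOp [CommRing k] {ι : Type*} [DecidableEq ι] (w : ι → ℕ)
    (ζ : (ι → MvPolynomial (Fin n) k) →ₗ[MvPolynomial (Fin n) k] (ι → MvPolynomial (Fin n) k)) :
    Prop :=
  ∀ i j, ζ (Pi.single j 1) i ≠ 0 → (ζ (Pi.single j 1) i).totalDegree + w i ≤ w j + 1

/-- The restriction of `dehomPi` to a submodule, with values in a prescribed submodule. -/
noncomputable def dehomRestrict [CommRing k] {ι : Type*}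
    {K : Submodule (MvPolynomial (Fin (n + 1)) k) (ι → MvPolynomial (Fin (n + 1)) k)}
    {L : Submodule (MvPolynomial (Fin n) k) (ι → MvPolynomial (Fin n) k)}
    (h : ∀ v ∈ K, dehomPi ι v ∈ L) : K →ₛₗ[dehom k n] L :=
  ((dehomPi ι).domRestrict K).codRestrict L fun v => h v v.2

namespace GradedSqrt

variable [Field k] {gP : MvPolynomial (Fin (n + 1)) k} {N : Type u} [AddCommGroup N]
  [Module (MvPolynomial (Fin (n + 1)) k) N] {G : GradedSqrt gP N} {V : Type u} [AddCommGroup V]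
  [Module (MvPolynomial (Fin n) k) V] {ζ : V →ₗ[MvPolynomial (Fin n) k] V}
  {ρ : N →ₛₗ[dehom k n] V}

theorem IsDehomogenization.surjective_linearCombination (hρ : G.IsDehomogenization ζ ρ) {r : ℕ}
    {z : Fin r → N}
    (hz : Function.Surjective (Fintype.linearCombination (MvPolynomial (Fin (n + 1)) k) z)) :
    Function.Surjective (Fintype.linearCombination (MvPolynomial (Fin n) k) (ρ ∘ z)) := by
  intro v
  obtain ⟨y, rfl⟩ := hρ.surjective v
  obtain ⟨u, rfl⟩ := hz y
  exact ⟨dehomPi _ u, (map_linearCombination_dehom ρ z u).symm⟩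

theorem IsDehomogenization.bijective_linearCombination (hρ : G.IsDehomogenization ζ ρ) {r : ℕ}
    {z : Fin r → N}
    (hz : Function.Bijective (Fintype.linearCombination (MvPolynomial (Fin (n + 1)) k) z)) :
    Function.Bijective (Fintype.linearCombination (MvPolynomial (Fin n) k) (ρ ∘ z)) := by
  refine ⟨?_, hρ.surjective_linearCombination hz.2⟩
  rw [← LinearMap.ker_eq_bot, eq_bot_iff]
  intro v hv
  obtain ⟨u, rfl⟩ := dehomPi_surjective v
  obtain ⟨z', hz'⟩ := hρ.exists_of_map_eq_zero
    ((map_linearCombination_dehom ρ z u).trans (LinearMap.mem_ker.1 hv))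
  obtain ⟨u', rfl⟩ := hz.2 z'
  rw [← map_smul] at hz'
  rw [hz.1 hz', LinearMap.map_smulₛₗ]
  simp

theorem totalDegree_dehom_add_le {ι : Type*} {w : ι → ℕ} {e : ℕ}
    {u : ι → MvPolynomial (Fin (n + 1)) k} (hu : freeProj w e u = u) {i : ι}
    (hi : dehom k n (u i) ≠ 0) : (dehom k n (u i)).totalDegree + w i ≤ e := by
  have hui : freeProj w e u i = u i := congrFun hu i
  rw [freeProj_apply] at hui
  split_ifs at hui with hw
  · have hdeg := totalDegree_dehom_le (hui ▸ homogeneousComponent_isHomogeneous (e - w i) (u i))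
    lia
  · simp [← hui] at hi

theorem IsDehomogenization.exists_isFilteredOp (hρ : G.IsDehomogenization ζ ρ)
    [Module.Finite (MvPolynomial (Fin (n + 1)) k) N] [Module.Finite (MvPolynomial (Fin n) k) V]
    (hN : IsRegularUpTo (X : Fin (n + 1) → MvPolynomial (Fin (n + 1)) k) (n + 1) N)
    {g : MvPolynomial (Fin n) k} (hζ : IsSqrt g ζ) :
    ∃ (r : ℕ) (w : Fin r → ℕ)
      (ζ' : (Fin r → MvPolynomial (Fin n) k) →ₗ[MvPolynomial (Fin n) k] _) (h : IsSqrt g ζ'),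
      IsFilteredOp w ζ' ∧ opClass ζ' h = opClass ζ hζ := by
  obtain ⟨r, w, z, hz, hbij⟩ := G.exists_homogeneous_basis hN
  let E := LinearEquiv.ofBijective _ (hρ.bijective_linearCombination hbij)
  have hE (v) : E v = Fintype.linearCombination _ (ρ ∘ z) v := rfl
  let ζ' := E.symm.toLinearMap ∘ₗ ζ ∘ₗ E.toLinearMap
  have hEζ (v) : E (ζ' v) = ζ (E v) := by simp [ζ']
  have hζ' : IsSqrt g ζ' := fun v => E.injective (by rw [hEζ, hEζ, hζ, map_smul])
  refine ⟨r, w, ζ', hζ', fun i j hij => ?_, opClass_congr hζ' hζ E hEζ⟩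
  obtain ⟨u, hu⟩ := hbij.2 (G.op (z j))
  have hcol : ζ' (Pi.single j 1) = dehomPi _ u := by
    refine E.injective ?_
    rw [hEζ, hE, hE, Fintype.linearCombination_apply_single, one_smul,
      ← map_linearCombination_dehom, hu, hρ.map_op, Function.comp_apply]
  have hhom : freeProj w (w j + 1) u = u :=
    hbij.1 (by rw [G.linearCombination_freeProj hz, hu, G.proj_op, hz])
  rw [hcol] at hij ⊢
  exact totalDegree_dehom_add_le hhom hij

section Syzygies

variable {r : ℕ} {w : Fin r → ℕ} {z : Fin r → N}

variable (G) in
theorem freeProj_mem_syzygies (hz : ∀ a, G.proj (w a) (z a) = z a) (d : ℕ)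
    {v : Fin r ⊕ Fin r → MvPolynomial (Fin (n + 1)) k} (hv : v ∈ syzygies G.op z) :
    freeProj (Sum.elim w (w + 1)) d v ∈ syzygies G.op z := by
  have hz' (a) : G.proj (Sum.elim w (w + 1) a) (Sum.elim z (G.op ∘ z) a) =
      Sum.elim z (G.op ∘ z) a := by
    cases a with
    | inl a => exact hz a
    | inr a => exact (G.proj_op _ _).trans (congrArg G.op (hz a))
  rw [syzygies, LinearMap.mem_ker] at hv ⊢
  rw [G.linearCombination_freeProj hz', hv, map_zero]

variable (G) in
/-- The graded module of syzygies of a family of homogeneous elements. -/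
noncomputable def syzygies (hgP : gP.IsHomogeneous 2) (hz : ∀ a, G.proj (w a) (z a) = z a) :
    GradedSqrt gP (SwanQuadric.syzygies G.op z) :=
  (free hgP w).sub _ (fun d _ => G.freeProj_mem_syzygies hz d)
    fun _ => freeOp_mem_syzygies G.isSqrt

theorem IsDehomogenization.map_linearCombination_elim (hρ : G.IsDehomogenization ζ ρ)
    (z : Fin r → N) (u : Fin r ⊕ Fin r → MvPolynomial (Fin (n + 1)) k) :
    ρ (Fintype.linearCombination _ (Sum.elim z (G.op ∘ z)) u) =
      Fintype.linearCombination _ (Sum.elim (ρ ∘ z) (ζ ∘ ρ ∘ z)) (dehomPi _ u) := by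
  have hop : ρ ∘ G.op ∘ z = ζ ∘ ρ ∘ z := funext fun a => hρ.map_op (z a)
  rw [map_linearCombination_dehom, Sum.comp_elim, hop]

theorem IsDehomogenization.dehomPi_mem_syzygies (hρ : G.IsDehomogenization ζ ρ)
    (u : Fin r ⊕ Fin r → MvPolynomial (Fin (n + 1)) k) (hu : u ∈ SwanQuadric.syzygies G.op z) :
    dehomPi _ u ∈ SwanQuadric.syzygies ζ (ρ ∘ z) := by
  rw [SwanQuadric.syzygies, LinearMap.mem_ker] at hu ⊢
  rw [← hρ.map_linearCombination_elim, hu, map_zero]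

theorem IsDehomogenization.syzygies {g : MvPolynomial (Fin n) k} (hg : dehom k n gP = g)
    (hρ : G.IsDehomogenization ζ ρ) (hgP : gP.IsHomogeneous 2) (hζ : IsSqrt g ζ)
    (hz : ∀ a, G.proj (w a) (z a) = z a)
    (hspan : Submodule.span (MvPolynomial (Fin (n + 1)) k) (Set.range z) = ⊤) :
    (G.syzygies hgP hz).IsDehomogenization
      ((freeOp g (Fin r)).restrict fun _ => freeOp_mem_syzygies hζ (z := ρ ∘ z))
      (dehomRestrict hρ.dehomPi_mem_syzygies) where
  surjective := by
    rintro ⟨v, hv⟩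
    obtain ⟨u, rfl⟩ := dehomPi_surjective v
    obtain ⟨y, hy⟩ := hρ.exists_of_map_eq_zero
      ((hρ.map_linearCombination_elim z u).trans (LinearMap.mem_ker.1 hv))
    obtain ⟨u', rfl⟩ := linearCombination_elim_surjective hspan (G.op ∘ z) y
    refine ⟨⟨u - (X 0 - 1 : MvPolynomial (Fin (n + 1)) k) • u', ?_⟩, Subtype.ext ?_⟩
    · rw [SwanQuadric.syzygies, LinearMap.mem_ker, map_sub, map_smul, hy, sub_self]
    · change dehomPi _ (u - (X 0 - 1 : MvPolynomial (Fin (n + 1)) k) • u') = dehomPi _ u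
      rw [map_sub, LinearMap.map_smulₛₗ, map_sub, dehom_X_zero, map_one, sub_self, zero_smul,
        sub_zero]
  exists_of_map_eq_zero := by
    rintro ⟨u, hu⟩ h
    obtain ⟨u', rfl⟩ :=
      exists_eq_X_sub_one_smul_of_dehomPi_eq_zero (congrArg Subtype.val h : dehomPi _ u = 0)
    refine ⟨⟨u', G.eq_zero_of_X_sub_one_smul_eq_zero 0 ?_⟩, rfl⟩
    rw [← map_smul]
    exact hu
  map_op u := Subtype.ext ((dehomPi_freeOp gP u.1).trans (by rw [hg]; rfl))

end Syzygies

end GradedSqrt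

section Generation

variable [Field k] {gP : MvPolynomial (Fin (n + 1)) k} {g : MvPolynomial (Fin n) k}
  (hgP : gP.IsHomogeneous 2) (hg : dehom k n gP = g) (𝒢 : AddSubgroup (GGroup (AdjoinSqrt g)))
  (hfree : ∀ r : ℕ, opClass (freeOp g (Fin r)) (freeOp_isSqrt g) ∈ 𝒢)
  (hfilt : ∀ (r : ℕ) (w : Fin r → ℕ)
    (ζ : (Fin r → MvPolynomial (Fin n) k) →ₗ[MvPolynomial (Fin n) k] _) (h : IsSqrt g ζ),
    IsFilteredOp w ζ → opClass ζ h ∈ 𝒢)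

include hfree in
theorem opClass_mem_of_syzygies_mem {V : Type u} [AddCommGroup V]
    [Module (MvPolynomial (Fin n) k) V] [Module.Finite (MvPolynomial (Fin n) k) V]
    {ζ : V →ₗ[MvPolynomial (Fin n) k] V} (hζ : IsSqrt g ζ) {r : ℕ} {z : Fin r → V}
    (hz : Submodule.span (MvPolynomial (Fin n) k) (Set.range z) = ⊤)
    (hsyz : opClass _ (restrict_isSqrt (freeOp_isSqrt g)
      fun _ => freeOp_mem_syzygies hζ (z := z)) ∈ 𝒢) : opClass ζ hζ ∈ 𝒢 :=
  (AddSubgroup.add_mem_cancel_left 𝒢 hsyz).1 (opClass_freeOp_eq_syzygies_add hζ hz ▸ hfree r)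

include hgP hg hfree hfilt in
-- Hilbert's syzygy theorem: passing to syzygies lengthens the regular sequence by one.
theorem GradedSqrt.IsDehomogenization.opClass_mem (c : ℕ) {j : ℕ} (hj : j + c = n + 1) {N : Type u}
    [AddCommGroup N] [Module (MvPolynomial (Fin (n + 1)) k) N]
    [Module.Finite (MvPolynomial (Fin (n + 1)) k) N] {G : GradedSqrt gP N}
    (hN : IsRegularUpTo (X : Fin (n + 1) → MvPolynomial (Fin (n + 1)) k) j N)
    {V : Type u} [AddCommGroup V] [Module (MvPolynomial (Fin n) k) V]
    [Module.Finite (MvPolynomial (Fin n) k) V] {ζ : V →ₗ[MvPolynomial (Fin n) k] V}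
    (hζ : IsSqrt g ζ) {ρ : N →ₛₗ[dehom k n] V} (hρ : G.IsDehomogenization ζ ρ) :
    opClass ζ hζ ∈ 𝒢 := by
  induction c generalizing j N V with
  | zero =>
    obtain rfl : j = n + 1 := hj
    obtain ⟨r, w, ζ', hζ', hw, heq⟩ := hρ.exists_isFilteredOp hN hζ
    exact heq ▸ hfilt r w ζ' hζ' hw
  | succ c ih =>
    obtain ⟨r, w, z, hz, hspan⟩ := G.exists_homogeneous_generators
    have hspan' : Submodule.span (MvPolynomial (Fin n) k) (Set.range (ρ ∘ z)) = ⊤ := by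
      rw [← Fintype.range_linearCombination, LinearMap.range_eq_top] at hspan ⊢
      exact hρ.surjective_linearCombination hspan
    refine opClass_mem_of_syzygies_mem 𝒢 hfree hζ hspan' ?_
    exact ih (by lia) (hN.ker _ (linearCombination_elim_surjective hspan _)
      (isRegularUpTo_X_pi _)) _ (hρ.syzygies hg hgP hζ hz hspan)

/-- The submodule generated by the homogenizations of the elements of `L`, where the `i`-th basis
vector has degree `w i`. -/
noncomputable def homogenization {ι : Type*} [Finite ι] (w : ι → ℕ)
    (L : Submodule (MvPolynomial (Fin n) k) (ι → MvPolynomial (Fin n) k)) :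
    Submodule (MvPolynomial (Fin (n + 1)) k) (ι → MvPolynomial (Fin (n + 1)) k) where
  carrier := {v | ∀ d, dehomPi ι (freeProj w d v) ∈ L}
  zero_mem' d := by simp
  add_mem' ha hb d := by
    rw [map_add, map_add]
    exact L.add_mem (ha d) (hb d)
  smul_mem' c v hv d := by
    rw [← sum_range_homogeneousComponent c (Nat.lt_succ_self _), Finset.sum_smul, map_sum, map_sum]
    refine Submodule.sum_mem _ fun e _ => ?_
    rw [freeProj_homogeneous_smul w (homogeneousComponent_isHomogeneous _ _)]
    split_ifs
    · rw [LinearMap.map_smulₛₗ]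
      exact L.smul_mem _ (hv _)
    · simp

section Homogenization

variable {ι : Type*} [Finite ι] {w : ι → ℕ}
  {L : Submodule (MvPolynomial (Fin n) k) (ι → MvPolynomial (Fin n) k)}

theorem freeProj_mem_homogenization (d : ℕ) (v : ι → MvPolynomial (Fin (n + 1)) k)
    (hv : v ∈ homogenization w L) : freeProj w d v ∈ homogenization w L := by
  intro e
  rw [freeProj_freeProj]
  split_ifs
  · exact hv d
  · simp

theorem dehomPi_mem_of_mem_homogenization (v : ι → MvPolynomial (Fin (n + 1)) k)
    (hv : v ∈ homogenization w L) : dehomPi ι v ∈ L := by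
  obtain ⟨D, hD⟩ := exists_eq_sum_freeProj w v
  rw [hD, map_sum]
  exact Submodule.sum_mem _ fun d _ => hv d

theorem exists_mem_homogenization_dehomPi_eq {v : ι → MvPolynomial (Fin n) k} (hv : v ∈ L) :
    ∃ u ∈ homogenization w L, dehomPi ι u = v := by
  obtain ⟨D, hD⟩ : ∃ D, ∀ a, w a + (v a).totalDegree ≤ D := by
    cases nonempty_fintype ι
    exact ⟨∑ a, (w a + (v a).totalDegree), fun a =>
      Finset.single_le_sum (f := fun a => w a + (v a).totalDegree) (by simp) (Finset.mem_univ a)⟩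
  choose u hu huv using fun a => exists_homogeneous_dehom_eq (k := k) (Nat.le_sub_of_add_le' (hD a))
  have hdehom : dehomPi ι u = v := funext huv
  refine ⟨u, fun d => ?_, hdehom⟩
  have hproj : freeProj w d u = if d = D then u else 0 := by
    ext a : 1
    have hwD := hD a
    rw [freeProj_apply, homogeneousComponent_of_mem ((mem_homogeneousSubmodule _ _).2 (hu a)),
      ← ite_and, ite_apply]
    exact if_congr (by lia) rfl rfl
  rw [hproj]
  split_ifs
  · rwa [hdehom]
  · simp

theorem mem_homogenization_of_X_sub_one_smul_mem {u : ι → MvPolynomial (Fin (n + 1)) k}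
    (hu : (X 0 - 1 : MvPolynomial (Fin (n + 1)) k) • u ∈ homogenization w L) :
    u ∈ homogenization w L := by
  intro d
  have hstep := hu d
  rw [sub_smul, one_smul, map_sub, map_sub,
    freeProj_homogeneous_smul w (isHomogeneous_X k _)] at hstep
  induction d with
  | zero => simpa using hstep
  | succ d ih =>
    have hd := hu d
    rw [sub_smul, one_smul, map_sub, map_sub,
      freeProj_homogeneous_smul w (isHomogeneous_X k _)] at hd
    rw [if_pos (by lia), LinearMap.map_smulₛₗ, dehom_X_zero, one_smul,
      Nat.add_sub_cancel] at hstep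
    simpa using L.sub_mem (ih hd) hstep

end Homogenization

include hgP hg in
theorem freeOp_mem_homogenization {ι : Type*} [Finite ι] {w : ι → ℕ}
    {L : Submodule (MvPolynomial (Fin n) k) (ι ⊕ ι → MvPolynomial (Fin n) k)}
    (hL : ∀ v ∈ L, freeOp g ι v ∈ L) (v : ι ⊕ ι → MvPolynomial (Fin (n + 1)) k)
    (hv : v ∈ homogenization (Sum.elim w (w + 1)) L) :
    freeOp gP ι v ∈ homogenization (Sum.elim w (w + 1)) L := by
  rintro (_ | d)
  · rw [freeProj_zero_freeOp hgP, map_zero]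
    exact L.zero_mem
  · rw [freeProj_freeOp hgP, dehomPi_freeOp, hg]
    exact hL _ (hv d)

theorem isDehomogenization_homogenization {ι : Type} [Finite ι] (w : ι → ℕ)
    {L : Submodule (MvPolynomial (Fin n) k) (ι ⊕ ι → MvPolynomial (Fin n) k)}
    (hL : ∀ v ∈ L, freeOp g ι v ∈ L) :
    ((GradedSqrt.free hgP w).sub _ freeProj_mem_homogenization
      (freeOp_mem_homogenization hgP hg hL)).IsDehomogenization ((freeOp g ι).restrict hL)
      (dehomRestrict dehomPi_mem_of_mem_homogenization) where
  surjective := by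
    rintro ⟨v, hv⟩
    obtain ⟨u, hu, huv⟩ := exists_mem_homogenization_dehomPi_eq hv
    exact ⟨⟨u, hu⟩, Subtype.ext huv⟩
  exists_of_map_eq_zero := by
    rintro ⟨u, hu⟩ h
    obtain ⟨u', rfl⟩ :=
      exists_eq_X_sub_one_smul_of_dehomPi_eq_zero (congrArg Subtype.val h : dehomPi _ u = 0)
    exact ⟨⟨u', mem_homogenization_of_X_sub_one_smul_mem hu⟩, rfl⟩
  map_op u := Subtype.ext ((dehomPi_freeOp gP u.1).trans (by rw [hg]; rfl))

include hgP hg hfree hfilt in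
theorem opClass_mem_of_isFilteredOp_mem {V : Type u} [AddCommGroup V]
    [Module (MvPolynomial (Fin n) k) V] [Module.Finite (MvPolynomial (Fin n) k) V]
    {ζ : V →ₗ[MvPolynomial (Fin n) k] V} (hζ : IsSqrt g ζ) : opClass ζ hζ ∈ 𝒢 := by
  obtain ⟨r, z, hz⟩ := Module.Finite.exists_fin (R := MvPolynomial (Fin n) k) (M := V)
  refine opClass_mem_of_syzygies_mem 𝒢 hfree hζ hz ?_
  exact (isDehomogenization_homogenization hgP hg 0
    fun _ => freeOp_mem_syzygies hζ).opClass_mem hgP hg 𝒢 hfree hfilt (n + 1) (zero_add _)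
    (fun i hi => absurd hi (Nat.not_lt_zero _)) _

end Generation

end Filtered

/-! ### Reduction to operators with entries of degree at most one -/

section SplitOp

variable {S V V' : Type*} [CommRing S] {g : S} [AddCommGroup V] [AddCommGroup V'] [Module S V]
  [Module S V'] {ζ : V →ₗ[S] V}

theorem map_eq_comp_section {β : V →ₗ[S] V'} {s : V' →ₗ[S] V} (hs : Function.RightInverse s β)
    (hker : ∀ v, β v = 0 → β (ζ v) = 0) (v : V) : β (ζ v) = (β ∘ₗ ζ ∘ₗ s) (β v) := by
  have hv := hker (v - s (β v)) (by rw [map_sub, hs, sub_self])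
  rwa [map_sub, map_sub, sub_eq_zero] at hv

theorem IsSqrt.comp_section (hζ : IsSqrt g ζ) {β : V →ₗ[S] V'} {s : V' →ₗ[S] V}
    (hs : Function.RightInverse s β) (hker : ∀ v, β v = 0 → β (ζ v) = 0) :
    IsSqrt g (β ∘ₗ ζ ∘ₗ s) := fun v => by
  rw [← hs v, ← map_eq_comp_section hs hker, ← map_eq_comp_section hs hker, hζ, map_smul]

theorem map_comp_retraction {α : V' →ₗ[S] V} {s : V →ₗ[S] V'} (hs : Function.LeftInverse s α)
    (hstable : ∀ v, ζ (α v) ∈ LinearMap.range α) (v : V') : α ((s ∘ₗ ζ ∘ₗ α) v) = ζ (α v) := by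
  obtain ⟨w, hw⟩ := hstable v
  rw [LinearMap.comp_apply, LinearMap.comp_apply, ← hw, hs]

theorem IsSqrt.comp_retraction (hζ : IsSqrt g ζ) {α : V' →ₗ[S] V} {s : V →ₗ[S] V'}
    (hs : Function.LeftInverse s α) (hstable : ∀ v, ζ (α v) ∈ LinearMap.range α) :
    IsSqrt g (s ∘ₗ ζ ∘ₗ α) := fun v => hs.injective <| by
  rw [map_comp_retraction hs hstable, map_comp_retraction hs hstable, hζ, map_smul]

end SplitOp

section ExtendZero

variable (S : Type*) [CommRing S] {J : Type*} (p : J → Prop)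

/-- Extension by zero of functions on a subtype. -/
noncomputable def extendZero : ({a // p a} → S) →ₗ[S] (J → S) :=
  Function.ExtendByZero.linearMap S Subtype.val

/-- Restriction of functions to a subtype. -/
def restrictTo : (J → S) →ₗ[S] ({a // p a} → S) := LinearMap.funLeft S S Subtype.val

variable {S p}

@[simp]
theorem restrictTo_apply (v : J → S) (a : {a // p a}) : restrictTo S p v a = v a := rfl

theorem extendZero_apply_of_pos (v : {a // p a} → S) {j : J} (h : p j) :
    extendZero S p v j = v ⟨j, h⟩ :=
  Subtype.val_injective.extend_apply v 0 ⟨j, h⟩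

theorem extendZero_apply_of_neg (v : {a // p a} → S) {j : J} (h : ¬ p j) :
    extendZero S p v j = 0 :=
  Function.extend_apply' (f := (Subtype.val : {a // p a} → J)) v (0 : J → S) j
    fun ⟨a, ha⟩ => h (ha ▸ a.2)

theorem extendZero_single [DecidableEq J] (b : {a // p a}) :
    extendZero S p (Pi.single b 1) = Pi.single b.1 1 := by
  ext j
  by_cases h : p j
  · rw [extendZero_apply_of_pos _ h, Pi.single_apply, Pi.single_apply]
    simp only [Subtype.ext_iff]
  · rw [extendZero_apply_of_neg _ h, Pi.single_eq_of_ne (by rintro rfl; exact h b.2)]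

theorem restrictTo_extendZero (v : {a // p a} → S) : restrictTo S p (extendZero S p v) = v :=
  funext fun a => extendZero_apply_of_pos v a.2

theorem exact_extendZero_restrictTo :
    Function.Exact (extendZero S p) (restrictTo S fun a => ¬ p a) := by
  refine fun v => ⟨fun hv => ⟨restrictTo S p v, funext fun a => ?_⟩, ?_⟩
  · by_cases ha : p a
    · rw [extendZero_apply_of_pos _ ha, restrictTo_apply]
    · rw [extendZero_apply_of_neg _ ha]
      exact (congrFun hv ⟨a, ha⟩).symm
  · rintro ⟨u, rfl⟩
    exact funext fun a => extendZero_apply_of_neg u a.2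

end ExtendZero

section Eliminate

variable {S J : Type*} [CommRing S] (q : J → S) (c : S) (i j : J)

/-- The quotient of a free module by `q` and the `j`-th basis vector, when `c` is the inverse of
`q i`; the basis vectors other than the `i`-th and the `j`-th give a basis of this quotient. -/
def eliminate : (J → S) →ₗ[S] ({a // a ≠ i ∧ a ≠ j} → S) :=
  restrictTo S _ -
    LinearMap.toSpanSingleton S _ (fun a : {a // a ≠ i ∧ a ≠ j} => c * q a) ∘ₗ LinearMap.proj i

variable {q c i j}

theorem eliminate_apply (v : J → S) (a : {a // a ≠ i ∧ a ≠ j}) :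
    eliminate q c i j v a = v a - v i * (c * q a) := rfl

theorem eliminate_extendZero (v : {a // a ≠ i ∧ a ≠ j} → S) :
    eliminate q c i j (extendZero S _ v) = v := by
  ext a
  have hi : extendZero S _ v i = 0 := extendZero_apply_of_neg v (by simp)
  rw [eliminate_apply, extendZero_apply_of_pos v a.2, hi, zero_mul, sub_zero]

variable [DecidableEq J]

theorem linearCombination_single_apply (u : Unit ⊕ Unit → S) (a : J) :
    Fintype.linearCombination S (Sum.elim (fun _ : Unit => Pi.single j 1) fun _ : Unit => q) u a =
      (if a = j then u (Sum.inl ()) else 0) + u (Sum.inr ()) * q a := by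
  simp [Fintype.linearCombination_apply, Fintype.sum_sum_type, Pi.single_apply]

theorem exact_eliminate (hc : c * q i = 1) (hij : i ≠ j) :
    Function.Exact (Fintype.linearCombination S
      (Sum.elim (fun _ : Unit => Pi.single j 1) fun _ : Unit => q)) (eliminate q c i j) := by
  refine fun v => ⟨fun hv => ?_, ?_⟩
  · refine ⟨Sum.elim (fun _ => v j - v i * c * q j) fun _ => v i * c, funext fun a => ?_⟩
    rw [linearCombination_single_apply, Sum.elim_inl, Sum.elim_inr]
    obtain rfl | haj := eq_or_ne a j
    · rw [if_pos rfl, sub_add_cancel]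
    obtain rfl | hai := eq_or_ne a i
    · rw [if_neg haj, zero_add, mul_assoc, hc, mul_one]
    · have hva : v a = v i * (c * q a) := sub_eq_zero.1 (congrFun hv ⟨a, hai, haj⟩)
      rw [if_neg haj, zero_add, hva, mul_assoc]
  · rintro ⟨u, rfl⟩
    ext a
    rw [eliminate_apply, linearCombination_single_apply, linearCombination_single_apply,
      if_neg a.2.2, if_neg hij, Pi.zero_apply]
    linear_combination -u (Sum.inr ()) * q a * hc

theorem linearCombination_single_injective (hc : c * q i = 1) (hij : i ≠ j) :
    Function.Injective (Fintype.linearCombination S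
      (Sum.elim (fun _ : Unit => (Pi.single j 1 : J → S)) fun _ : Unit => q)) := by
  refine (injective_iff_map_eq_zero _).2 fun u hu => ?_
  have hi := congrFun hu i
  have hj := congrFun hu j
  rw [linearCombination_single_apply, Pi.zero_apply] at hi hj
  rw [if_neg hij, zero_add] at hi
  have hinr : u (Sum.inr ()) = 0 := by linear_combination c * hi - u (Sum.inr ()) * hc
  rw [if_pos rfl, hinr, zero_mul, add_zero] at hj
  ext (⟨⟩ | ⟨⟩) : 1
  exacts [hj, hinr]

end Eliminate

section FilteredInduction

variable {k : Type u} [Field k] {n : ℕ} {g : MvPolynomial (Fin n) k}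

theorem totalDegree_sub_add_le {p q : MvPolynomial (Fin n) k} {x y : ℕ}
    (hp : p ≠ 0 → p.totalDegree + x ≤ y) (hq : q ≠ 0 → q.totalDegree + x ≤ y) (h : p - q ≠ 0) :
    (p - q).totalDegree + x ≤ y := by
  obtain rfl | hp0 := eq_or_ne p 0
  · rw [zero_sub, totalDegree_neg]
    exact hq (by simpa using h)
  obtain rfl | hq0 := eq_or_ne q 0
  · rw [sub_zero]
    exact hp hp0
  have hpq := totalDegree_sub p q
  have := hp hp0
  have := hq hq0
  lia

variable {J : Type} [DecidableEq J] {w : J → ℕ}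
  {ζ : (J → MvPolynomial (Fin n) k) →ₗ[MvPolynomial (Fin n) k] (J → MvPolynomial (Fin n) k)}

theorem IsFilteredOp.exists_eq_C (hw : IsFilteredOp w ζ) {i j : J} (hij : w i = w j + 1)
    (hne : ζ (Pi.single j 1) i ≠ 0) :
    ∃ c : k, c ≠ 0 ∧ ζ (Pi.single j 1) i = C c := by
  have hdeg := hw i j hne
  have hC := totalDegree_eq_zero_iff_eq_C.1 (show (ζ (Pi.single j 1) i).totalDegree = 0 by lia)
  exact ⟨_, fun h0 => hne (by rw [hC, h0, C_0]), hC⟩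

theorem IsFilteredOp.comp_eliminate (hw : IsFilteredOp w ζ) {i j : J} (hij : w i = w j + 1)
    (c : k) : IsFilteredOp (fun a : {a // a ≠ i ∧ a ≠ j} => w a)
      (eliminate (ζ (Pi.single j 1)) (C c) i j ∘ₗ ζ ∘ₗ extendZero _ _) := by
  intro a b
  rw [LinearMap.comp_apply, LinearMap.comp_apply, extendZero_single, eliminate_apply]
  refine totalDegree_sub_add_le (hw a b) fun hne => ?_
  have hib := hw i b (left_ne_zero_of_mul hne)
  have haj := hw a j (right_ne_zero_of_mul (right_ne_zero_of_mul hne))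
  have hmul := totalDegree_mul (ζ (Pi.single b.1 1) i) (C c * ζ (Pi.single j 1) a)
  have hmul' := totalDegree_mul (C c) (ζ (Pi.single j 1) a.1)
  rw [totalDegree_C] at hmul'
  lia

variable [Finite J]

theorem IsFilteredOp.exists_opClass_eq_free_add (hw : IsFilteredOp w ζ) (hζ : IsSqrt g ζ) {i j : J}
    (hij : w i = w j + 1) (hne : ζ (Pi.single j 1) i ≠ 0) :
    ∃ (ζ' : ({a // a ≠ i ∧ a ≠ j} → MvPolynomial (Fin n) k) →ₗ[MvPolynomial (Fin n) k] _)
      (h : IsSqrt g ζ'), IsFilteredOp (fun a : {a // a ≠ i ∧ a ≠ j} => w a) ζ' ∧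
        opClass ζ hζ = opClass (freeOp g Unit) (freeOp_isSqrt g) + opClass ζ' h := by
  obtain ⟨c, hc0, hc⟩ := hw.exists_eq_C hij hne
  have hne' : i ≠ j := fun h => by simp [h] at hij
  have hinv : C c⁻¹ * ζ (Pi.single j 1) i = 1 := by
    rw [hc, ← C_mul, inv_mul_cancel₀ hc0, C_1]
  have hexact := exact_eliminate hinv hne'
  have hintertwine := linearCombination_freeOp hζ fun _ : Unit => Pi.single j 1
  have hker (v) (hv : eliminate (ζ (Pi.single j 1)) (C c⁻¹) i j v = 0) :
      eliminate (ζ (Pi.single j 1)) (C c⁻¹) i j (ζ v) = 0 := by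
    obtain ⟨u, rfl⟩ := (hexact v).1 hv
    exact (hexact _).2 ⟨_, hintertwine u⟩
  have hs : Function.RightInverse (extendZero _ _) (eliminate (ζ (Pi.single j 1)) (C c⁻¹) i j) :=
    eliminate_extendZero
  exact ⟨_, hζ.comp_section hs hker, hw.comp_eliminate hij _,
    opClass_exact _ _ _ _ _ hintertwine (map_eq_comp_section hs hker)
      (linearCombination_single_injective hinv hne') hs.surjective hexact⟩

theorem IsFilteredOp.exists_opClass_eq_linear_add (hw : IsFilteredOp w ζ) (hζ : IsSqrt g ζ) {d : ℕ}
    (hblock : ∀ i j, w j = d → w i ≠ d → ζ (Pi.single j 1) i = 0) :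
    ∃ (ζ₁ : ({a // w a = d} → MvPolynomial (Fin n) k) →ₗ[MvPolynomial (Fin n) k] _)
      (h₁ : IsSqrt g ζ₁)
      (ζ₂ : ({a // ¬ w a = d} → MvPolynomial (Fin n) k) →ₗ[MvPolynomial (Fin n) k] _)
      (h₂ : IsSqrt g ζ₂), (∀ i j, (ζ₁ (Pi.single j 1) i).totalDegree ≤ 1) ∧
        IsFilteredOp (fun a : {a // ¬ w a = d} => w a) ζ₂ ∧
        opClass ζ hζ = opClass ζ₁ h₁ + opClass ζ₂ h₂ := by
  let S := MvPolynomial (Fin n) k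
  have hzero : restrictTo S (fun a => ¬ w a = d) ∘ₗ ζ ∘ₗ extendZero S (fun a => w a = d) = 0 := by
    refine LinearMap.pi_ext' fun b => LinearMap.ext_ring (funext fun a => ?_)
    simp only [LinearMap.comp_apply, LinearMap.single_apply, extendZero_single]
    exact hblock _ _ b.2 a.2
  have hexact := exact_extendZero_restrictTo (S := S) (p := fun a => w a = d)
  have hstable (v) := (hexact _).1 (LinearMap.congr_fun hzero v)
  have hker (v) (hv : restrictTo S (fun a => ¬ w a = d) v = 0) :
      restrictTo S (fun a => ¬ w a = d) (ζ v) = 0 := by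
    obtain ⟨u, rfl⟩ := (hexact v).1 hv
    exact LinearMap.congr_fun hzero u
  have hs₁ : Function.LeftInverse (restrictTo S fun a => w a = d) (extendZero S _) :=
    restrictTo_extendZero
  have hs₂ : Function.RightInverse (extendZero S _) (restrictTo S fun a => ¬ w a = d) :=
    restrictTo_extendZero
  refine ⟨_, hζ.comp_retraction hs₁ hstable, _, hζ.comp_section hs₂ hker, fun a b => ?_,
    fun a b => ?_, opClass_exact _ _ _ _ _ (map_comp_retraction hs₁ hstable)
      (map_eq_comp_section hs₂ hker) hs₁.injective hs₂.surjective hexact⟩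
  · rw [LinearMap.comp_apply, LinearMap.comp_apply, extendZero_single, restrictTo_apply]
    by_cases h0 : ζ (Pi.single b.1 1) a.1 = 0
    · rw [h0, totalDegree_zero]
      exact zero_le_one
    · have hdeg := hw a.1 b.1 h0
      rw [a.2, b.2, add_comm d] at hdeg
      exact Nat.le_of_add_le_add_right hdeg
  · rw [LinearMap.comp_apply, LinearMap.comp_apply, extendZero_single]
    exact hw a b

end FilteredInduction

theorem opClass_mem_of_linear_mem {k : Type u} [Field k] {n : ℕ} {g : MvPolynomial (Fin n) k}
    (𝒢 : AddSubgroup (GGroup (AdjoinSqrt g)))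
    (hfree : opClass (freeOp g Unit) (freeOp_isSqrt g) ∈ 𝒢)
    (hlin : ∀ (J : Type) [Finite J] [DecidableEq J]
      (ζ : (J → MvPolynomial (Fin n) k) →ₗ[MvPolynomial (Fin n) k] _) (h : IsSqrt g ζ),
      (∀ i j, (ζ (Pi.single j 1) i).totalDegree ≤ 1) → opClass ζ h ∈ 𝒢)
    {J : Type} [Finite J] [DecidableEq J] (w : J → ℕ)
    (ζ : (J → MvPolynomial (Fin n) k) →ₗ[MvPolynomial (Fin n) k] _) (hζ : IsSqrt g ζ)
    (hw : IsFilteredOp w ζ) : opClass ζ hζ ∈ 𝒢 := by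
  induction hcard : Nat.card J using Nat.strong_induction_on generalizing J with
  | _ N ih =>
  rcases isEmpty_or_nonempty J with hJ | hJ
  · rw [opClass_of_subsingleton]
    exact 𝒢.zero_mem
  subst hcard
  obtain ⟨j₀, hmin⟩ := Finite.exists_min w
  by_cases hcase : ∃ i j, w j = w j₀ ∧ w i = w j + 1 ∧ ζ (Pi.single j 1) i ≠ 0
  · obtain ⟨i, j, -, hij, hne⟩ := hcase
    obtain ⟨ζ', hζ', hw', heq⟩ := hw.exists_opClass_eq_free_add hζ hij hne
    exact heq ▸ 𝒢.add_mem hfree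
      (ih _ (Finite.card_subtype_lt (x := i) (by simp)) _ ζ' hζ' hw' rfl)
  · have hblock (i j) (hj : w j = w j₀) (hi : w i ≠ w j₀) : ζ (Pi.single j 1) i = 0 := by
      by_contra hne
      have hdeg := hw i j hne
      have hi' := hmin i
      exact hcase ⟨i, j, hj, by lia, hne⟩
    obtain ⟨ζ₁, h₁, ζ₂, h₂, hdeg, hw₂, heq⟩ := hw.exists_opClass_eq_linear_add hζ hblock
    exact heq ▸ 𝒢.add_mem (hlin _ ζ₁ h₁ hdeg)
      (ih _ (Finite.card_subtype_lt (x := j₀) (by simp)) _ ζ₂ h₂ hw₂ rfl)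

/-! ### Representations of diagonal Clifford algebras -/

open TensorProduct

section CliffordFamily

variable {ι R : Type*} [CommRing R]

/-- The elements `a i` satisfy the defining relations of the Clifford algebra of the diagonal
quadratic form `∑ c i * x i ^ 2`. For `E = Module.End R W` this is a representation of that
algebra on `W`. -/
structure IsCliffordFamily {E : Type*} [Ring E] [Algebra R E] (c : ι → R) (a : ι → E) : Prop where
  sq : ∀ i, a i * a i = algebraMap R E (c i)
  anti : ∀ i j, i ≠ j → a i * a j + a j * a i = 0

namespace IsCliffordFamily

variable {E : Type*} [Ring E] [Algebra R E] {c : ι → R} {a : ι → E}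

theorem map {S E' : Type*} [CommRing S] [Algebra R S] [Ring E'] [Algebra R E'] [Algebra S E']
    [IsScalarTower R S E'] (h : IsCliffordFamily c a) (f : E →ₐ[R] E') :
    IsCliffordFamily (algebraMap R S ∘ c) (f ∘ a) where
  sq i := by
    rw [Function.comp_apply, Function.comp_apply, ← map_mul, h.sq, f.commutes,
      IsScalarTower.algebraMap_apply R S E']
  anti i j hij := by
    simp only [Function.comp_apply, ← map_mul, ← map_add, h.anti i j hij, map_zero]

theorem sum_smul_mul_self [Fintype ι] (h : IsCliffordFamily c a) (x : ι → R) :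
    (∑ i, x i • a i) * ∑ i, x i • a i = algebraMap R E (∑ i, c i * x i ^ 2) := by
  classical
  suffices ∀ s : Finset ι, (∑ i ∈ s, x i • a i) * ∑ i ∈ s, x i • a i =
      algebraMap R E (∑ i ∈ s, c i * x i ^ 2) from this _
  intro s
  induction s using Finset.induction_on with
  | empty => simp
  | insert i s hi ih =>
    have hsq : x i • a i * x i • a i = algebraMap R E (c i * x i ^ 2) := by
      rw [smul_mul_smul_comm, h.sq, Algebra.smul_def, ← map_mul]
      ring_nf
    have hcross : x i • a i * (∑ j ∈ s, x j • a j) + (∑ j ∈ s, x j • a j) * x i • a i = 0 := by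
      rw [Finset.mul_sum, Finset.sum_mul, ← Finset.sum_add_distrib]
      refine Finset.sum_eq_zero fun j hj => ?_
      rw [smul_mul_smul_comm, smul_mul_smul_comm, mul_comm (x j), ← smul_add,
        h.anti i j (by rintro rfl; exact hi hj), smul_zero]
    rw [Finset.sum_insert hi, Finset.sum_insert hi, map_add, add_mul, mul_add, mul_add, hsq, ih,
      add_assoc, ← add_assoc (_ * _) (_ * _) (algebraMap _ _ _), hcross, zero_add]

theorem of_sum_smul_mul_self [Fintype ι]
    (h : ∀ x : ι → R, (∑ i, x i • a i) * ∑ i, x i • a i = algebraMap R E (∑ i, c i * x i ^ 2)) :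
    IsCliffordFamily c a := by
  classical
  have hsq (i) : a i * a i = algebraMap R E (c i) := by
    simpa [Pi.single_apply] using h (Pi.single i 1)
  refine ⟨hsq, fun i j hij => ?_⟩
  have hsum := h (Pi.single i 1 + Pi.single j 1)
  have hform : ∑ l, c l * (Pi.single i 1 + Pi.single j 1 : ι → R) l ^ 2 = c i + c j := by
    have hterm (l) : c l * (Pi.single i 1 + Pi.single j 1 : ι → R) l ^ 2 =
        (if l = i then c l else 0) + if l = j then c l else 0 := by
      obtain rfl | hl := eq_or_ne l i
      · simp [hij]
      · simp [hl, Pi.single_apply]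
    simp_rw [hterm, Finset.sum_add_distrib, Finset.sum_ite_eq', Finset.mem_univ, if_true]
  have hlin : ∑ l, (Pi.single i 1 + Pi.single j 1 : ι → R) l • a l = a i + a j := by
    simp [add_smul, Finset.sum_add_distrib, Pi.single_apply]
  rw [hlin, hform, map_add, ← hsq, ← hsq] at hsum
  have hexpand : a i * a j + a j * a i =
      (a i + a j) * (a i + a j) - (a i * a i + a j * a j) := by noncomm_ring
  rw [hexpand, hsum, sub_self]

-- The relations for `x` and `-x` separate the terms of degree zero, one and two in `x`.
theorem of_affine [Fintype ι] (h2 : IsUnit (2 : R)) {a₀ : E}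
    (h : ∀ x : ι → R, (a₀ + ∑ i, x i • a i) * (a₀ + ∑ i, x i • a i) =
      algebraMap R E (∑ i, c i * x i ^ 2)) :
    a₀ * a₀ = 0 ∧ (∀ i, a₀ * a i + a i * a₀ = 0) ∧ IsCliffordFamily c a := by
  classical
  have h0 : a₀ * a₀ = 0 := by simpa using h 0
  have hanti (x : ι → R) : a₀ * (∑ i, x i • a i) + (∑ i, x i • a i) * a₀ = 0 := by
    refine h2.smul_left_cancel.1 ?_
    have hneg := h (-x)
    simp only [Pi.neg_apply, neg_smul, Finset.sum_neg_distrib, neg_sq] at hneg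
    have hdiff := sub_eq_zero.2 ((h x).trans hneg.symm)
    rw [smul_zero, ← hdiff, two_smul]
    noncomm_ring
  refine ⟨h0, fun i => by simpa [Pi.single_apply] using hanti (Pi.single i 1),
    of_sum_smul_mul_self fun x => ?_⟩
  rw [← h x, mul_add, add_mul, add_mul, h0, zero_add, ← add_assoc, add_comm (_ * a₀), hanti,
    zero_add]

end IsCliffordFamily

end CliffordFamily

section Representation

variable {k : Type u} [Field k] {m : ℕ}

/-- The diagonal quadratic form `∑ c i * X i ^ 2`. -/
noncomputable def diagForm (c : Fin m → k) : MvPolynomial (Fin m) k := ∑ i, C (c i) * X i ^ 2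

theorem diagForm_isHomogeneous (c : Fin m → k) : (diagForm c).IsHomogeneous 2 :=
  IsHomogeneous.sum _ _ _ fun i _ => (isHomogeneous_X_pow i 2).C_mul (c i)

section

variable {W W' : Type*} [AddCommGroup W] [Module k W] [AddCommGroup W'] [Module k W']

/-- The generic element `∑ X i • A i` acting on `k[X] ⊗ W`. If the `A i` represent the Clifford
algebra of `diagForm c` on `W`, this is a square root of `diagForm c`. -/
noncomputable def cliffordOp (A : Fin m → Module.End k W) :
    Module.End (MvPolynomial (Fin m) k) (MvPolynomial (Fin m) k ⊗[k] W) :=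
  ∑ i, (X i : MvPolynomial (Fin m) k) • (A i).baseChange (MvPolynomial (Fin m) k)

theorem cliffordOp_tmul (A : Fin m → Module.End k W) (s : MvPolynomial (Fin m) k) (w : W) :
    cliffordOp A (s ⊗ₜ w) = ∑ i, (X i * s) ⊗ₜ A i w := by
  simp [cliffordOp, LinearMap.sum_apply, smul_tmul']

theorem cliffordOp_isSqrt {c : Fin m → k} {A : Fin m → Module.End k W}
    (h : IsCliffordFamily c A) : IsSqrt (diagForm c) (cliffordOp A) := by
  have hbase := h.map (S := MvPolynomial (Fin m) k)
    (E' := Module.End (MvPolynomial (Fin m) k) (MvPolynomial (Fin m) k ⊗[k] W))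
    (Module.End.baseChangeHom k _ W)
  have hmul : cliffordOp A * cliffordOp A = algebraMap _ _ (diagForm c) :=
    hbase.sum_smul_mul_self X
  exact LinearMap.congr_fun hmul

theorem baseChange_cliffordOp {A : Fin m → Module.End k W} {A' : Fin m → Module.End k W'}
    (f : W →ₗ[k] W') (hf : ∀ i w, f (A i w) = A' i (f w)) (v : MvPolynomial (Fin m) k ⊗[k] W) :
    f.baseChange (MvPolynomial (Fin m) k) (cliffordOp A v) =
      cliffordOp A' (f.baseChange (MvPolynomial (Fin m) k) v) := by
  induction v with
  | zero => simp only [map_zero]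
  | add x y hx hy => simp only [map_add, hx, hy]
  | tmul s w => simp only [cliffordOp_tmul, map_sum, LinearMap.baseChange_tmul, hf]

end

section repClass

variable {W W₁ W₂ W₃ : Type u} [AddCommGroup W] [Module k W] [AddCommGroup W₁] [Module k W₁]
  [AddCommGroup W₂] [Module k W₂] [AddCommGroup W₃] [Module k W₃] {c : Fin m → k}
  {A : Fin m → Module.End k W} {A₁ : Fin m → Module.End k W₁} {A₂ : Fin m → Module.End k W₂}
  {A₃ : Fin m → Module.End k W₃}

/-- The class in the Grothendieck group of the module attached to a representation of the Clifford
algebra. -/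
noncomputable def repClass [Module.Finite k W] (h : IsCliffordFamily c A) :
    GGroup (AdjoinSqrt (diagForm c)) := opClass (cliffordOp A) (cliffordOp_isSqrt h)

theorem repClass_exact [Module.Finite k W₁] [Module.Finite k W₂] [Module.Finite k W₃]
    (h₁ : IsCliffordFamily c A₁) (h₂ : IsCliffordFamily c A₂) (h₃ : IsCliffordFamily c A₃)
    (a : W₁ →ₗ[k] W₂) (b : W₂ →ₗ[k] W₃) (ha : ∀ i w, a (A₁ i w) = A₂ i (a w))
    (hb : ∀ i w, b (A₂ i w) = A₃ i (b w)) (hinj : Function.Injective a)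
    (hsurj : Function.Surjective b) (hex : Function.Exact a b) :
    repClass h₂ = repClass h₁ + repClass h₃ :=
  opClass_exact _ _ _ (a.baseChange _) (b.baseChange _) (baseChange_cliffordOp a ha)
    (baseChange_cliffordOp b hb) (Module.Flat.lTensor_preserves_injective_linearMap a hinj)
    (LinearMap.lTensor_surjective _ hsurj) (lTensor_exact _ hex hsurj)

theorem repClass_congr [Module.Finite k W₁] [Module.Finite k W₂] (h₁ : IsCliffordFamily c A₁)
    (h₂ : IsCliffordFamily c A₂) (e : W₁ ≃ₗ[k] W₂) (he : ∀ i w, e (A₁ i w) = A₂ i (e w)) :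
    repClass h₁ = repClass h₂ :=
  opClass_congr _ _ (e.baseChange k _ W₁ W₂) (baseChange_cliffordOp e.toLinearMap he)

end repClass

section Stable

variable {ι R S W : Type*} [CommRing R] [CommRing S] [Algebra R S] [AddCommGroup W] [Module R W]
  [Module S W] [IsScalarTower R S W] {c : ι → R} {A : ι → Module.End S W} {K : Submodule S W}

theorem IsCliffordFamily.restrict (h : IsCliffordFamily c A)
    (hK : ∀ i, ∀ w ∈ K, A i w ∈ K) : IsCliffordFamily c fun i => (A i).restrict (hK i) where
  sq i := LinearMap.ext fun w => Subtype.ext (LinearMap.congr_fun (h.sq i) w)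
  anti i j hij := LinearMap.ext fun w => Subtype.ext (LinearMap.congr_fun (h.anti i j hij) w)

theorem IsCliffordFamily.mapQ (h : IsCliffordFamily c A) (hK : ∀ i, K ≤ K.comap (A i)) :
    IsCliffordFamily c fun i => (K.mapQ K (A i) (hK i) : Module.End S (W ⧸ K)) where
  sq i := Submodule.linearMap_qext _
    (LinearMap.ext fun w => congrArg K.mkQ (LinearMap.congr_fun (h.sq i) w))
  anti i j hij := Submodule.linearMap_qext _
    (LinearMap.ext fun w => congrArg K.mkQ (LinearMap.congr_fun (h.anti i j hij) w))

theorem IsCliffordFamily.restrictScalars (h : IsCliffordFamily c A) :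
    IsCliffordFamily c fun i => ((A i).restrictScalars R : Module.End R W) where
  sq i := LinearMap.ext fun w => LinearMap.congr_fun (h.sq i) w
  anti i j hij := LinearMap.ext fun w => LinearMap.congr_fun (h.anti i j hij) w

end Stable

end Representation

section Affine

variable {k : Type u} [Field k] {m : ℕ}

section

variable {W : Type*} [AddCommGroup W] [Module k W]

/-- The operator `A₀ + ∑ X i • A i` on `k[X] ⊗ W`. -/
noncomputable def affineOp (A₀ : Module.End k W) (A : Fin m → Module.End k W) :
    Module.End (MvPolynomial (Fin m) k) (MvPolynomial (Fin m) k ⊗[k] W) :=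
  A₀.baseChange (MvPolynomial (Fin m) k) + cliffordOp A

theorem affineOp_tmul (A₀ : Module.End k W) (A : Fin m → Module.End k W)
    (s : MvPolynomial (Fin m) k) (w : W) :
    affineOp A₀ A (s ⊗ₜ w) = s ⊗ₜ A₀ w + ∑ i, (X i * s) ⊗ₜ A i w := by
  simp only [affineOp, LinearMap.add_apply, LinearMap.baseChange_tmul, cliffordOp_tmul]

/-- Evaluation of polynomials with coefficients in `W` at a point. -/
noncomputable def evalTensor (x : Fin m → k) : MvPolynomial (Fin m) k ⊗[k] W →ₗ[k] W :=
  TensorProduct.lift ((LinearMap.lsmul k W).comp (aeval x).toLinearMap)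

@[simp]
theorem evalTensor_tmul (x : Fin m → k) (s : MvPolynomial (Fin m) k) (w : W) :
    evalTensor x (s ⊗ₜ w) = eval x s • w := by
  simp [evalTensor, aeval_eq_eval]

theorem evalTensor_affineOp (x : Fin m → k) (A₀ : Module.End k W) (A : Fin m → Module.End k W)
    (v : MvPolynomial (Fin m) k ⊗[k] W) :
    evalTensor x (affineOp A₀ A v) = (A₀ + ∑ i, x i • A i) (evalTensor x v) := by
  induction v with
  | zero => simp only [map_zero]
  | add a b ha hb => simp only [map_add, ha, hb]
  | tmul s w =>
    simp [affineOp_tmul, LinearMap.sum_apply, Finset.smul_sum, smul_smul, mul_comm]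

theorem affineOp_relations (h2 : (2 : k) ≠ 0) {c : Fin m → k} {A₀ : Module.End k W}
    {A : Fin m → Module.End k W} (h : IsSqrt (diagForm c) (affineOp A₀ A)) :
    A₀ * A₀ = 0 ∧ (∀ i, A₀ * A i + A i * A₀ = 0) ∧ IsCliffordFamily c A := by
  refine IsCliffordFamily.of_affine h2.isUnit fun x => LinearMap.ext fun w => ?_
  have hw := congrArg (evalTensor x) (h (1 ⊗ₜ w))
  rw [evalTensor_affineOp, evalTensor_affineOp, smul_tmul'] at hw
  rw [Module.algebraMap_end_apply]
  simpa [diagForm] using hw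

end

variable {c : Fin m → k}

theorem exists_opClass_affineOp_eq {W : Type u} [AddCommGroup W] [Module k W] [Module.Finite k W]
    (h2 : (2 : k) ≠ 0) {A₀ : Module.End k W} {A : Fin m → Module.End k W}
    (h : IsSqrt (diagForm c) (affineOp A₀ A)) :
    ∃ (A₁ : Fin m → Module.End k (LinearMap.ker A₀)) (h₁ : IsCliffordFamily c A₁)
      (A₃ : Fin m → Module.End k (W ⧸ LinearMap.ker A₀)) (h₃ : IsCliffordFamily c A₃),
      opClass (affineOp A₀ A) h = repClass h₁ + repClass h₃ := by
  obtain ⟨hsq, hanti, hA⟩ := affineOp_relations h2 h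
  set K := LinearMap.ker A₀ with hK
  have hstable (i) (w) (hw : w ∈ K) : A i w ∈ K := by
    have hw' := LinearMap.congr_fun (hanti i) w
    rw [LinearMap.add_apply, Module.End.mul_apply, Module.End.mul_apply, LinearMap.mem_ker.1 hw,
      map_zero, add_zero] at hw'
    exact hw'
  refine ⟨_, hA.restrict hstable, _, hA.mapQ hstable,
    opClass_exact (cliffordOp_isSqrt (hA.restrict hstable)) h (cliffordOp_isSqrt (hA.mapQ hstable))
    (K.subtype.baseChange _) (K.mkQ.baseChange _) (fun v => ?_) (fun v => ?_)
    (Module.Flat.lTensor_preserves_injective_linearMap _ K.injective_subtype)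
    (LinearMap.lTensor_surjective _ K.mkQ_surjective)
    (lTensor_exact _ (LinearMap.exact_subtype_mkQ K) K.mkQ_surjective)⟩
  · have hzero : A₀.baseChange (MvPolynomial (Fin m) k) (K.subtype.baseChange _ v) = 0 := by
      rw [← LinearMap.comp_apply, ← LinearMap.baseChange_comp, LinearMap.comp_ker_subtype,
        LinearMap.baseChange_zero, LinearMap.zero_apply]
    rw [baseChange_cliffordOp (A' := A) K.subtype fun _ _ => rfl, affineOp, LinearMap.add_apply,
      hzero, zero_add]
  · have hrange : K.mkQ ∘ₗ A₀ = 0 := by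
      rw [← LinearMap.range_le_ker_iff, Submodule.ker_mkQ, hK, LinearMap.range_le_ker_iff]
      exact hsq
    have hzero : K.mkQ.baseChange _ (A₀.baseChange (MvPolynomial (Fin m) k) v) = 0 := by
      rw [← LinearMap.comp_apply, ← LinearMap.baseChange_comp, hrange, LinearMap.baseChange_zero,
        LinearMap.zero_apply]
    rw [← baseChange_cliffordOp (A := A) K.mkQ fun _ _ => rfl, affineOp, LinearMap.add_apply,
      map_add, hzero, zero_add]

theorem exists_eq_C_add_sum {p : MvPolynomial (Fin m) k} (h : p.totalDegree ≤ 1) :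
    ∃ (a₀ : k) (a : Fin m → k), p = C a₀ + ∑ i, C (a i) * X i := by
  have hlin := (mem_homogeneousSubmodule 1 _).2 (homogeneousComponent_isHomogeneous 1 p)
  rw [homogeneousSubmodule_one_eq_span_X, Submodule.mem_span_range_iff_exists_fun] at hlin
  obtain ⟨a, ha⟩ := hlin
  refine ⟨coeff 0 p, a, ?_⟩
  conv_lhs => rw [← sum_range_homogeneousComponent p (D := 2) (by lia)]
  simp_rw [Finset.sum_range_succ, Finset.sum_range_zero, zero_add, homogeneousComponent_zero, ← ha,
    smul_eq_C_mul]

theorem exists_affineOp_conj {J : Type*} [Fintype J] [DecidableEq J]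
    {ζ : (J → MvPolynomial (Fin m) k) →ₗ[MvPolynomial (Fin m) k] (J → MvPolynomial (Fin m) k)}
    (hdeg : ∀ i j, (ζ (Pi.single j 1) i).totalDegree ≤ 1) :
    ∃ (A₀ : Module.End k (J → k)) (A : Fin m → Module.End k (J → k)), ∀ v,
      piScalarRight k (MvPolynomial (Fin m) k) _ J (affineOp A₀ A v) =
        ζ (piScalarRight k (MvPolynomial (Fin m) k) _ J v) := by
  choose a₀ a ha using fun i j => exists_eq_C_add_sum (hdeg i j)
  refine ⟨Matrix.toLin' (Matrix.of a₀), fun l => Matrix.toLin' (Matrix.of fun i j => a i j l),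
    LinearMap.congr_fun (f := (piScalarRight k (MvPolynomial (Fin m) k) _ J).toLinearMap ∘ₗ _)
      (g := ζ ∘ₗ (piScalarRight k (MvPolynomial (Fin m) k) _ J).toLinearMap) ?_⟩
  refine AlgebraTensorModule.curry_injective
    (LinearMap.ext_ring (LinearMap.pi_ext' fun j => LinearMap.ext_ring (funext fun i => ?_)))
  have hsingle : piScalarRight k (MvPolynomial (Fin m) k) (MvPolynomial (Fin m) k) J
      (1 ⊗ₜ Pi.single j 1) = Pi.single j 1 := by
    ext i : 1
    simp [Pi.single_apply, apply_ite]
  simp [hsingle, ha, affineOp_tmul, smul_eq_C_mul]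

theorem opClass_mem_of_totalDegree_le_one (h2 : (2 : k) ≠ 0)
    (𝒢 : AddSubgroup (GGroup (AdjoinSqrt (diagForm c))))
    (hrep : ∀ (W : Type u) [AddCommGroup W] [Module k W] [Module.Finite k W]
      (A : Fin m → Module.End k W) (h : IsCliffordFamily c A), repClass h ∈ 𝒢)
    {J : Type} [Finite J] [DecidableEq J]
    (ζ : (J → MvPolynomial (Fin m) k) →ₗ[MvPolynomial (Fin m) k] (J → MvPolynomial (Fin m) k))
    (hζ : IsSqrt (diagForm c) ζ) (hdeg : ∀ i j, (ζ (Pi.single j 1) i).totalDegree ≤ 1) :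
    opClass ζ hζ ∈ 𝒢 := by
  cases nonempty_fintype J
  obtain ⟨A₀, A, hconj⟩ := exists_affineOp_conj hdeg
  have hA : IsSqrt (diagForm c) (affineOp A₀ A) := fun v =>
    (piScalarRight k (MvPolynomial (Fin m) k) _ J).injective (by rw [hconj, hconj, hζ, map_smul])
  obtain ⟨A₁, h₁, A₃, h₃, heq⟩ := exists_opClass_affineOp_eq h2 hA
  rw [← opClass_congr hA hζ _ hconj, heq]
  exact 𝒢.add_mem (hrep _ A₁ h₁) (hrep _ A₃ h₃)

end Affine

theorem isFilteredOp_freeOp {k : Type u} [Field k] {n : ℕ} {g : MvPolynomial (Fin n) k}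
    (hg : g.totalDegree ≤ 2) (ι : Type*) [DecidableEq ι] :
    IsFilteredOp (Sum.elim 0 1) (freeOp g ι) := by
  rintro (i | i) (j | j) hne <;> obtain rfl | hij := eq_or_ne i j <;>
    simp_all

theorem mem_of_free_mem_of_repClass_mem {k : Type u} [Field k] {m : ℕ} (h2 : (2 : k) ≠ 0)
    {c : Fin m → k} (𝒢 : AddSubgroup (GGroup (AdjoinSqrt (diagForm c))))
    (hfree : opClass (freeOp (diagForm c) Unit) (freeOp_isSqrt _) ∈ 𝒢)
    (hrep : ∀ (W : Type u) [AddCommGroup W] [Module k W] [Module.Finite k W]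
      (A : Fin m → Module.End k W) (h : IsCliffordFamily c A), repClass h ∈ 𝒢)
    (x : GGroup (AdjoinSqrt (diagForm c))) : x ∈ 𝒢 := by
  have hfilt {J : Type} [Finite J] [DecidableEq J] (w : J → ℕ) (ζ) (hζ) (hw) :=
    opClass_mem_of_linear_mem 𝒢 hfree
      (fun _ => opClass_mem_of_totalDegree_le_one h2 𝒢 hrep) (J := J) w ζ hζ hw
  refine GGroup.mem_of_forall_of_mem 𝒢 (fun M => ?_) x
  rw [of_eq_opClass k M]
  exact opClass_mem_of_isFilteredOp_mem ((diagForm_isHomogeneous c).rename_isHomogeneous)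
    (dehom_rename_succ _) 𝒢
    (fun r => hfilt _ _ _ (isFilteredOp_freeOp (diagForm_isHomogeneous c).totalDegree_le _))
    (fun r => hfilt) _

section DiagClifford

variable {ι R : Type*} [CommRing R] [Fintype ι] (c : ι → R)

theorem weightedSumSquares_eq_sum (v : ι → R) :
    QuadraticMap.weightedSumSquares R c v = ∑ i, c i * v i ^ 2 := by
  simp only [QuadraticMap.weightedSumSquares_apply, smul_eq_mul, sq]

/-- The Clifford algebra of the diagonal quadratic form `∑ c i * x i ^ 2`. -/
abbrev DiagClifford : Type _ := CliffordAlgebra (QuadraticMap.weightedSumSquares R c)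

/-- The generators of the Clifford algebra of a diagonal form. -/
noncomputable def cliffordGen [DecidableEq ι] (i : ι) : DiagClifford c :=
  CliffordAlgebra.ι _ (Pi.single i 1)

variable [DecidableEq ι]

theorem ι_eq_sum_cliffordGen (v : ι → R) :
    CliffordAlgebra.ι (QuadraticMap.weightedSumSquares R c) v = ∑ i, v i • cliffordGen c i := by
  conv_lhs => rw [pi_eq_sum_univ' v]
  simp only [map_sum, map_smul, cliffordGen]

theorem cliffordGen_isCliffordFamily : IsCliffordFamily c (cliffordGen c) :=
  .of_sum_smul_mul_self fun x => by
    rw [← ι_eq_sum_cliffordGen, CliffordAlgebra.ι_sq_scalar, weightedSumSquares_eq_sum]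

variable {c} {E : Type*} [Ring E] [Algebra R E] {a : ι → E}

/-- The homomorphism out of the Clifford algebra determined by a family satisfying its defining
relations. -/
noncomputable def IsCliffordFamily.lift (h : IsCliffordFamily c a) : DiagClifford c →ₐ[R] E :=
  CliffordAlgebra.lift _ ⟨Fintype.linearCombination R a, fun v => by
    rw [Fintype.linearCombination_apply, h.sum_smul_mul_self, weightedSumSquares_eq_sum]⟩

@[simp]
theorem IsCliffordFamily.lift_cliffordGen (h : IsCliffordFamily c a) (i : ι) :
    h.lift (cliffordGen c i) = a i := by
  rw [lift, cliffordGen, CliffordAlgebra.lift_ι_apply, Fintype.linearCombination_apply_single,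
    one_smul]

end DiagClifford

section Finrank

variable {ι k : Type*} [Field k] {c : ι → k}

theorem IsCliffordFamily.exists_stable_submodule {E : Type*} [Ring E] [Algebra k E] {a : ι → E}
    (h : IsCliffordFamily c a) (s : Finset ι) :
    ∃ U : Submodule k E, FiniteDimensional k U ∧ Module.finrank k U ≤ 2 ^ s.card ∧ 1 ∈ U ∧
      ∀ i ∈ s, ∀ x ∈ U, a i * x ∈ U := by
  classical
  induction s using Finset.induction_on with
  | empty =>
    exact ⟨k ∙ 1, inferInstance, (finrank_span_le_card _).trans (by simp),
      Submodule.mem_span_singleton_self 1, by simp⟩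
  | insert j s hj ih =>
    obtain ⟨U, hfin, hrank, hone, hstable⟩ := ih
    have hmap := Submodule.finrank_map_le (LinearMap.mulLeft k (a j)) U
    have hsup := Submodule.finrank_add_le_finrank_add_finrank U (U.map (LinearMap.mulLeft k (a j)))
    refine ⟨U ⊔ U.map (LinearMap.mulLeft k (a j)), inferInstance, ?_, Submodule.mem_sup_left hone,
      fun i hi x hx => ?_⟩
    · rw [Finset.card_insert_of_notMem hj, pow_succ]
      lia
    obtain ⟨y, hy, _, ⟨z, hz, rfl⟩, rfl⟩ := Submodule.mem_sup.1 hx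
    rw [LinearMap.mulLeft_apply, mul_add]
    obtain rfl | hi := Finset.mem_insert.1 hi
    · rw [← mul_assoc, h.sq, ← Algebra.smul_def]
      exact add_mem (Submodule.mem_sup_right ⟨y, hy, rfl⟩)
        (Submodule.mem_sup_left (U.smul_mem _ hz))
    · have hswap : a i * (a j * z) = a j * -(a i * z) := by
        rw [← mul_assoc, eq_neg_of_add_eq_zero_left (h.anti i j (ne_of_mem_of_not_mem hi hj))]
        noncomm_ring
      rw [hswap]
      exact add_mem (Submodule.mem_sup_left (hstable i hi y hy))
        (Submodule.mem_sup_right ⟨_, U.neg_mem (hstable i hi z hz), rfl⟩)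

variable [Fintype ι]

theorem DiagClifford.finiteDimensional_and_finrank_le (c : ι → k) :
    FiniteDimensional k (DiagClifford c) ∧
      Module.finrank k (DiagClifford c) ≤ 2 ^ Fintype.card ι := by
  classical
  obtain ⟨U, hfin, hrank, hone, hstable⟩ :=
    (cliffordGen_isCliffordFamily c).exists_stable_submodule Finset.univ
  have htop : U = ⊤ := by
    refine eq_top_iff.2 fun x _ => ?_
    induction x using CliffordAlgebra.left_induction with
    | algebraMap r =>
      rw [Algebra.algebraMap_eq_smul_one]
      exact U.smul_mem r hone
    | add x y hx hy => exact U.add_mem (hx trivial) (hy trivial)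
    | ι_mul x v hx =>
      rw [ι_eq_sum_cliffordGen, Finset.sum_mul]
      refine U.sum_mem fun i hi => ?_
      rw [smul_mul_assoc]
      exact U.smul_mem _ (hstable i hi x (hx trivial))
  subst htop
  exact ⟨Module.Finite.equiv Submodule.topEquiv, by rwa [finrank_top] at hrank⟩

instance (c : ι → k) : FiniteDimensional k (DiagClifford c) :=
  (DiagClifford.finiteDimensional_and_finrank_le c).1

end Finrank

theorem isIsotypicOfType_of_isSimpleRing {A I W : Type*} [Ring A] [IsArtinianRing A]
    [IsSimpleRing A] [AddCommGroup I] [Module A I] [IsSimpleModule A I] [AddCommGroup W]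
    [Module A W] : IsIsotypicOfType A W I := by
  intro N hN
  let eN := Submodule.equivMapOfInjective (LinearMap.inl A W I) LinearMap.inl_injective N
  let eI := Submodule.topEquiv.symm.trans
    (Submodule.equivMapOfInjective (LinearMap.inr A W I) LinearMap.inr_injective ⊤)
  have := IsSimpleModule.congr eN.symm
  have := IsSimpleModule.congr eI.symm
  obtain ⟨e⟩ := IsSimpleRing.isIsotypic A (W × I) ((⊤ : Submodule A I).map (LinearMap.inr A W I))
    (N.map (LinearMap.inl A W I))
  exact ⟨(eN.trans e).trans eI.symm⟩

section UniversalRep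

variable {k : Type u} [Field k] {m : ℕ} {c : Fin m → k}

/-- `A` is a representation of a diagonal Clifford algebra such that every finite dimensional
representation is a direct sum of copies of `A`. -/
structure IsUniversalRep {T : Type u} [AddCommGroup T] [Module k T] (c : Fin m → k)
    (A : Fin m → Module.End k T) : Prop where
  isCliffordFamily : IsCliffordFamily c A
  exists_equiv_pi : ∀ (W : Type u) [AddCommGroup W] [Module k W] [Module.Finite k W]
    (B : Fin m → Module.End k W), IsCliffordFamily c B →
      ∃ (a : ℕ) (e : W ≃ₗ[k] (Fin a → T)), ∀ i w j, e (B i w) j = A i (e w j)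

theorem IsUniversalRep.of_isSimpleModule [IsSimpleRing (DiagClifford c)] (T : Type u)
    [AddCommGroup T] [Module k T] [Module (DiagClifford c) T] [IsScalarTower k (DiagClifford c) T]
    [IsSimpleModule (DiagClifford c) T] :
    IsUniversalRep c fun i => Algebra.lsmul k k T (cliffordGen c i) where
  isCliffordFamily := (cliffordGen_isCliffordFamily c).map (S := k) (Algebra.lsmul k k T)
  exists_equiv_pi W _ _ _ B hB := by
    let : Module (DiagClifford c) W :=
      Module.compHom W (hB.lift : DiagClifford c →+* Module.End k W)
    have hsmul (x : DiagClifford c) (w : W) : x • w = hB.lift x w := rfl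
    have : IsScalarTower k (DiagClifford c) W :=
      ⟨fun r x w => by rw [hsmul, hsmul, map_smul, LinearMap.smul_apply]⟩
    have : Module.Finite (DiagClifford c) W := Module.Finite.of_restrictScalars_finite k _ _
    have : IsArtinianRing (DiagClifford c) := IsArtinianRing.of_finite k _
    obtain ⟨a, ⟨e⟩⟩ := (isIsotypicOfType_of_isSimpleRing (A := DiagClifford c) (W := W)
      (I := T)).linearEquiv_fun
    refine ⟨a, e.restrictScalars k, fun i w j => ?_⟩
    rw [← hB.lift_cliffordGen, ← hsmul, LinearEquiv.restrictScalars_apply, map_smul]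
    rfl

theorem exists_isUniversalRep (c : Fin m → k) [IsSimpleRing (DiagClifford c)] :
    ∃ (T : Type u) (_ : AddCommGroup T) (_ : Module k T) (_ : Module.Finite k T) (_ : Nontrivial T)
      (A : Fin m → Module.End k T), IsUniversalRep c A := by
  have : IsArtinianRing (DiagClifford c) := IsArtinianRing.of_finite k _
  obtain ⟨I, hI⟩ := IsAtomic.exists_atom (Submodule (DiagClifford c) (DiagClifford c))
  have := isSimpleModule_iff_isAtom.2 hI
  exact ⟨I, inferInstance, inferInstance, inferInstance,
    IsSimpleModule.nontrivial (DiagClifford c) I, _, IsUniversalRep.of_isSimpleModule I⟩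

end UniversalRep

theorem exact_single_zero_funLeft_succ {R : Type*} [Semiring R] (M : Type*) [AddCommGroup M]
    [Module R M] (a : ℕ) :
    Function.Exact (LinearMap.single R (fun _ : Fin (a + 1) => M) 0)
      (LinearMap.funLeft R M (Fin.succ : Fin a → Fin (a + 1))) := by
  refine fun v => ⟨fun hv => ⟨v 0, ?_⟩, ?_⟩
  · ext i
    cases i using Fin.cases with
    | zero => simp
    | succ j => simpa [eq_comm] using congrFun hv j
  · rintro ⟨w, rfl⟩
    ext i
    simp [LinearMap.funLeft_apply]

section Double

variable {S : Type u} [CommRing S] (g : S)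

/-- The square root `(x, y) ↦ (g y, x)` of `g` on `U × U`; this is the module
`AdjoinSqrt g ⊗ U`. -/
def doubleOp (U : Type*) [AddCommGroup U] [Module S U] : (U × U) →ₗ[S] (U × U) :=
  (g • LinearMap.snd S U U).prod (LinearMap.fst S U U)

@[simp]
theorem doubleOp_apply {U : Type*} [AddCommGroup U] [Module S U] (v : U × U) :
    doubleOp g U v = (g • v.2, v.1) := rfl

theorem doubleOp_isSqrt (U : Type*) [AddCommGroup U] [Module S U] : IsSqrt g (doubleOp g U) :=
  fun _ => rfl

variable {U U₁ U₂ U₃ : Type u} [AddCommGroup U] [Module S U] [Module.Finite S U]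
  [AddCommGroup U₁] [Module S U₁] [Module.Finite S U₁] [AddCommGroup U₂] [Module S U₂]
  [Module.Finite S U₂] [AddCommGroup U₃] [Module S U₃] [Module.Finite S U₃]

variable {g} in
theorem opClass_doubleOp_eq_neg_add {ξ : U →ₗ[S] U} (h : IsSqrt g ξ) (h' : IsSqrt g (-ξ)) :
    opClass (doubleOp g U) (doubleOp_isSqrt g U) = opClass (-ξ) h' + opClass ξ h :=
  opClass_exact _ _ _ ((-ξ).prod LinearMap.id) (LinearMap.id.coprod ξ)
    (fun v => by ext <;> simp [h v]) (fun v => by simp [h v.2, add_comm])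
    (fun v w hvw => by simpa using congrArg Prod.snd hvw) (fun v => ⟨(v, 0), by simp⟩)
    fun v => ⟨fun hv => ⟨v.2, Prod.ext (by simpa using (eq_neg_of_add_eq_zero_left hv).symm) rfl⟩,
      by rintro ⟨w, rfl⟩; simp⟩

theorem opClass_doubleOp_exact (a : U₁ →ₗ[S] U₂) (b : U₂ →ₗ[S] U₃) (ha : Function.Injective a)
    (hb : Function.Surjective b) (hex : Function.Exact a b) :
    opClass (doubleOp g U₂) (doubleOp_isSqrt g U₂) =
      opClass (doubleOp g U₁) (doubleOp_isSqrt g U₁) +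
        opClass (doubleOp g U₃) (doubleOp_isSqrt g U₃) :=
  opClass_exact _ _ _ (a.prodMap a) (b.prodMap b) (fun v => by simp) (fun v => by simp)
    (ha.prodMap ha) (hb.prodMap hb) fun v => by
      simp only [LinearMap.prodMap_apply, Prod.mk_eq_zero, hex _, LinearMap.coe_prodMap,
        Set.range_prodMap, Set.mem_prod]

theorem opClass_doubleOp_congr (e : U₁ ≃ₗ[S] U₂) :
    opClass (doubleOp g U₁) (doubleOp_isSqrt g U₁) =
      opClass (doubleOp g U₂) (doubleOp_isSqrt g U₂) :=
  opClass_congr _ _ (e.prodCongr e) fun v => by simp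

theorem opClass_doubleOp_self : opClass (doubleOp g S) (doubleOp_isSqrt g S) =
    opClass (freeOp g Unit) (freeOp_isSqrt g) := by
  refine opClass_congr _ _ (((LinearEquiv.funUnique Unit S S).symm.prodCongr
    (LinearEquiv.funUnique Unit S S).symm).trans
      (LinearEquiv.sumArrowLequivProdArrow Unit Unit S S).symm) fun v => ?_
  ext (i | i) <;> simp

theorem opClass_doubleOp_pi (d : ℕ) :
    opClass (doubleOp g (Fin d → S)) (doubleOp_isSqrt g _) =
      d • opClass (freeOp g Unit) (freeOp_isSqrt g) := by
  induction d with
  | zero => rw [zero_smul, opClass_of_subsingleton]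
  | succ d ih =>
    rw [opClass_doubleOp_exact g _ _ (Pi.single_injective (M := fun _ : Fin (d + 1) => S) 0)
      (LinearMap.funLeft_surjective_of_injective _ _ _ (Fin.succ_injective _))
      (exact_single_zero_funLeft_succ S d), opClass_doubleOp_self, ih, succ_nsmul']

end Double

section Copies

variable {k : Type u} [Field k] {m : ℕ} {c : Fin m → k}

theorem IsCliffordFamily.compLeft {T : Type*} [AddCommGroup T] [Module k T]
    {A : Fin m → Module.End k T} (h : IsCliffordFamily c A) (ι : Type*) :
    IsCliffordFamily c fun i => ((A i).compLeft ι : Module.End k (ι → T)) where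
  sq i := LinearMap.ext fun w => funext fun j => LinearMap.congr_fun (h.sq i) (w j)
  anti i l hil := LinearMap.ext fun w => funext fun j =>
    LinearMap.congr_fun (h.anti i l hil) (w j)

theorem IsCliffordFamily.neg {ι R E : Type*} [CommRing R] [Ring E] [Algebra R E] {c : ι → R}
    {a : ι → E} (h : IsCliffordFamily c a) : IsCliffordFamily c fun i => -a i where
  sq i := by simpa using h.sq i
  anti i j hij := by simpa using h.anti i j hij

variable {T : Type u} [AddCommGroup T] [Module k T] [Module.Finite k T]
  {A : Fin m → Module.End k T}

theorem repClass_compLeft (h : IsCliffordFamily c A) (a : ℕ) :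
    repClass (h.compLeft (Fin a)) = a • repClass h := by
  induction a with
  | zero =>
    have hadd := repClass_exact (h.compLeft (Fin 0)) (h.compLeft (Fin 0)) (h.compLeft (Fin 0)) 0 0
      (fun _ _ => Subsingleton.elim _ _) (fun _ _ => Subsingleton.elim _ _)
      (Function.injective_of_subsingleton _) (Function.surjective_to_subsingleton _)
      fun x => ⟨fun _ => ⟨x, Subsingleton.elim _ _⟩, fun _ => rfl⟩
    simpa using hadd
  | succ a ih =>
    rw [repClass_exact h (h.compLeft (Fin (a + 1))) (h.compLeft (Fin a)) _ _ (fun i w => ?_)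
      (fun i w => rfl) (Pi.single_injective (M := fun _ : Fin (a + 1) => T) 0)
      (LinearMap.funLeft_surjective_of_injective _ _ _ (Fin.succ_injective _))
      (exact_single_zero_funLeft_succ T a), ih, succ_nsmul']
    ext j
    exact (Pi.apply_single (fun _ => A i) (fun _ => map_zero _) 0 w j).symm

namespace IsUniversalRep

theorem exists_repClass_eq_nsmul (hA : IsUniversalRep c A) {W : Type u} [AddCommGroup W]
    [Module k W] [Module.Finite k W] {B : Fin m → Module.End k W} (hB : IsCliffordFamily c B) :
    ∃ a : ℕ, repClass hB = a • repClass hA.isCliffordFamily := by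
  obtain ⟨a, e, he⟩ := hA.exists_equiv_pi W B hB
  exact ⟨a, (repClass_congr hB (hA.isCliffordFamily.compLeft (Fin a)) e
    fun i w => funext (he i w)).trans (repClass_compLeft _ a)⟩

theorem finrank_dvd (hA : IsUniversalRep c A) {W : Type u} [AddCommGroup W]
    [Module k W] [Module.Finite k W] {B : Fin m → Module.End k W} (hB : IsCliffordFamily c B) :
    Module.finrank k T ∣ Module.finrank k W := by
  obtain ⟨a, e, -⟩ := hA.exists_equiv_pi W B hB
  simp [e.finrank_eq, Module.finrank_pi_fintype]

variable [Nontrivial T]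

theorem exists_equiv_neg (hA : IsUniversalRep c A) :
    ∃ φ : T ≃ₗ[k] T, ∀ i w, φ (-A i w) = A i (φ w) := by
  obtain ⟨a, e, he⟩ := hA.exists_equiv_pi T _ hA.isCliffordFamily.neg
  have hrank : Module.finrank k T = a * Module.finrank k T := by
    simpa [Module.finrank_pi_fintype] using e.finrank_eq
  obtain rfl : a = 1 := (Nat.eq_of_mul_eq_mul_right Module.finrank_pos
    ((one_mul _).trans hrank)).symm
  exact ⟨e.trans (LinearEquiv.funUnique (Fin 1) k T), fun i w => he i w 0⟩

theorem even_finrank (hA : IsUniversalRep c A) (h2 : (2 : k) ≠ 0) {i : Fin m} (hi : c i ≠ 0) :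
    Even (Module.finrank k T) := by
  obtain ⟨φ, hφ⟩ := hA.exists_equiv_neg
  have hdet : LinearMap.det (A i) ≠ 0 := by
    have hsq := congrArg LinearMap.det (hA.isCliffordFamily.sq i)
    rw [map_mul, Algebra.algebraMap_eq_smul_one, LinearMap.det_smul, map_one, mul_one] at hsq
    exact left_ne_zero_of_mul (hsq ▸ pow_ne_zero _ hi)
  have hconj : (φ : T →ₗ[k] T) ∘ₗ ((-1 : k) • A i) ∘ₗ (φ.symm : T →ₗ[k] T) = A i := by
    ext w
    simpa using hφ i (φ.symm w)
  have hneg := congrArg LinearMap.det hconj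
  rw [LinearMap.det_conj, LinearMap.det_smul] at hneg
  by_contra hodd
  rw [(Nat.not_even_iff_odd.1 hodd).neg_one_pow] at hneg
  exact mul_ne_zero h2 hdet (by linear_combination -hneg)

theorem two_nsmul_repClass (hA : IsUniversalRep c A) :
    2 • repClass hA.isCliffordFamily =
      Module.finrank k T • opClass (freeOp (diagForm c) Unit) (freeOp_isSqrt _) := by
  obtain ⟨φ, hφ⟩ := hA.exists_equiv_neg
  have hop : cliffordOp (fun i => -A i) = -cliffordOp A := by
    refine AlgebraTensorModule.ext fun s w => ?_
    simp [cliffordOp_tmul, tmul_neg]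
  have hneg : IsSqrt (diagForm c) (-cliffordOp A) :=
    hop ▸ cliffordOp_isSqrt hA.isCliffordFamily.neg
  have hclass : opClass (-cliffordOp A) hneg = repClass hA.isCliffordFamily := by
    rw [← repClass_congr hA.isCliffordFamily.neg hA.isCliffordFamily φ hφ]
    simp only [repClass, hop]
  have e := ((Module.finBasis k T).baseChange (MvPolynomial (Fin m) k)).equivFun
  rw [← opClass_doubleOp_pi, ← opClass_doubleOp_congr _ e, opClass_doubleOp_eq_neg_add
    (cliffordOp_isSqrt hA.isCliffordFamily) hneg, hclass, two_nsmul]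
  rfl

end IsUniversalRep

end Copies

/-! ### Homology of square-zero endomorphisms -/

section Homology

variable {S : Type*} [CommRing S] {E E₁ E₂ E₃ : Type*} [AddCommGroup E] [Module S E]
  [AddCommGroup E₁] [Module S E₁] [AddCommGroup E₂] [Module S E₂] [AddCommGroup E₃] [Module S E₃]

/-- The homology `ker D / im D` of an endomorphism `D`; only the part of the image lying in the
kernel is divided out, so that the definition does not depend on `D * D = 0`. -/
abbrev Homology (D : Module.End S E) : Type _ :=
  LinearMap.ker D ⧸ (LinearMap.range D).submoduleOf (LinearMap.ker D)

/-- `f` preserves kernels and images of the given endomorphisms, and hence acts on homology. This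
holds both for maps commuting and for maps anticommuting with the endomorphisms. -/
structure IsCompatible (D₁ : Module.End S E₁) (D₂ : Module.End S E₂) (f : E₁ →ₗ[S] E₂) :
    Prop where
  ker_le : ∀ x ∈ LinearMap.ker D₁, f x ∈ LinearMap.ker D₂
  range_le : ∀ x ∈ LinearMap.range D₁, f x ∈ LinearMap.range D₂

namespace IsCompatible

variable {D₁ : Module.End S E₁} {D₂ : Module.End S E₂} {f : E₁ →ₗ[S] E₂}

theorem of_comm (h : ∀ x, f (D₁ x) = D₂ (f x)) : IsCompatible D₁ D₂ f where
  ker_le x hx := by rw [LinearMap.mem_ker, ← h, LinearMap.mem_ker.1 hx, map_zero]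
  range_le := by
    rintro _ ⟨x, rfl⟩
    exact ⟨f x, (h x).symm⟩

theorem of_anticomm {D f : Module.End S E} (h : f * D + D * f = 0) : IsCompatible D D f := by
  have hf (x : E) : f (D x) = -D (f x) := eq_neg_of_add_eq_zero_left (LinearMap.congr_fun h x)
  refine ⟨fun x hx => ?_, ?_⟩
  · rw [LinearMap.mem_ker, ← neg_eq_zero, ← hf, LinearMap.mem_ker.1 hx, map_zero]
  · rintro _ ⟨x, rfl⟩
    exact ⟨-f x, by rw [hf, map_neg]⟩

end IsCompatible

namespace Homology

variable {D : Module.End S E} {D₁ : Module.End S E₁} {D₂ : Module.End S E₂}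
  {D₃ : Module.End S E₃}

theorem mk_eq_zero_iff {x : LinearMap.ker D} :
    (Submodule.Quotient.mk x : Homology D) = 0 ↔ (x : E) ∈ LinearMap.range D :=
  Submodule.Quotient.mk_eq_zero _

/-- The map induced on homology. -/
def map {f : E₁ →ₗ[S] E₂} (hf : IsCompatible D₁ D₂ f) : Homology D₁ →ₗ[S] Homology D₂ :=
  Submodule.mapQ _ _ (f.restrict hf.ker_le) fun x hx => hf.range_le x hx

theorem map_mk {f : E₁ →ₗ[S] E₂} (hf : IsCompatible D₁ D₂ f) (x : LinearMap.ker D₁) :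
    map hf (Submodule.Quotient.mk x) = Submodule.Quotient.mk (f.restrict hf.ker_le x) := rfl

/-- An isomorphism commuting with the endomorphisms induces an isomorphism on homology. -/
def congr (e : E₁ ≃ₗ[S] E₂) (he : ∀ x, e (D₁ x) = D₂ (e x)) : Homology D₁ ≃ₗ[S] Homology D₂ :=
  LinearEquiv.ofLinearMap (map (f := e.toLinearMap) (.of_comm he))
    (map (f := e.symm.toLinearMap) (.of_comm fun x => e.injective (by simp [he])))
    (Submodule.linearMap_qext _ <| LinearMap.ext fun x =>
      congrArg Submodule.Quotient.mk (Subtype.ext (e.apply_symm_apply x.1)))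
    (Submodule.linearMap_qext _ <| LinearMap.ext fun x =>
      congrArg Submodule.Quotient.mk (Subtype.ext (e.symm_apply_apply x.1)))

theorem smul_eq_zero_of_homotopy {s : Module.End S E} {r : S}
    (hs : D * s + s * D = algebraMap S _ r) (z : Homology D) : r • z = 0 := by
  obtain ⟨x, rfl⟩ := Submodule.Quotient.mk_surjective _ z
  refine mk_eq_zero_iff.2 ⟨s x, ?_⟩
  simpa [LinearMap.mem_ker.1 x.2] using LinearMap.congr_fun hs x

theorem subsingleton_of_homotopy {s : Module.End S E} (hs : D * s + s * D = 1) :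
    Subsingleton (Homology D) := by
  refine subsingleton_of_forall_eq 0 fun z => ?_
  simpa using smul_eq_zero_of_homotopy (r := 1) (by simpa using hs) z

section Snake

/-- The map `E / im D → ker D` induced by `D`, with kernel and cokernel the homology of `D`. -/
def boundary (hD : D * D = 0) : E ⧸ LinearMap.range D →ₗ[S] LinearMap.ker D :=
  (LinearMap.range D).liftQ (D.codRestrict _ (LinearMap.congr_fun hD)) (by
    rintro _ ⟨x, rfl⟩
    exact Subtype.ext (LinearMap.congr_fun hD x))

/-- The inclusion of the homology of `D` into `E / im D`. -/
def toCoker (D : Module.End S E) : Homology D →ₗ[S] E ⧸ LinearMap.range D :=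
  Submodule.mapQ _ _ (LinearMap.ker D).subtype le_rfl

theorem toCoker_injective : Function.Injective (toCoker D) := by
  refine (injective_iff_map_eq_zero _).2 fun z hz => ?_
  obtain ⟨x, rfl⟩ := Submodule.Quotient.mk_surjective _ z
  exact mk_eq_zero_iff.2 ((Submodule.Quotient.mk_eq_zero _).1 hz)

theorem exact_toCoker_boundary (hD : D * D = 0) :
    Function.Exact (toCoker D) (boundary hD) := by
  intro z
  obtain ⟨x, rfl⟩ := Submodule.Quotient.mk_surjective _ z
  refine ⟨fun hx => ⟨Submodule.Quotient.mk ⟨x, congrArg Subtype.val hx⟩, rfl⟩, ?_⟩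
  rintro ⟨w, hw⟩
  obtain ⟨y, rfl⟩ := Submodule.Quotient.mk_surjective _ w
  rw [← hw]
  exact Subtype.ext y.2

theorem exact_boundary_mkQ (hD : D * D = 0) : Function.Exact (boundary hD)
    ((LinearMap.range D).submoduleOf (LinearMap.ker D)).mkQ := by
  intro x
  rw [Submodule.mkQ_apply, mk_eq_zero_iff]
  constructor
  · rintro ⟨y, hy⟩
    exact ⟨Submodule.Quotient.mk y, Subtype.ext hy⟩
  · rintro ⟨z, rfl⟩
    obtain ⟨y, rfl⟩ := Submodule.Quotient.mk_surjective _ z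
    exact ⟨y, rfl⟩

variable {i : E₁ →ₗ[S] E₂} {p : E₂ →ₗ[S] E₃} (hi : ∀ x, i (D₁ x) = D₂ (i x))
  (hp : ∀ x, p (D₂ x) = D₃ (p x)) (hsurj : Function.Surjective p) (hex : Function.Exact i p)

include hp hsurj hex in
theorem exists_eq_add_of_map_mem_range {x : E₂} (hx : p x ∈ LinearMap.range D₃) :
    ∃ a y, x = i a + D₂ y := by
  obtain ⟨z, hz⟩ := hx
  obtain ⟨y, rfl⟩ := hsurj z
  obtain ⟨a, ha⟩ := (hex (x - D₂ y)).1 (by rw [map_sub, hp, hz, sub_self])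
  exact ⟨a, y, by rw [ha, sub_add_cancel]⟩

include hex in
theorem exact_restrict_ker (hinj : Function.Injective i) :
    Function.Exact (i.restrict (IsCompatible.of_comm hi).ker_le)
      (p.restrict (IsCompatible.of_comm hp).ker_le) := by
  rintro ⟨x, hx⟩
  rw [Subtype.ext_iff]
  refine (hex x).trans ⟨?_, ?_⟩
  · rintro ⟨a, rfl⟩
    exact ⟨⟨a, hinj (by rw [hi, LinearMap.mem_ker.1 hx, map_zero])⟩, rfl⟩
  · rintro ⟨a, ha⟩
    exact ⟨a, congrArg Subtype.val ha⟩

include hsurj hex in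
theorem exact_mapQ_range : Function.Exact
    (Submodule.mapQ _ (LinearMap.range D₂) i (IsCompatible.of_comm hi).range_le)
    (Submodule.mapQ _ (LinearMap.range D₃) p (IsCompatible.of_comm hp).range_le) := by
  intro z
  obtain ⟨x, rfl⟩ := Submodule.Quotient.mk_surjective _ z
  rw [Submodule.mapQ_apply, Submodule.Quotient.mk_eq_zero]
  constructor
  · intro hx
    obtain ⟨a, y, rfl⟩ := exists_eq_add_of_map_mem_range hp hsurj hex hx
    exact ⟨Submodule.Quotient.mk a, (Submodule.Quotient.eq _).2 ⟨-y, by simp⟩⟩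
  · rintro ⟨w, hw⟩
    obtain ⟨a, rfl⟩ := Submodule.Quotient.mk_surjective _ w
    obtain ⟨y, hy⟩ := (Submodule.Quotient.eq _).1 hw
    refine ⟨-p y, ?_⟩
    rw [map_neg, ← hp, hy, map_sub, hex.apply_apply_eq_zero, zero_sub, neg_neg]

include hsurj hex in
theorem exact_map (hinj : Function.Injective i) (hD₂ : D₂ * D₂ = 0) :
    Function.Exact (map (.of_comm hi)) (map (.of_comm hp)) := by
  intro z
  obtain ⟨⟨x, hx⟩, rfl⟩ := Submodule.Quotient.mk_surjective _ z
  rw [map_mk, mk_eq_zero_iff]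
  constructor
  · intro hpx
    obtain ⟨a, y, rfl⟩ := exists_eq_add_of_map_mem_range hp hsurj hex hpx
    have hDy : D₂ (D₂ y) = 0 := LinearMap.congr_fun hD₂ y
    have ha : D₁ a = 0 := hinj (by simpa [hi, hDy] using hx)
    exact ⟨Submodule.Quotient.mk ⟨a, ha⟩, (Submodule.Quotient.eq _).2 ⟨-y, by simp⟩⟩
  · rintro ⟨w, hw⟩
    obtain ⟨a, rfl⟩ := Submodule.Quotient.mk_surjective _ w
    obtain ⟨y, hy⟩ := (Submodule.Quotient.eq _).1 hw
    refine ⟨-p y, ?_⟩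
    have hy' : D₂ y = i a - x := hy
    simp [← hp, hy', hex.apply_apply_eq_zero]

include hsurj hex in
theorem exists_connecting (hinj : Function.Injective i) (hD₁ : D₁ * D₁ = 0) (hD₂ : D₂ * D₂ = 0)
    (hD₃ : D₃ * D₃ = 0) : ∃ δ : Homology D₃ →ₗ[S] Homology D₁,
      Function.Exact (map (.of_comm hp)) δ ∧ Function.Exact δ (map (.of_comm hi)) := by
  have hmapQ : Function.Surjective
      (Submodule.mapQ _ (LinearMap.range D₃) p (IsCompatible.of_comm hp).range_le) :=
    .of_comp (g := (LinearMap.range D₂).mkQ) ((Submodule.mkQ_surjective _).comp hsurj)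
  have hrestrict : Function.Injective (i.restrict (IsCompatible.of_comm hi).ker_le) :=
    fun x y hxy => Subtype.ext (hinj (congrArg Subtype.val hxy))
  have hsq₁ : i.restrict (IsCompatible.of_comm hi).ker_le ∘ₗ boundary hD₁ =
      boundary hD₂ ∘ₗ Submodule.mapQ _ _ i (IsCompatible.of_comm hi).range_le :=
    Submodule.linearMap_qext _ (LinearMap.ext fun x => Subtype.ext (hi x))
  have hsq₂ : p.restrict (IsCompatible.of_comm hp).ker_le ∘ₗ boundary hD₂ =
      boundary hD₃ ∘ₗ Submodule.mapQ _ _ p (IsCompatible.of_comm hp).range_le :=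
    Submodule.linearMap_qext _ (LinearMap.ext fun x => Subtype.ext (hp x))
  exact ⟨SnakeLemma.δ' _ _ _ _ _ (exact_mapQ_range hi hp hsurj hex) _ _
      (exact_restrict_ker hi hp hex hinj) hsq₁ hsq₂ (toCoker D₃) (exact_toCoker_boundary hD₃)
      (Submodule.mkQ _) (exact_boundary_mkQ hD₁) hmapQ hrestrict,
    SnakeLemma.exact_δ'_right _ _ _ _ _ _ _ _ _ _ _ (toCoker D₂) (exact_toCoker_boundary hD₂)
      _ _ _ _ _ _ _ (Submodule.linearMap_qext _ rfl) toCoker_injective,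
    SnakeLemma.exact_δ'_left _ _ _ _ _ _ _ _ _ _ _ _ _ _ _ (Submodule.mkQ _)
      (exact_boundary_mkQ hD₂) _ _ _ rfl (Submodule.mkQ_surjective _)⟩

end Snake

theorem finrank_add_finrank_of_exact_triangle {k : Type*} [Field k] {H₁ H₂ H₃ : Type*}
    [AddCommGroup H₁] [Module k H₁] [Module.Finite k H₁] [AddCommGroup H₂] [Module k H₂]
    [Module.Finite k H₂] [AddCommGroup H₃] [Module k H₃] [Module.Finite k H₃]
    {α : H₁ →ₗ[k] H₂} {β : H₂ →ₗ[k] H₃} {δ : H₃ →ₗ[k] H₁} (hαβ : Function.Exact α β)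
    (hβδ : Function.Exact β δ) (hδα : Function.Exact δ α) :
    Module.finrank k H₁ + Module.finrank k H₃ =
      Module.finrank k H₂ + 2 * Module.finrank k (LinearMap.ker α) := by
  have hα := α.finrank_range_add_finrank_ker
  have hβ := β.finrank_range_add_finrank_ker
  have hδ := δ.finrank_range_add_finrank_ker
  rw [hαβ.linearMap_ker_eq] at hβ
  rw [hβδ.linearMap_ker_eq, ← hδα.linearMap_ker_eq] at hδ
  lia

theorem finrank_add_finrank {k : Type*} [Field k] [Algebra k S] [Module k E₁]
    [IsScalarTower k S E₁] [Module k E₂] [IsScalarTower k S E₂] [Module k E₃]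
    [IsScalarTower k S E₃] [Module.Finite k (Homology D₁)] [Module.Finite k (Homology D₂)]
    [Module.Finite k (Homology D₃)] (hD₁ : D₁ * D₁ = 0) (hD₂ : D₂ * D₂ = 0) (hD₃ : D₃ * D₃ = 0)
    {i : E₁ →ₗ[S] E₂} {p : E₂ →ₗ[S] E₃} (hi : ∀ x, i (D₁ x) = D₂ (i x))
    (hp : ∀ x, p (D₂ x) = D₃ (p x)) (hinj : Function.Injective i) (hsurj : Function.Surjective p)
    (hex : Function.Exact i p) :
    Module.finrank k (Homology D₁) + Module.finrank k (Homology D₃) =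
      Module.finrank k (Homology D₂) +
        2 * Module.finrank k (LinearMap.ker (map (IsCompatible.of_comm hi))) := by
  obtain ⟨δ, hβδ, hδα⟩ := exists_connecting hi hp hsurj hex hinj hD₁ hD₂ hD₃
  exact finrank_add_finrank_of_exact_triangle
    (α := (map (IsCompatible.of_comm hi)).restrictScalars k)
    (β := (map (IsCompatible.of_comm hp)).restrictScalars k) (δ := δ.restrictScalars k)
    (exact_map hi hp hsurj hex hinj hD₂) hβδ hδα

end Homology

theorem IsCliffordFamily.homologyMap {ι R : Type*} [CommRing R] [Algebra R S] [Module R E]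
    [IsScalarTower R S E] {c : ι → R} {D : Module.End S E} {A : ι → Module.End S E}
    (h : IsCliffordFamily c A) (hA : ∀ i, IsCompatible D D (A i)) :
    IsCliffordFamily c fun i => (Homology.map (hA i) : Module.End S (Homology D)) :=
  (h.restrict fun i => (hA i).ker_le).mapQ _

end Homology

/-! ### Koszul operators -/

section Koszul

section TensorEnd

variable {k S V N : Type*} [CommRing k] [CommRing S] [Algebra k S] [AddCommGroup V] [Module k V]
  [Module S V] [IsScalarTower k S V] [AddCommGroup N] [Module k N]

variable (S V) in
/-- The action of `End N` on the second factor of `V ⊗ N`. -/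
noncomputable def tensorEnd : Module.End k N →ₐ[k] Module.End S (V ⊗[k] N) :=
  .ofLinearMap (AlgebraTensorModule.mapBilinear k S k V N V N 1) AlgebraTensorModule.map_one
    fun _ _ => AlgebraTensorModule.ext fun _ _ => rfl

@[simp]
theorem tensorEnd_tmul (b : Module.End k N) (v : V) (w : N) :
    tensorEnd S V b (v ⊗ₜ[k] w) = v ⊗ₜ b w := rfl

end TensorEnd

variable {k : Type u} [Field k] {m : ℕ} {c : Fin m → k} {N : Type u} [AddCommGroup N] [Module k N]

/-- Pairwise anticommuting operators on `N`: an involution `σ` and Clifford families `a` for `-c`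
and `P` for `c`. The first two make up the Koszul operator below, which has square zero because
the squares of its two summands are opposite; the last makes its homology a representation of the
Clifford algebra of `c`. -/
structure IsKoszulFamily (c : Fin m → k) (σ : Module.End k N) (a P : Fin m → Module.End k N) :
    Prop where
  sq : σ * σ = 1
  left : IsCliffordFamily (-c) a
  right : IsCliffordFamily c P
  anti_left : ∀ i, σ * a i + a i * σ = 0
  anti_right : ∀ j, P j * σ + σ * P j = 0
  anti : ∀ i j, P j * a i + a i * P j = 0

theorem isKoszulFamily_diagClifford (c : Fin m → k) :
    IsKoszulFamily c (CliffordAlgebra.involute.toLinearMap : Module.End k (DiagClifford c))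
      (fun i => CliffordAlgebra.involute.toLinearMap * LinearMap.mulLeft k (cliffordGen c i))
      (fun j => LinearMap.mulRight k (cliffordGen c j)) := by
  have hgen (i) : CliffordAlgebra.involute (cliffordGen c i) = -cliffordGen c i :=
    CliffordAlgebra.involute_ι _
  have h := cliffordGen_isCliffordFamily c
  refine ⟨?_, ⟨fun i => ?_, fun i j hij => ?_⟩, ⟨fun i => ?_, fun i j hij => ?_⟩, fun i => ?_,
    fun j => ?_, fun i j => ?_⟩ <;> refine LinearMap.ext fun x => ?_
  · simp
  · simp [hgen, ← mul_assoc, h.sq, Algebra.smul_def]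
  · simp [hgen, ← mul_assoc, ← add_mul, ← neg_add, h.anti i j hij]
  · simp [mul_assoc, h.sq, Algebra.smul_def, Algebra.commutes]
  · simp [mul_assoc, ← mul_add, h.anti j i hij.symm]
  · simp [hgen]
  · simp [hgen]
  · simp [hgen, mul_assoc]

variable {V V₁ V₂ V₃ : Type u} [AddCommGroup V] [Module k V] [Module (MvPolynomial (Fin m) k) V]
  [IsScalarTower k (MvPolynomial (Fin m) k) V] [AddCommGroup V₁] [Module k V₁]
  [Module (MvPolynomial (Fin m) k) V₁] [IsScalarTower k (MvPolynomial (Fin m) k) V₁]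
  [AddCommGroup V₂] [Module k V₂] [Module (MvPolynomial (Fin m) k) V₂]
  [IsScalarTower k (MvPolynomial (Fin m) k) V₂] [AddCommGroup V₃] [Module k V₃]
  [Module (MvPolynomial (Fin m) k) V₃] [IsScalarTower k (MvPolynomial (Fin m) k) V₃]

/-- The operator `∑ X i ⊗ a i + η ⊗ σ` on `V ⊗ N`. -/
noncomputable def koszulOp (a : Fin m → Module.End k N) (σ : Module.End k N)
    (η : V →ₗ[MvPolynomial (Fin m) k] V) : Module.End (MvPolynomial (Fin m) k) (V ⊗[k] N) :=
  ∑ i, (X i : MvPolynomial (Fin m) k) • tensorEnd (MvPolynomial (Fin m) k) V (a i) +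
    AlgebraTensorModule.map η σ

variable {a P : Fin m → Module.End k N} {σ : Module.End k N}

theorem koszulOp_tmul (η : V →ₗ[MvPolynomial (Fin m) k] V) (v : V) (w : N) :
    koszulOp a σ η (v ⊗ₜ w) =
      ∑ i, ((X i : MvPolynomial (Fin m) k) • v) ⊗ₜ a i w + η v ⊗ₜ[k] σ w := by
  simp [koszulOp, LinearMap.sum_apply, smul_tmul']

theorem koszulOp_naturality {η₁ : V₁ →ₗ[MvPolynomial (Fin m) k] V₁}
    {η₂ : V₂ →ₗ[MvPolynomial (Fin m) k] V₂} {f : V₁ →ₗ[MvPolynomial (Fin m) k] V₂}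
    (hf : ∀ v, f (η₁ v) = η₂ (f v)) (x : V₁ ⊗[k] N) :
    AlgebraTensorModule.map f 1 (koszulOp a σ η₁ x) =
      koszulOp a σ η₂ (AlgebraTensorModule.map f 1 x) := by
  induction x with
  | zero => simp
  | add x y hx hy => simp only [map_add, hx, hy]
  | tmul v w => simp [koszulOp_tmul, hf]

namespace IsKoszulFamily

theorem koszulOp_mul_self (h : IsKoszulFamily c σ a P) {η : V →ₗ[MvPolynomial (Fin m) k] V}
    (hη : IsSqrt (diagForm c) η) : koszulOp a σ η * koszulOp a σ η = 0 := by
  let A : Module.End (MvPolynomial (Fin m) k) (V ⊗[k] N) :=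
    ∑ i, (X i : MvPolynomial (Fin m) k) • tensorEnd (MvPolynomial (Fin m) k) V (a i)
  let B : Module.End (MvPolynomial (Fin m) k) (V ⊗[k] N) := AlgebraTensorModule.map η σ
  have hA : A * A = -algebraMap _ _ (diagForm c) := by
    have hfam := h.left.map (S := MvPolynomial (Fin m) k) (tensorEnd (MvPolynomial (Fin m) k) V)
    refine (hfam.sum_smul_mul_self X).trans ?_
    simp [diagForm, MvPolynomial.algebraMap_eq]
  have hB : B * B = algebraMap _ _ (diagForm c) := AlgebraTensorModule.ext fun v w => by
    have hσ : σ (σ w) = w := LinearMap.congr_fun h.sq w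
    simp [B, hη v, hσ, smul_tmul']
  have hAB : A * B + B * A = 0 := AlgebraTensorModule.ext fun v w => by
    have hσ (i) : σ (a i w) = -a i (σ w) := eq_neg_of_add_eq_zero_left
      (LinearMap.congr_fun (h.anti_left i) w)
    simp [A, B, LinearMap.sum_apply, smul_tmul', hσ, tmul_neg]
  calc koszulOp a σ η * koszulOp a σ η = A * A + B * B + (A * B + B * A) := by
        simp only [koszulOp, A, B]; noncomm_ring
    _ = 0 := by rw [hA, hB, hAB, neg_add_cancel, add_zero]

theorem koszulOp_homotopy_X (h : IsKoszulFamily c σ a P) (η : V →ₗ[MvPolynomial (Fin m) k] V)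
    (j : Fin m) : koszulOp a σ η * tensorEnd (MvPolynomial (Fin m) k) V (a j) +
      tensorEnd (MvPolynomial (Fin m) k) V (a j) * koszulOp a σ η =
      algebraMap _ _ (-C (2 * c j) * X j) := by
  refine AlgebraTensorModule.ext fun v w => ?_
  have hσ : σ (a j w) + a j (σ w) = 0 := LinearMap.congr_fun (h.anti_left j) w
  have ha (i) : a i (a j w) + a j (a i w) = if i = j then -(2 * c j) • w else 0 := by
    split_ifs with hij
    · subst hij
      have : a i (a i w) = -c i • w := LinearMap.congr_fun (h.left.sq i) w
      rw [this, ← add_smul]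
      ring_nf
    · exact LinearMap.congr_fun (h.left.anti i j hij) w
  calc _ = ∑ i, ((X i : MvPolynomial (Fin m) k) • v) ⊗ₜ[k] (a i (a j w) + a j (a i w)) +
        η v ⊗ₜ (σ (a j w) + a j (σ w)) := by
        simp only [LinearMap.add_apply, Module.End.mul_apply, tensorEnd_tmul, koszulOp_tmul,
          map_add, map_sum, tmul_add, Finset.sum_add_distrib]
        abel
    _ = ((X j : MvPolynomial (Fin m) k) • v) ⊗ₜ (-(2 * c j) • w) := by
        simp only [ha, hσ, tmul_ite, Finset.sum_ite_eq', Finset.mem_univ, if_true, tmul_zero,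
          add_zero]
    _ = _ := by
        rw [← smul_tmul, ← algebraMap_smul (MvPolynomial (Fin m) k), smul_smul,
          Module.algebraMap_end_apply, smul_tmul', map_neg, MvPolynomial.algebraMap_eq]

theorem X_smul_homology (h : IsKoszulFamily c σ a P) (h2 : (2 : k) ≠ 0) (hc : ∀ i, c i ≠ 0)
    (η : V →ₗ[MvPolynomial (Fin m) k] V) (j : Fin m) (z : Homology (koszulOp a σ η)) :
    (X j : MvPolynomial (Fin m) k) • z = 0 := by
  have hz := Homology.smul_eq_zero_of_homotopy (h.koszulOp_homotopy_X η j) z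
  have hunit : IsUnit (-C (2 * c j) : MvPolynomial (Fin m) k) :=
    ((mul_ne_zero h2 (hc j)).isUnit.map C).neg
  rwa [mul_smul, hunit.smul_eq_zero] at hz

theorem subsingleton_homology_doubleOp (h : IsKoszulFamily c σ a P) :
    Subsingleton (Homology (koszulOp a σ (doubleOp (diagForm c) V))) := by
  let θ : V × V →ₗ[MvPolynomial (Fin m) k] V × V := LinearMap.inl _ _ _ ∘ₗ LinearMap.snd _ _ _
  refine Homology.subsingleton_of_homotopy (s := AlgebraTensorModule.map θ σ) ?_
  refine AlgebraTensorModule.ext fun v w => ?_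
  have hσσ : σ (σ w) = w := LinearMap.congr_fun h.sq w
  have hσ (i) : σ (a i w) = -a i (σ w) := eq_neg_of_add_eq_zero_left
    (LinearMap.congr_fun (h.anti_left i) w)
  have hsum : ∑ i, θ ((X i : MvPolynomial (Fin m) k) • v) ⊗ₜ[k] σ (a i w) =
      -∑ i, ((X i : MvPolynomial (Fin m) k) • θ v) ⊗ₜ[k] a i (σ w) := by
    simp only [hσ, tmul_neg, Finset.sum_neg_distrib, map_smul]
  simp only [LinearMap.add_apply, Module.End.mul_apply, AlgebraTensorModule.map_tmul,
    koszulOp_tmul, map_add, map_sum, hsum, hσσ, Module.End.one_apply]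
  rw [add_add_add_comm, add_neg_cancel, zero_add, ← add_tmul]
  simp [θ]

theorem tensorEnd_koszulOp_anticomm (h : IsKoszulFamily c σ a P)
    (η : V →ₗ[MvPolynomial (Fin m) k] V) (j : Fin m) :
    tensorEnd (MvPolynomial (Fin m) k) V (P j) * koszulOp a σ η +
      koszulOp a σ η * tensorEnd (MvPolynomial (Fin m) k) V (P j) = 0 := by
  refine AlgebraTensorModule.ext fun v w => ?_
  have hσ : P j (σ w) = -σ (P j w) := eq_neg_of_add_eq_zero_left
    (LinearMap.congr_fun (h.anti_right j) w)
  have ha (i) : P j (a i w) = -a i (P j w) := eq_neg_of_add_eq_zero_left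
    (LinearMap.congr_fun (h.anti i j) w)
  simp only [LinearMap.add_apply, Module.End.mul_apply, tensorEnd_tmul, koszulOp_tmul, map_add,
    map_sum, ha, hσ, tmul_neg, Finset.sum_neg_distrib, LinearMap.zero_apply]
  abel

theorem isCliffordFamily_homology (h : IsKoszulFamily c σ a P)
    (η : V →ₗ[MvPolynomial (Fin m) k] V) :
    IsCliffordFamily c fun j =>
      (Homology.map (.of_anticomm (h.tensorEnd_koszulOp_anticomm η j)) :
        Module.End (MvPolynomial (Fin m) k) (Homology (koszulOp a σ η))) :=
  IsCliffordFamily.homologyMap (h.right.map (S := k) (tensorEnd (MvPolynomial (Fin m) k) V)) _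

end IsKoszulFamily

end Koszul

section HomologyDim

variable {k : Type u} [Field k] {m : ℕ}

theorem smul_eq_coeff_zero_smul {M : Type*} [AddCommGroup M] [Module k M]
    [Module (MvPolynomial (Fin m) k) M] [IsScalarTower k (MvPolynomial (Fin m) k) M]
    (hX : ∀ (i : Fin m) (z : M), (X i : MvPolynomial (Fin m) k) • z = 0)
    (p : MvPolynomial (Fin m) k) (z : M) : p • z = coeff 0 p • z := by
  induction p using MvPolynomial.induction_on with
  | C r => rw [coeff_zero_C, ← MvPolynomial.algebraMap_eq, algebraMap_smul]
  | add p q hp hq => rw [add_smul, hp, hq, coeff_add, add_smul]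
  | mul_X p i => rw [mul_smul, hX, smul_zero, coeff_mul_X', if_neg (by simp), zero_smul]

theorem finite_of_X_smul_eq_zero {M : Type*} [AddCommGroup M] [Module k M]
    [Module (MvPolynomial (Fin m) k) M] [IsScalarTower k (MvPolynomial (Fin m) k) M]
    [Module.Finite (MvPolynomial (Fin m) k) M]
    (hX : ∀ (i : Fin m) (z : M), (X i : MvPolynomial (Fin m) k) • z = 0) : Module.Finite k M := by
  obtain ⟨s, hs⟩ := Module.finite_def.1 ‹Module.Finite (MvPolynomial (Fin m) k) M›
  refine ⟨s, eq_top_iff.2 fun z _ => ?_⟩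
  have hz : z ∈ Submodule.span (MvPolynomial (Fin m) k) (s : Set M) := hs ▸ Submodule.mem_top
  induction hz using Submodule.span_induction with
  | mem z hz => exact Submodule.subset_span hz
  | zero => exact zero_mem _
  | add y z _ _ hy hz => exact add_mem (hy trivial) (hz trivial)
  | smul p z _ hz =>
    rw [smul_eq_coeff_zero_smul hX]
    exact Submodule.smul_mem _ _ (hz trivial)

variable {c : Fin m → k} {N : Type u} [AddCommGroup N] [Module k N]
  {V V₁ V₂ V₃ : Type u} [AddCommGroup V] [Module k V] [Module (MvPolynomial (Fin m) k) V]
  [IsScalarTower k (MvPolynomial (Fin m) k) V] [AddCommGroup V₁] [Module k V₁]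
  [Module (MvPolynomial (Fin m) k) V₁] [IsScalarTower k (MvPolynomial (Fin m) k) V₁]
  [AddCommGroup V₂] [Module k V₂] [Module (MvPolynomial (Fin m) k) V₂]
  [IsScalarTower k (MvPolynomial (Fin m) k) V₂] [AddCommGroup V₃] [Module k V₃]
  [Module (MvPolynomial (Fin m) k) V₃] [IsScalarTower k (MvPolynomial (Fin m) k) V₃]
  {a P : Fin m → Module.End k N} {σ : Module.End k N}

/-- The dimension of the homology of the Koszul operator. Divided by the dimension of the simple
module of the Clifford algebra and reduced modulo `2`, it is an additive invariant of `(V, η)`. -/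
noncomputable def homologyDim (a : Fin m → Module.End k N) (σ : Module.End k N)
    (η : V →ₗ[MvPolynomial (Fin m) k] V) : ℕ :=
  Module.finrank k (Homology (koszulOp a σ η))

theorem homologyDim_congr {η₁ : V₁ →ₗ[MvPolynomial (Fin m) k] V₁}
    {η₂ : V₂ →ₗ[MvPolynomial (Fin m) k] V₂} (e : V₁ ≃ₗ[MvPolynomial (Fin m) k] V₂)
    (he : ∀ v, e (η₁ v) = η₂ (e v)) : homologyDim a σ η₁ = homologyDim a σ η₂ :=
  ((Homology.congr (AlgebraTensorModule.congr e (LinearEquiv.refl k N))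
    (koszulOp_naturality (f := e.toLinearMap) he)).restrictScalars k).finrank_eq

theorem homologyDim_of_koszulOp_eq_zero {η : V →ₗ[MvPolynomial (Fin m) k] V}
    (h : koszulOp a σ η = 0) :
    homologyDim a σ η = Module.finrank k V * Module.finrank k N := by
  have hker : LinearMap.ker (koszulOp a σ η) = ⊤ := by rw [h, LinearMap.ker_zero]
  have hrange : (LinearMap.range (koszulOp a σ η)).submoduleOf
      (LinearMap.ker (koszulOp a σ η)) = ⊥ := by
    rw [h, LinearMap.range_zero, Submodule.submoduleOf, Submodule.comap_bot,
      Submodule.ker_subtype]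
  have e := (Submodule.quotEquivOfEqBot _ hrange).trans (LinearEquiv.ofTop _ hker)
  rw [homologyDim, (e.restrictScalars k).finrank_eq, Module.finrank_tensorProduct]

namespace IsKoszulFamily

theorem homologyDim_doubleOp (h : IsKoszulFamily c σ a P) :
    homologyDim a σ (doubleOp (diagForm c) V) = 0 :=
  have := h.subsingleton_homology_doubleOp (V := V)
  Module.finrank_zero_of_subsingleton

variable [Module.Finite k N]

theorem finite_homology [Module.Finite (MvPolynomial (Fin m) k) V] (h : IsKoszulFamily c σ a P)
    (h2 : (2 : k) ≠ 0) (hc : ∀ i, c i ≠ 0) (η : V →ₗ[MvPolynomial (Fin m) k] V) :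
    Module.Finite k (Homology (koszulOp a σ η)) :=
  have : Module.Finite (MvPolynomial (Fin m) k) (V ⊗[k] N) :=
    .equiv (AlgebraTensorModule.cancelBaseChange k (MvPolynomial (Fin m) k) _ V N)
  finite_of_X_smul_eq_zero (h.X_smul_homology h2 hc η)

variable {T : Type u} [AddCommGroup T] [Module k T] [Module.Finite k T] {A : Fin m → Module.End k T}

theorem finrank_dvd_homologyDim [Module.Finite (MvPolynomial (Fin m) k) V]
    (h : IsKoszulFamily c σ a P) (h2 : (2 : k) ≠ 0) (hc : ∀ i, c i ≠ 0) (hA : IsUniversalRep c A)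
    (η : V →ₗ[MvPolynomial (Fin m) k] V) : Module.finrank k T ∣ homologyDim a σ η :=
  have := h.finite_homology h2 hc η
  hA.finrank_dvd (h.isCliffordFamily_homology η).restrictScalars

theorem finrank_dvd_finrank_ker [Module.Finite (MvPolynomial (Fin m) k) V₁]
    (h : IsKoszulFamily c σ a P) (h2 : (2 : k) ≠ 0) (hc : ∀ i, c i ≠ 0) (hA : IsUniversalRep c A)
    {η₁ : V₁ →ₗ[MvPolynomial (Fin m) k] V₁} {η₂ : V₂ →ₗ[MvPolynomial (Fin m) k] V₂}
    {f : V₁ →ₗ[MvPolynomial (Fin m) k] V₂} (hf : ∀ v, f (η₁ v) = η₂ (f v)) :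
    Module.finrank k T ∣ Module.finrank k (LinearMap.ker (Homology.map
      (.of_comm (koszulOp_naturality (a := a) (σ := σ) hf)))) := by
  have := h.finite_homology h2 hc η₁
  have hcomm (j) (x : V₁ ⊗[k] N) : AlgebraTensorModule.map f (1 : Module.End k N)
      (tensorEnd (MvPolynomial (Fin m) k) V₁ (P j) x) =
        tensorEnd (MvPolynomial (Fin m) k) V₂ (P j) (AlgebraTensorModule.map f 1 x) := by
    induction x with
    | zero => simp
    | add x y hx hy => simp only [map_add, hx, hy]
    | tmul v w => rfl
  have : Module.Finite k (LinearMap.ker (Homology.map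
      (.of_comm (koszulOp_naturality (a := a) (σ := σ) hf)))) :=
    .of_injective ((Submodule.subtype _).restrictScalars k) Subtype.val_injective
  refine hA.finrank_dvd ((h.isCliffordFamily_homology η₁).restrict fun j z hz => ?_).restrictScalars
  obtain ⟨⟨x, hx⟩, rfl⟩ := Submodule.Quotient.mk_surjective _ z
  rw [LinearMap.mem_ker, Homology.map_mk, Homology.mk_eq_zero_iff] at hz
  rw [LinearMap.mem_ker, Homology.map_mk, Homology.map_mk, Homology.mk_eq_zero_iff]
  have hP := (IsCompatible.of_anticomm (h.tensorEnd_koszulOp_anticomm η₂ j)).range_le _ hz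
  exact (congrArg (· ∈ LinearMap.range (koszulOp a σ η₂)) (hcomm j x)).mpr hP

theorem homologyDim_add_homologyDim [Module.Finite (MvPolynomial (Fin m) k) V₁]
    [Module.Finite (MvPolynomial (Fin m) k) V₂] [Module.Finite (MvPolynomial (Fin m) k) V₃]
    (h : IsKoszulFamily c σ a P) (h2 : (2 : k) ≠ 0) (hc : ∀ i, c i ≠ 0)
    {η₁ : V₁ →ₗ[MvPolynomial (Fin m) k] V₁} (hη₁ : IsSqrt (diagForm c) η₁)
    {η₂ : V₂ →ₗ[MvPolynomial (Fin m) k] V₂} (hη₂ : IsSqrt (diagForm c) η₂)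
    {η₃ : V₃ →ₗ[MvPolynomial (Fin m) k] V₃} (hη₃ : IsSqrt (diagForm c) η₃)
    {f : V₁ →ₗ[MvPolynomial (Fin m) k] V₂} {g : V₂ →ₗ[MvPolynomial (Fin m) k] V₃}
    (hf : ∀ v, f (η₁ v) = η₂ (f v)) (hg : ∀ v, g (η₂ v) = η₃ (g v))
    (hinj : Function.Injective f) (hsurj : Function.Surjective g) (hex : Function.Exact f g) :
    homologyDim a σ η₁ + homologyDim a σ η₃ = homologyDim a σ η₂ +
      2 * Module.finrank k (LinearMap.ker (Homology.map
        (.of_comm (koszulOp_naturality (a := a) (σ := σ) hf)))) :=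
  have := h.finite_homology h2 hc η₁
  have := h.finite_homology h2 hc η₂
  have := h.finite_homology h2 hc η₃
  Homology.finrank_add_finrank (h.koszulOp_mul_self hη₁) (h.koszulOp_mul_self hη₂)
    (h.koszulOp_mul_self hη₃) (koszulOp_naturality hf) (koszulOp_naturality hg)
    (Module.Flat.rTensor_preserves_injective_linearMap (M := N) (f.restrictScalars k) hinj)
    (LinearMap.rTensor_surjective N (g := g.restrictScalars k) hsurj)
    (rTensor_exact N (f := f.restrictScalars k) (g := g.restrictScalars k) hex hsurj)

theorem homologyDim_of_exact_smul_X [Module.Finite (MvPolynomial (Fin m) k) V]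
    [Module.Finite (MvPolynomial (Fin m) k) V₃] (h : IsKoszulFamily c σ a P) (h2 : (2 : k) ≠ 0)
    (hc : ∀ i, c i ≠ 0) {η : V →ₗ[MvPolynomial (Fin m) k] V} (hη : IsSqrt (diagForm c) η)
    {η₃ : V₃ →ₗ[MvPolynomial (Fin m) k] V₃} (hη₃ : IsSqrt (diagForm c) η₃) {i : Fin m}
    {g : V →ₗ[MvPolynomial (Fin m) k] V₃} (hg : ∀ v, g (η v) = η₃ (g v))
    (hreg : IsSMulRegular V (X i : MvPolynomial (Fin m) k)) (hsurj : Function.Surjective g)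
    (hex : Function.Exact (LinearMap.lsmul (MvPolynomial (Fin m) k) V (X i)) g) :
    homologyDim a σ η₃ = 2 * homologyDim a σ η := by
  have hX (v) : LinearMap.lsmul (MvPolynomial (Fin m) k) V (X i) (η v) =
      η (LinearMap.lsmul _ _ (X i) v) := (map_smul η _ v).symm
  have hker : LinearMap.ker (Homology.map
      (.of_comm (koszulOp_naturality (a := a) (σ := σ) hX))) = ⊤ := by
    refine eq_top_iff.2 fun z _ => ?_
    rw [LinearMap.mem_ker, ← h.X_smul_homology h2 hc η i z]
    obtain ⟨x, rfl⟩ := Submodule.Quotient.mk_surjective _ z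
    rw [Homology.map_mk, ← Submodule.Quotient.mk_smul]
    refine congrArg Submodule.Quotient.mk (Subtype.ext ?_)
    have hsmul : AlgebraTensorModule.map (LinearMap.lsmul (MvPolynomial (Fin m) k) V (X i))
        (1 : Module.End k N) = (X i : MvPolynomial (Fin m) k) • LinearMap.id :=
      AlgebraTensorModule.ext fun _ _ => rfl
    exact LinearMap.congr_fun hsmul x.1
  have hdim := h.homologyDim_add_homologyDim h2 hc hη hη hη₃ hX hg hreg hsurj hex
  rw [hker, (Submodule.topEquiv.restrictScalars k).finrank_eq] at hdim
  simp only [homologyDim] at hdim ⊢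
  lia

end IsKoszulFamily

end HomologyDim

section Quotients

variable {P : Type*} [CommRing P] {n : ℕ} {x : Fin n → P} {F F' : Type*} [AddCommGroup F]
  [Module P F] [AddCommGroup F'] [Module P F']

theorem mem_ideal_smul_top_equiv (e : F ≃ₗ[P] F') (I : Ideal P) (v : F) :
    e v ∈ I • (⊤ : Submodule P F') ↔ v ∈ I • (⊤ : Submodule P F) := by
  refine ⟨fun hv => ?_, fun hv => Submodule.smul_top_le_comap_smul_top I e.toLinearMap hv⟩
  simpa using Submodule.smul_top_le_comap_smul_top I e.symm.toLinearMap hv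

theorem IsRegularUpTo.congr {j : ℕ} (h : IsRegularUpTo x j F') (e : F ≃ₗ[P] F') :
    IsRegularUpTo x j F := by
  intro i hi v hv
  rw [← mem_ideal_smul_top_equiv e] at hv ⊢
  exact h i hi _ (by rwa [← map_smul])

theorem smul_mem_partialIdeal_smul_top {i : Fin n} {j : ℕ} (hi : (i : ℕ) < j) (v : F) :
    x i • v ∈ partialIdeal x j • (⊤ : Submodule P F) :=
  Submodule.smul_mem_smul (Ideal.subset_span ⟨i, hi, rfl⟩) trivial

variable (x) in
/-- The endomorphism induced by `η` on `F / (x₀, …, x_{j-1}) F`. -/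
def quotOp (η : F →ₗ[P] F) (j : ℕ) :
    (F ⧸ partialIdeal x j • (⊤ : Submodule P F)) →ₗ[P] F ⧸ partialIdeal x j • (⊤ : Submodule P F) :=
  Submodule.mapQ _ _ η (Submodule.smul_top_le_comap_smul_top _ η)

theorem quotOp_mk (η : F →ₗ[P] F) (j : ℕ) (v : F) :
    quotOp x η j (Submodule.Quotient.mk v) = Submodule.Quotient.mk (η v) := rfl

theorem quotOp_isSqrt {g : P} {η : F →ₗ[P] F} (h : IsSqrt g η) (j : ℕ) :
    IsSqrt g (quotOp x η j) := by
  intro v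
  obtain ⟨v, rfl⟩ := Submodule.Quotient.mk_surjective _ v
  exact congrArg Submodule.Quotient.mk (h v)

theorem partialIdeal_smul_top_le_succ (i : Fin n) :
    partialIdeal x i • (⊤ : Submodule P F) ≤ partialIdeal x (i + 1) • ⊤ := by
  rw [partialIdeal_succ]
  exact Submodule.smul_mono le_sup_left le_rfl

theorem factor_quotOp (η : F →ₗ[P] F) (i : Fin n)
    (v : F ⧸ partialIdeal x i • (⊤ : Submodule P F)) :
    Submodule.factor (partialIdeal_smul_top_le_succ i) (quotOp x η i v) =
      quotOp x η (i + 1) (Submodule.factor (partialIdeal_smul_top_le_succ i) v) := by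
  obtain ⟨v, rfl⟩ := Submodule.Quotient.mk_surjective _ v
  rw [quotOp_mk, ← Submodule.mkQ_apply, ← Submodule.mkQ_apply, Submodule.factor_mk,
    Submodule.factor_mk]
  exact (quotOp_mk η (i + 1) v).symm

theorem isSMulRegular_quotient (h : IsRegularUpTo x n F) (i : Fin n) :
    IsSMulRegular (F ⧸ partialIdeal x i • (⊤ : Submodule P F)) (x i) :=
  (isSMulRegular_quotient_iff_mem_of_smul_mem _ _).2 (h i i.2)

theorem exact_lsmul_factor (i : Fin n) :
    Function.Exact (LinearMap.lsmul P (F ⧸ partialIdeal x i • (⊤ : Submodule P F)) (x i))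
      (Submodule.factor (partialIdeal_smul_top_le_succ (x := x) (F := F) i)) := by
  intro v
  obtain ⟨v, rfl⟩ := Submodule.Quotient.mk_surjective _ v
  refine (Submodule.Quotient.mk_eq_zero (x := v) _).trans ⟨fun hv => ?_, ?_⟩
  · obtain ⟨u, hu, f, rfl⟩ := exists_eq_add_smul_of_mem_partialIdeal_succ i hv
    refine ⟨Submodule.Quotient.mk f, ?_⟩
    rw [Submodule.Quotient.mk_add, (Submodule.Quotient.mk_eq_zero _).2 hu, zero_add]
    rfl
  · rintro ⟨w, hw⟩
    obtain ⟨w, rfl⟩ := Submodule.Quotient.mk_surjective _ w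
    have hdiff := partialIdeal_smul_top_le_succ i ((Submodule.Quotient.eq _).1 hw)
    have hxw := smul_mem_partialIdeal_smul_top (x := x) i.val.lt_succ_self w
    simpa using Submodule.sub_mem _ hxw hdiff

end Quotients

section Fibre

variable {k : Type u} [Field k] {m : ℕ} {V : Type u} [AddCommGroup V] [Module k V]
  [Module (MvPolynomial (Fin m) k) V] [IsScalarTower k (MvPolynomial (Fin m) k) V]

theorem finrank_fibre {ι : Type*} [Fintype ι]
    (e : V ≃ₗ[MvPolynomial (Fin m) k] ι → MvPolynomial (Fin m) k) :
    Module.finrank k (V ⧸ partialIdeal (X : _ → MvPolynomial (Fin m) k) m •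
        (⊤ : Submodule (MvPolynomial (Fin m) k) V)) = Fintype.card ι := by
  let ev : V →ₗ[k] ι → k := (lcoeff k 0).compLeft ι ∘ₗ e.toLinearMap.restrictScalars k
  have hev : Function.Surjective ev := fun w =>
    ⟨e.symm fun a => C (w a), funext fun a => by simp [ev]⟩
  have hker : (partialIdeal (X : _ → MvPolynomial (Fin m) k) m •
      (⊤ : Submodule (MvPolynomial (Fin m) k) V)).restrictScalars k =
      LinearMap.ker ev := by
    ext v
    rw [Submodule.restrictScalars_mem, ← mem_ideal_smul_top_equiv e, mem_ideal_smul_top_pi]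
    simp only [mem_partialIdeal_X_top, LinearMap.mem_ker, funext_iff]
    rfl
  have equiv := (Submodule.Quotient.restrictScalarsEquiv k _).symm.trans
    ((Submodule.quotEquivOfEq _ _ hker).trans (ev.quotKerEquivOfSurjective hev))
  rw [equiv.finrank_eq, Module.finrank_fintype_fun_eq_card]

theorem cliffordOp_mem_partialIdeal_smul_top {T : Type*} [AddCommGroup T] [Module k T]
    (A : Fin m → Module.End k T) (v : MvPolynomial (Fin m) k ⊗[k] T) :
    cliffordOp A v ∈ partialIdeal (X : _ → MvPolynomial (Fin m) k) m •
      (⊤ : Submodule (MvPolynomial (Fin m) k) (MvPolynomial (Fin m) k ⊗[k] T)) := by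
  rw [cliffordOp, LinearMap.sum_apply]
  exact Submodule.sum_mem _ fun i _ => smul_mem_partialIdeal_smul_top i.2 _

variable {c : Fin m → k} {N : Type u} [AddCommGroup N] [Module k N]
  {a P : Fin m → Module.End k N} {σ : Module.End k N} {η : V →ₗ[MvPolynomial (Fin m) k] V}

theorem homologyDim_quotOp_zero :
    homologyDim a σ (quotOp (X : _ → MvPolynomial (Fin m) k) η 0) = homologyDim a σ η := by
  have hbot : partialIdeal (X : _ → MvPolynomial (Fin m) k) 0 •
      (⊤ : Submodule (MvPolynomial (Fin m) k) V) = ⊥ := by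
    rw [partialIdeal_zero, Submodule.bot_smul]
  refine homologyDim_congr (Submodule.quotEquivOfEqBot _ hbot) fun v => ?_
  obtain ⟨v, rfl⟩ := Submodule.Quotient.mk_surjective _ v
  rfl

theorem homologyDim_quotOp_top
    (hm : ∀ v, η v ∈ partialIdeal (X : _ → MvPolynomial (Fin m) k) m •
        (⊤ : Submodule (MvPolynomial (Fin m) k) V)) :
    homologyDim a σ (quotOp (X : _ → MvPolynomial (Fin m) k) η m) =
      Module.finrank k (V ⧸ partialIdeal (X : _ → MvPolynomial (Fin m) k) m •
        (⊤ : Submodule (MvPolynomial (Fin m) k) V)) *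
        Module.finrank k N := by
  have hη (v) : quotOp (X : _ → MvPolynomial (Fin m) k) η m v = 0 := by
    obtain ⟨v, rfl⟩ := Submodule.Quotient.mk_surjective _ v
    exact (Submodule.Quotient.mk_eq_zero _).2 (hm v)
  have hX (i : Fin m) (v : V ⧸ partialIdeal (X : _ → MvPolynomial (Fin m) k) m •
      (⊤ : Submodule (MvPolynomial (Fin m) k) V)) :
      (X i : MvPolynomial (Fin m) k) • v = 0 := by
    obtain ⟨v, rfl⟩ := Submodule.Quotient.mk_surjective _ v
    exact (Submodule.Quotient.mk_eq_zero _).2 (smul_mem_partialIdeal_smul_top i.2 v)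
  refine homologyDim_of_koszulOp_eq_zero (AlgebraTensorModule.ext fun v w => ?_)
  rw [koszulOp_tmul, hη]
  simp [hX]

theorem homologyDim_quotOp_succ [Module.Finite k N] [Module.Finite (MvPolynomial (Fin m) k) V]
    (h : IsKoszulFamily c σ a P) (h2 : (2 : k) ≠ 0) (hc : ∀ i, c i ≠ 0)
    (hη : IsSqrt (diagForm c) η)
    (hreg : IsRegularUpTo (X : _ → MvPolynomial (Fin m) k) m V) (i : Fin m) :
    homologyDim a σ (quotOp (X : _ → MvPolynomial (Fin m) k) η (i + 1)) =
      2 * homologyDim a σ (quotOp (X : _ → MvPolynomial (Fin m) k) η i) :=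
  h.homologyDim_of_exact_smul_X h2 hc (quotOp_isSqrt hη i) (quotOp_isSqrt hη (i + 1))
    (factor_quotOp η i) (isSMulRegular_quotient hreg i) (Submodule.factor_surjective _)
    (exact_lsmul_factor i)

theorem homologyDim_quotOp [Module.Finite k N] [Module.Finite (MvPolynomial (Fin m) k) V]
    (h : IsKoszulFamily c σ a P) (h2 : (2 : k) ≠ 0) (hc : ∀ i, c i ≠ 0)
    (hη : IsSqrt (diagForm c) η)
    (hreg : IsRegularUpTo (X : _ → MvPolynomial (Fin m) k) m V) {j : ℕ} (hj : j ≤ m) :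
    homologyDim a σ (quotOp (X : _ → MvPolynomial (Fin m) k) η j) =
      2 ^ j * homologyDim a σ η := by
  induction j with
  | zero => rw [homologyDim_quotOp_zero, pow_zero, one_mul]
  | succ j ih =>
    rw [homologyDim_quotOp_succ h h2 hc hη hreg ⟨j, hj⟩, ih (by lia), pow_succ]
    ring

theorem homologyDim_cliffordOp [Module.Finite k N] [Nontrivial N] (h : IsKoszulFamily c σ a P)
    (h2 : (2 : k) ≠ 0) (hc : ∀ i, c i ≠ 0) (hN : Module.finrank k N ≤ 2 ^ m)
    {T : Type u} [AddCommGroup T] [Module k T] [Module.Finite k T] [Nontrivial T]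
    {A : Fin m → Module.End k T} (hA : IsUniversalRep c A) :
    homologyDim a σ (cliffordOp A) = Module.finrank k T := by
  let e := ((Module.finBasis k T).baseChange (MvPolynomial (Fin m) k)).equivFun
  have hdim := homologyDim_quotOp h h2 hc (cliffordOp_isSqrt hA.isCliffordFamily)
    ((isRegularUpTo_X_pi m).congr e) le_rfl
  rw [homologyDim_quotOp_top (cliffordOp_mem_partialIdeal_smul_top A), finrank_fibre e,
    Fintype.card_fin] at hdim
  have hT : 0 < Module.finrank k T := Module.finrank_pos
  have hN_pos : 0 < Module.finrank k N := Module.finrank_pos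
  obtain ⟨s, hs⟩ := h.finrank_dvd_homologyDim h2 hc hA (cliffordOp A)
  rw [hs, mul_left_comm] at hdim
  have hN_eq : Module.finrank k N = 2 ^ m * s := Nat.eq_of_mul_eq_mul_left hT hdim
  have hs_le : s ≤ 1 := Nat.le_of_mul_le_mul_left (by lia : 2 ^ m * s ≤ 2 ^ m * 1) (by positivity)
  have hs_ne : s ≠ 0 := by
    rintro rfl
    lia
  rw [hs, show s = 1 by lia, mul_one]

end Fibre

/-! ### The Grothendieck group of a diagonal quadric -/

theorem nonempty_equiv_int_prod_zmod {G : Type*} [AddCommGroup G] {n : ℕ} [NeZero n]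
    (ρ : G →+ ℤ) (θ : G →+ ZMod n) {r t : G} (hρr : ρ r ≠ 0) (hθr : θ r = 0) (ht : n • t = 0)
    (hθt : θ t = 1) (hgen : ∀ H : AddSubgroup G, r ∈ H → t ∈ H → ∀ x, x ∈ H) :
    Nonempty (G ≃+ ℤ × ZMod n) := by
  have htz : zmultiplesHom G t n = 0 := by rw [zmultiplesHom_apply, natCast_zsmul, ht]
  let Ψ : ℤ × ZMod n →+ G := (zmultiplesHom G r).coprod (ZMod.lift n ⟨zmultiplesHom G t, htz⟩)
  have hΨ (a b : ℤ) : Ψ (a, b) = a • r + b • t := by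
    simp [Ψ, AddMonoidHom.coprod_apply, ZMod.lift_coe]
  have hρt : ρ t = 0 := by
    have hn := congrArg ρ ht
    rw [map_nsmul, map_zero] at hn
    exact (smul_eq_zero.1 hn).resolve_left (NeZero.ne n)
  have hinj : Function.Injective Ψ := by
    refine (injective_iff_map_eq_zero Ψ).2 ?_
    rintro ⟨a, b⟩ hab
    obtain ⟨b, rfl⟩ := ZMod.intCast_surjective b
    rw [hΨ] at hab
    have ha := congrArg ρ hab
    have hb := congrArg θ hab
    simp only [map_add, map_zsmul, hρt, hθr, hθt, smul_zero, add_zero, zero_add, map_zero,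
      smul_eq_mul, zsmul_one, mul_zero] at ha hb
    rw [hb, (mul_eq_zero.1 ha).resolve_right hρr, Prod.mk_zero_zero]
  have hsurj : Function.Surjective Ψ :=
    hgen Ψ.range ⟨(1, 0), by simpa using hΨ 1 0⟩ ⟨(0, 1), by simpa using hΨ 0 1⟩
  exact ⟨(AddEquiv.ofBijective Ψ ⟨hinj, hsurj⟩).symm⟩

theorem exists_rank_hom {S : Type u} [CommRing S] [IsDomain S] (g : S) :
    ∃ ρ : GGroup (AdjoinSqrt g) →+ ℤ, ∀ (V : Type u) [AddCommGroup V] [Module S V]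
      [Module.Finite S V] (η : V →ₗ[S] V) (h : IsSqrt g η),
      ρ (opClass η h) = Module.finrank S V := by
  refine (exists_hom_of_additive (g := g) ℤ
    (fun V _ _ _ _ _ _ _ => (Module.finrank S V : ℤ)) ?_).imp fun ρ hρ V _ _ _ η h => hρ V η h
  intro V₁ V₂ V₃ _ _ _ _ _ _ _ _ _ _ _ _ _ _ _ _ _ _ _ _ _ a b _ _ hinj hsurj hex
  have hadd := (LinearMap.ker b).finrank_quotient_add_finrank
  rw [(b.quotKerEquivOfSurjective hsurj).finrank_eq, hex.linearMap_ker_eq,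
    ← (LinearEquiv.ofInjective a hinj).finrank_eq] at hadd
  lia

section Diagonal

variable {k : Type u} [Field k] {m : ℕ} {c : Fin m → k} {T : Type u} [AddCommGroup T] [Module k T]
  [Module.Finite k T] [Nontrivial T] {A : Fin m → Module.End k T}

theorem exists_parity_hom {N : Type u} [AddCommGroup N] [Module k N] [Module.Finite k N]
    {a P : Fin m → Module.End k N} {σ : Module.End k N} (hK : IsKoszulFamily c σ a P)
    (h2 : (2 : k) ≠ 0) (hc : ∀ i, c i ≠ 0) (hA : IsUniversalRep c A) :
    ∃ θ : GGroup (AdjoinSqrt (diagForm c)) →+ ZMod 2, ∀ (V : Type u) [AddCommGroup V] [Module k V]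
      [Module (MvPolynomial (Fin m) k) V] [IsScalarTower k (MvPolynomial (Fin m) k) V]
      [Module.Finite (MvPolynomial (Fin m) k) V] (η : V →ₗ[MvPolynomial (Fin m) k] V)
      (h : IsSqrt (diagForm c) η),
      θ (opClass η h) = (homologyDim a σ η / Module.finrank k T : ℕ) := by
  refine exists_hom_of_additive k
    (fun V _ _ _ _ _ η _ => ((homologyDim a σ η / Module.finrank k T : ℕ) : ZMod 2)) ?_
  intro V₁ V₂ V₃ _ _ _ _ _ _ _ _ _ _ _ _ _ _ _ η₁ hη₁ η₂ hη₂ η₃ hη₃ f g hf hg hinj hsurj hex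
  have hT : 0 < Module.finrank k T := Module.finrank_pos
  have hadd := hK.homologyDim_add_homologyDim h2 hc hη₁ hη₂ hη₃ hf hg hinj hsurj hex
  obtain ⟨s, hs⟩ := hK.finrank_dvd_finrank_ker h2 hc hA hf
  obtain ⟨d₁, hd₁⟩ := hK.finrank_dvd_homologyDim h2 hc hA η₁
  obtain ⟨d₂, hd₂⟩ := hK.finrank_dvd_homologyDim h2 hc hA η₂
  obtain ⟨d₃, hd₃⟩ := hK.finrank_dvd_homologyDim h2 hc hA η₃
  rw [hs, hd₁, hd₂, hd₃] at hadd
  have hd : d₁ + d₃ = d₂ + 2 * s := Nat.eq_of_mul_eq_mul_left hT (by linarith)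
  have hmod := congrArg (Nat.cast : ℕ → ZMod 2) hd
  push_cast at hmod
  rw [hd₁, hd₂, hd₃, Nat.mul_div_cancel_left _ hT, Nat.mul_div_cancel_left _ hT,
    Nat.mul_div_cancel_left _ hT, hmod, CharTwo.two_eq_zero (R := ZMod 2), zero_mul, add_zero]

omit [Nontrivial T] in
theorem IsUniversalRep.mem_of_free_mem_of_repClass_mem (hA : IsUniversalRep c A) (h2 : (2 : k) ≠ 0)
    (H : AddSubgroup (GGroup (AdjoinSqrt (diagForm c))))
    (hfree : opClass (freeOp (diagForm c) Unit) (freeOp_isSqrt _) ∈ H)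
    (hrep : repClass hA.isCliffordFamily ∈ H) (x) : x ∈ H :=
  SwanQuadric.mem_of_free_mem_of_repClass_mem h2 H hfree (fun W _ _ _ B hB => by
    obtain ⟨a, ha⟩ := hA.exists_repClass_eq_nsmul hB
    exact ha ▸ H.nsmul_mem hrep a) x

theorem exists_parity_hom_diagForm (h2 : (2 : k) ≠ 0) (hc : ∀ i, c i ≠ 0)
    (hA : IsUniversalRep c A) :
    ∃ θ : GGroup (AdjoinSqrt (diagForm c)) →+ ZMod 2,
      θ (opClass (freeOp (diagForm c) Unit) (freeOp_isSqrt _)) = 0 ∧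
        θ (repClass hA.isCliffordFamily) = 1 := by
  have hK := isKoszulFamily_diagClifford c
  obtain ⟨θ, hθ⟩ := exists_parity_hom hK h2 hc hA
  refine ⟨θ, ?_, ?_⟩
  · rw [← opClass_doubleOp_self, hθ, hK.homologyDim_doubleOp, Nat.zero_div, Nat.cast_zero]
  · have hle := (DiagClifford.finiteDimensional_and_finrank_le c).2
    rw [Fintype.card_fin] at hle
    have : Nontrivial (DiagClifford c) := hA.isCliffordFamily.lift.toRingHom.domain_nontrivial
    rw [repClass, hθ, homologyDim_cliffordOp hK h2 hc hle hA, Nat.div_self Module.finrank_pos,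
      Nat.cast_one]

theorem nonempty_gGroup_diagForm_equiv [Nonempty (Fin m)] [IsSimpleRing (DiagClifford c)]
    (h2 : (2 : k) ≠ 0) (hc : ∀ i, c i ≠ 0) :
    Nonempty (GGroup (AdjoinSqrt (diagForm c)) ≃+ ℤ × ZMod 2) := by
  obtain ⟨T, _, _, _, _, A, hA⟩ := exists_isUniversalRep c
  obtain ⟨ρ, hρ⟩ := exists_rank_hom (diagForm c)
  obtain ⟨θ, hθr, hθt⟩ := exists_parity_hom_diagForm h2 hc hA
  set r := opClass (freeOp (diagForm c) Unit) (freeOp_isSqrt _)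
  set t := repClass hA.isCliffordFamily
  obtain ⟨e, he⟩ := hA.even_finrank h2 (hc (Classical.arbitrary (Fin m)))
  have hρr : ρ r = 2 := by
    rw [hρ, Module.finrank_fintype_fun_eq_card]
    rfl
  have h2t : 2 • (t - e • r) = 0 := by
    rw [nsmul_sub, hA.two_nsmul_repClass, he, ← two_mul, mul_smul, sub_self]
  refine nonempty_equiv_int_prod_zmod ρ θ (r := r) (t := t - e • r) (by simp [hρr]) hθr h2t
    (by simp [hθr, hθt]) fun H hr ht => hA.mem_of_free_mem_of_repClass_mem h2 H hr ?_
  simpa using H.add_mem ht (H.nsmul_mem hr e)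

end Diagonal

/-! ### Reduction to a diagonal form -/

section EvenClifford

open CliffordAlgebra

variable {R V V' : Type*} [CommRing R] [AddCommGroup V] [Module R V] [AddCommGroup V'] [Module R V']
  {Q : QuadraticForm R V} {Q' : QuadraticForm R V'}

/-- A similarity `Q = a * (Q' ∘ φ)` induces `v ⊗ w ↦ a • φ v * φ w` from the generators of the even
Clifford algebra of `Q` to the even Clifford algebra of `Q'`. -/
noncomputable def evenHomOfSimilarity (φ : V →ₗ[R] V') (a : R) (h : ∀ v, Q v = a * Q' (φ v)) :
    EvenHom Q (even Q') where
  bilin := a • (((even.ι Q').bilin.comp φ).compl₂ φ)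
  contract v := by
    simp only [LinearMap.smul_apply, LinearMap.compl₂_apply, LinearMap.comp_apply,
      (even.ι Q').contract, h, map_mul, Algebra.smul_def]
  contract_mid v₁ v₂ v₃ := by
    simp only [LinearMap.smul_apply, LinearMap.compl₂_apply, LinearMap.comp_apply,
      smul_mul_smul_comm, (even.ι Q').contract_mid, h, smul_smul]
    rw [mul_right_comm, mul_assoc]

/-- Similar quadratic forms have isomorphic even Clifford algebras. -/
noncomputable def evenEquivOfSimilarity (φ : V ≃ₗ[R] V') (a : Rˣ) (h : ∀ v, Q v = a * Q' (φ v)) :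
    even Q ≃ₐ[R] even Q' :=
  have h' (v : V') : Q' v = (a⁻¹ : Rˣ) * Q (φ.symm v) := by
    rw [h, φ.apply_symm_apply, Units.inv_mul_cancel_left]
  AlgEquiv.ofAlgHom (even.lift Q (evenHomOfSimilarity φ.toLinearMap a h))
    (even.lift Q' (evenHomOfSimilarity φ.symm.toLinearMap (a⁻¹ : Rˣ) h'))
    (even.algHom_ext _ <| EvenHom.ext <| LinearMap.ext₂ fun x y => by
      simp [evenHomOfSimilarity, smul_smul])
    (even.algHom_ext _ <| EvenHom.ext <| LinearMap.ext₂ fun x y => by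
      simp [evenHomOfSimilarity, smul_smul])

end EvenClifford

section LinearSubstitution

variable {R : Type*} [CommRing R] {σ τ υ : Type*} [Fintype τ] [Fintype υ]

/-- The linear substitution of variables given by a matrix. -/
noncomputable def linSubst (A : Matrix σ τ R) : MvPolynomial σ R →ₐ[R] MvPolynomial τ R :=
  bind₁ A.toMvPolynomial

theorem linSubst_comp (A : Matrix σ τ R) (B : Matrix τ υ R) :
    (linSubst B).comp (linSubst A) = linSubst (A * B) :=
  MvPolynomial.algHom_ext fun i => by
    simp only [linSubst, AlgHom.comp_apply, bind₁_X_right, Matrix.toMvPolynomial_mul]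

theorem linSubst_one [DecidableEq τ] : linSubst (1 : Matrix τ τ R) = AlgHom.id R _ := by
  rw [linSubst, Matrix.toMvPolynomial_one, bind₁_X_left]

theorem linSubst_isHomogeneous (A : Matrix σ τ R) {p : MvPolynomial σ R} {d : ℕ}
    (hp : p.IsHomogeneous d) : (linSubst A p).IsHomogeneous d := by
  rw [← one_mul d]
  exact hp.aeval _ A.toMvPolynomial_isHomogeneous

theorem eval_linSubst (A : Matrix σ τ R) (v : τ → R) (p : MvPolynomial σ R) :
    eval v (linSubst A p) = eval (A.mulVec v) p := by
  rw [linSubst, eval, eval₂Hom_bind₁]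
  exact congrArg (eval · p) (funext fun i => A.toMvPolynomial_eval_eq_apply i v)

/-- The change of variables given by a linear automorphism `E`, sending `f` to `f ∘ E⁻¹`. -/
noncomputable def linSubstEquiv [DecidableEq τ] (E : (τ → R) ≃ₗ[R] (τ → R)) :
    MvPolynomial τ R ≃ₐ[R] MvPolynomial τ R :=
  AlgEquiv.ofAlgHom (linSubst (LinearMap.toMatrix' E.symm.toLinearMap))
    (linSubst (LinearMap.toMatrix' E.toLinearMap))
    (by rw [linSubst_comp, ← LinearMap.toMatrix'_comp, LinearEquiv.comp_symm,
      LinearMap.toMatrix'_id, linSubst_one])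
    (by rw [linSubst_comp, ← LinearMap.toMatrix'_comp, LinearEquiv.symm_comp,
      LinearMap.toMatrix'_id, linSubst_one])

theorem linSubstEquiv_eq_of_eval_eq {k : Type*} [Field k] [DecidableEq τ] {f g : MvPolynomial τ k}
    (hf : f.IsHomogeneous 2) (hg : g.IsHomogeneous 2) (E : (τ → k) ≃ₗ[k] (τ → k))
    (h : ∀ v, eval v f = eval (E v) g) : linSubstEquiv E f = g := by
  have hcard : ((2 : ℕ) : Cardinal) ≤ Cardinal.mk k := Cardinal.two_le_iff.2 ⟨0, 1, zero_ne_one⟩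
  refine (linSubst_isHomogeneous _ hf).funext_of_le_card hg (fun v => ?_) hcard
  rw [eval_linSubst, LinearMap.toMatrix'_mulVec, h]
  exact congrArg (eval · g) (E.apply_symm_apply v)

/-- Isometric quadratic polynomials define isomorphic affine quadrics. -/
noncomputable def quotientEquivOfEvalEq {k : Type*} [Field k] [DecidableEq τ]
    {f g : MvPolynomial τ k} (hf : f.IsHomogeneous 2) (hg : g.IsHomogeneous 2)
    (E : (τ → k) ≃ₗ[k] (τ → k)) (h : ∀ v, eval v f = eval (E v) g) :
    (MvPolynomial τ k ⧸ Ideal.span {f}) ≃+* (MvPolynomial τ k ⧸ Ideal.span {g}) :=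
  Ideal.quotientEquiv _ _ (linSubstEquiv E).toRingEquiv <| by
    rw [Ideal.map_span, Set.image_singleton]
    exact congrArg (Ideal.span {·}) (linSubstEquiv_eq_of_eval_eq hf hg E h).symm

end LinearSubstitution

/-- The two presentations of the ring obtained by adjoining a square root of `g` agree. -/
noncomputable def adjoinRootEquivAdjoinSqrt {S : Type u} [CommRing S] (g : S) :
    AdjoinRoot (Polynomial.X ^ 2 - Polynomial.C g) ≃ₐ[S] AdjoinSqrt g :=
  AlgEquiv.ofAlgHom
    (AdjoinRoot.liftAlgHom _ (Algebra.ofId S _) QuadraticAlgebra.omega (by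
      rw [Polynomial.eval₂_sub, Polynomial.eval₂_X_pow, Polynomial.eval₂_C, sq,
        QuadraticAlgebra.omega_mul_omega_eq_add, zero_smul, add_zero, Algebra.smul_def, mul_one]
      exact sub_self _))
    (QuadraticAlgebra.lift ⟨AdjoinRoot.root _, by
      have hroot := AdjoinRoot.eval₂_root (Polynomial.X ^ 2 - Polynomial.C g)
      rw [Polynomial.eval₂_sub, Polynomial.eval₂_X_pow, Polynomial.eval₂_C, sub_eq_zero] at hroot
      rw [← sq, hroot, zero_smul, add_zero, Algebra.smul_def, mul_one]
      rfl⟩)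
    (QuadraticAlgebra.algHom_ext (by simp))
    (AdjoinRoot.algHom_ext (by simp))

section Diagonal

variable {k : Type u} [Field k] {m : ℕ} (w : Fin (m + 1) → k)

/-- The coefficients of the form `g` in the decomposition `w₀ (x₀² - g)` of the diagonal form with
coefficients `w`. -/
def reducedCoeff (i : Fin m) : k := -w i.succ / w 0

variable {w}

theorem reducedCoeff_ne_zero (hw : ∀ i, w i ≠ 0) (i : Fin m) : reducedCoeff w i ≠ 0 :=
  div_ne_zero (neg_ne_zero.2 (hw _)) (hw _)

theorem mul_reducedCoeff (h0 : w 0 ≠ 0) (i : Fin m) : w 0 * reducedCoeff w i = -w i.succ :=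
  mul_div_cancel₀ _ h0

theorem finSuccEquiv_diagForm (h0 : w 0 ≠ 0) :
    finSuccEquiv k m (diagForm w) = Polynomial.C (C (w 0)) *
      (Polynomial.X ^ 2 - Polynomial.C (diagForm (reducedCoeff w))) := by
  have hg : C (w 0) * diagForm (reducedCoeff w) = -∑ i : Fin m, C (w i.succ) * X i ^ 2 := by
    simp only [diagForm, Finset.mul_sum, ← mul_assoc, ← C_mul, mul_reducedCoeff h0, C_neg,
      neg_mul, Finset.sum_neg_distrib]
  have hC (a : k) : finSuccEquiv k m (C a) = Polynomial.C (C a) :=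
    ((finSuccEquiv k m).symm_apply_eq.1 (DFunLike.congr_fun (finSuccEquiv_comp_C_eq_C m) a)).symm
  rw [mul_sub, ← Polynomial.C_mul, hg, Polynomial.C_neg, sub_neg_eq_add, diagForm,
    Fin.sum_univ_succ]
  simp only [map_add, map_sum, map_mul, map_pow, hC, finSuccEquiv_X_zero, finSuccEquiv_X_succ]

/-- A diagonal affine quadric is obtained from a polynomial ring by adjoining a square root. -/
noncomputable def quotientDiagFormEquiv (h0 : w 0 ≠ 0) :
    (MvPolynomial (Fin (m + 1)) k ⧸ Ideal.span {diagForm w}) ≃+*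
      AdjoinSqrt (diagForm (reducedCoeff w)) :=
  have hspan : Ideal.span {Polynomial.X ^ 2 - Polynomial.C (diagForm (reducedCoeff w))} =
      (Ideal.span {diagForm w}).map (finSuccEquiv k m).toRingEquiv := by
    have hunit : IsUnit (Polynomial.C (C (w 0)) : Polynomial (MvPolynomial (Fin m) k)) :=
      (h0.isUnit.map C).map Polynomial.C
    rw [Ideal.map_span, Set.image_singleton, ← Ideal.span_singleton_mul_left_unit hunit]
    exact congrArg (Ideal.span {·}) (finSuccEquiv_diagForm h0).symm
  (Ideal.quotientEquiv _ _ (finSuccEquiv k m).toRingEquiv hspan).trans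
    (adjoinRootEquivAdjoinSqrt _).toRingEquiv

theorem isSimpleRing_diagClifford_reducedCoeff (h0 : w 0 ≠ 0)
    [IsSimpleRing (CliffordAlgebra.even (QuadraticMap.weightedSumSquares k w))] :
    IsSimpleRing (DiagClifford (reducedCoeff w)) := by
  let φ : (Fin (m + 1) → k) ≃ₗ[k] (Fin m → k) × k :=
    (Fin.consLinearEquiv k fun _ => k).symm.trans (LinearEquiv.prodComm k _ _)
  have hφ (v) : φ v = (fun i => v i.succ, v 0) := rfl
  have hsim (v) : QuadraticMap.weightedSumSquares k w v = ((-Units.mk0 _ h0 : kˣ) : k) *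
      CliffordAlgebra.EquivEven.Q' (QuadraticMap.weightedSumSquares k (reducedCoeff w)) (φ v) := by
    rw [hφ, CliffordAlgebra.EquivEven.Q'_apply, weightedSumSquares_eq_sum,
      weightedSumSquares_eq_sum, Fin.sum_univ_succ, Units.val_neg, Units.val_mk0, mul_sub,
      Finset.mul_sum]
    simp only [← mul_assoc, neg_mul, mul_reducedCoeff h0, neg_neg]
    ring
  exact .of_ringEquiv ((evenEquivOfSimilarity φ _ hsim).trans
    (CliffordAlgebra.equivEven _).symm).toRingEquiv inferInstance

end Diagonal

theorem exists_isometryEquiv_weightedSumSquares {k V : Type*} [Field k] [AddCommGroup V]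
    [Module k V] [FiniteDimensional k V] (h2 : (2 : k) ≠ 0) {Q : QuadraticForm k V}
    (hQ : Q.polarBilin.Nondegenerate) {n : ℕ} (hn : Module.finrank k V = n) :
    ∃ w : Fin n → k, (∀ i, w i ≠ 0) ∧
      Nonempty (Q.IsometryEquiv (QuadraticMap.weightedSumSquares k w)) := by
  subst hn
  have : Invertible (2 : k) := invertibleOfNonzero h2
  have hsep := (QuadraticMap.nondegenerate_associated_iff.2
    (QuadraticMap.nondegenerate_polar_iff.1 hQ)).1
  obtain ⟨w, ⟨e⟩⟩ := QuadraticForm.equivalent_weightedSumSquares_units_of_nondegenerate' Q hsep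
  exact ⟨fun i => w i, fun i => (w i).ne_zero, ⟨e⟩⟩

end SwanQuadric

/-- **Swan's theorem** (Corollary 2.1).  Let `k` be a field of characteristic not `2`, `n > 1`,
and let `f ∈ k[x₁,…,xₙ]` be a homogeneous polynomial of degree `2` whose associated quadratic
form `Q` (so `f(v) = Q v` for all `v ∈ kⁿ`) is non-degenerate.  If the even part `C₀(Q)` of the
Clifford algebra of `Q` is a simple ring, then the Grothendieck group of finitely generated
modules over `R = k[x₁,…,xₙ]/(f)` is isomorphic to `ℤ ⊕ ℤ/2ℤ`. -/
theorem swan_grothendieck_group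
    (k : Type u) [Field k] (hchar : ringChar k ≠ 2)
    (n : ℕ) (hn : 1 < n)
    (f : MvPolynomial (Fin n) k) (hf : f.IsHomogeneous 2)
    (Q : QuadraticForm k (Fin n → k))
    (hfQ : ∀ v : Fin n → k, MvPolynomial.eval v f = Q v)
    (hnd : Q.polarBilin.Nondegenerate)
    (hsimple : IsSimpleRing (CliffordAlgebra.even Q)) :
    Nonempty (GGroup (MvPolynomial (Fin n) k ⧸ Ideal.span {f}) ≃+ ℤ × ZMod 2) := by
  open SwanQuadric in
  have h2 : (2 : k) ≠ 0 := Ring.two_ne_zero hchar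
  obtain ⟨m, rfl⟩ : ∃ m, n = m + 1 + 1 := ⟨n - 2, by lia⟩
  obtain ⟨w, hw, ⟨E⟩⟩ :=
    exists_isometryEquiv_weightedSumSquares h2 hnd (Module.finrank_fin_fun k)
  have hfE (v) : eval v f = eval (E.toLinearEquiv v) (diagForm w) := by
    rw [hfQ, ← E.map_app, weightedSumSquares_eq_sum]
    simp [diagForm]
  let e := (quotientEquivOfEvalEq hf (diagForm_isHomogeneous w) E.toLinearEquiv hfE).trans
    (quotientDiagFormEquiv (hw 0))
  have hsim (v) : Q v = ((1 : kˣ) : k) * QuadraticMap.weightedSumSquares k w (E.toLinearEquiv v) :=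
    (E.map_app v).symm.trans (one_mul _).symm
  have : IsSimpleRing (CliffordAlgebra.even (QuadraticMap.weightedSumSquares k w)) :=
    .of_ringEquiv (evenEquivOfSimilarity E.toLinearEquiv 1 hsim).toRingEquiv hsimple
  have := isSimpleRing_diagClifford_reducedCoeff (hw 0)
  obtain ⟨e'⟩ := nonempty_gGroup_diagForm_equiv h2 (reducedCoeff_ne_zero hw)
  exact ⟨(GGroup.congr e).trans e'⟩
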